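/- arXiv:1009.2823 — 9 statements merged into one kernel-verified Lean document; each statement's English description precedes it below -/
import Mathlib

section
/- Let k be a field and A ∈ ℤ^{d×n} a matrix with columns a_1,…,a_n ∈ ℤ^d. Let π_A : k[x_1,…,x_n] → k[t_1^{±1},…,t_d^{±1}] be the k-algebra homomorphism into the Laurent polynomial ring (the group algebra k[ℤ^d]) sending x_i ↦ t^{a_i} = t_1^{a_{1i}}⋯t_d^{a_{di}}. Then the kernel of π_A equals the ideal I_A = ⟨x^u − x^v : u, v ∈ ℕ^n and Au = Av⟩. -/
/-!
The monomial `x^u` is sent to `t^{Au}` (`piA_monomial`), so every generator of `I_A` lies in the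
kernel. For the converse, choose for each `α ∈ ℤ^d` in the image of `ℕ^n` some `u` with `Au = α`;
extending `t^α ↦ [x^u]` linearly gives a `k`-linear map `s : k[ℤ^d] → k[x] / I_A`. Since monomials
with the same image under `A` agree modulo `I_A`, the composite `s ∘ π_A` is the quotient map (both
are linear and agree on monomials), hence `π_A f = 0` forces `f ∈ I_A`.
-/

open MvPolynomial

theorem piA_monomial (k : Type*) [Field k] (d n : ℕ) (A : Matrix (Fin d) (Fin n) ℤ)
    (u : Fin n →₀ ℕ) (c : k) :
    (MvPolynomial.aeval
        (fun i : Fin n => AddMonoidAlgebra.single (fun j => A j i) (1 : k)) :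
        MvPolynomial (Fin n) k →ₐ[k] AddMonoidAlgebra k (Fin d → ℤ)) (monomial u c) =
      AddMonoidAlgebra.single (A.mulVec (fun i => (u i : ℤ))) c := by
  have hprod : ∀ s : Finset (Fin n),
      ∏ i ∈ s, (AddMonoidAlgebra.single (fun j => A j i) (1 : k)) ^ u i =
        AddMonoidAlgebra.single (∑ i ∈ s, u i • (fun j => A j i)) (1 : k) := by
    intro s
    induction s using Finset.induction_on with
    | empty => simp [AddMonoidAlgebra.one_def]
    | insert a s ha ih =>
      rw [Finset.prod_insert ha, Finset.sum_insert ha, ih, AddMonoidAlgebra.single_pow,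
        AddMonoidAlgebra.single_mul_single, one_pow, one_mul]
  have hvec : ∑ i, u i • (fun j => A j i) = A.mulVec (fun i => (u i : ℤ)) := by
    ext j
    simp [Matrix.mulVec, dotProduct, Finset.sum_apply, mul_comm]
  rw [aeval_monomial, Finsupp.prod_fintype _ _ (fun i => pow_zero _), hprod, hvec,
    ← Algebra.smul_def, AddMonoidAlgebra.smul_single, smul_eq_mul, mul_one]

/-- The kernel of the monomial map `π_A : k[x_1,…,x_n] → k[ℤ^d]`,
`x_i ↦ t^{a_i}`, equals the toric ideal
`I_A = ⟨x^u − x^v : u, v ∈ ℕ^n, Au = Av⟩`. -/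
theorem ker_piA_eq_toric_ideal
    (k : Type*) [Field k] (d n : ℕ) (A : Matrix (Fin d) (Fin n) ℤ) :
    RingHom.ker (MvPolynomial.aeval
        (fun i : Fin n => AddMonoidAlgebra.single (fun j => A j i) (1 : k)) :
        MvPolynomial (Fin n) k →ₐ[k] AddMonoidAlgebra k (Fin d → ℤ)) =
    Ideal.span {f : MvPolynomial (Fin n) k | ∃ u v : Fin n →₀ ℕ,
      A.mulVec (fun i => (u i : ℤ)) = A.mulVec (fun i => (v i : ℤ)) ∧
      f = monomial u 1 - monomial v 1} := by
  apply le_antisymm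
  · set I := Ideal.span {f : MvPolynomial (Fin n) k | ∃ u v : Fin n →₀ ℕ,
      A.mulVec (fun i => (u i : ℤ)) = A.mulVec (fun i => (v i : ℤ)) ∧
      f = monomial u 1 - monomial v 1}
    let w : (Fin n →₀ ℕ) → (Fin d → ℤ) := fun u => A.mulVec (fun i => (u i : ℤ))
    -- `Function.invFun w` picks a preimage of each point of the range of `w`; its values
    -- elsewhere are irrelevant.
    let s : AddMonoidAlgebra k (Fin d → ℤ) →ₗ[k] (MvPolynomial (Fin n) k ⧸ I) :=
      (Finsupp.linearCombination k
        (fun α => Ideal.Quotient.mkₐ k I (monomial (Function.invFun w α) 1))) ∘ₗ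
        (AddMonoidAlgebra.coeffLinearEquiv k).toLinearMap
    have hs : s ∘ₗ (MvPolynomial.aeval
        (fun i : Fin n => AddMonoidAlgebra.single (fun j => A j i) (1 : k)) :
        MvPolynomial (Fin n) k →ₐ[k] AddMonoidAlgebra k (Fin d → ℤ)).toLinearMap =
        (Ideal.Quotient.mkₐ k I).toLinearMap := by
      refine MvPolynomial.linearMap_ext fun u => LinearMap.ext_ring ?_
      have hu : w (Function.invFun w (w u)) = w u := Function.invFun_eq ⟨u, rfl⟩
      have hmem : (Ideal.Quotient.mk I) (monomial (Function.invFun w (w u)) 1) =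
          (Ideal.Quotient.mk I) (monomial u (1 : k)) :=
        Ideal.Quotient.eq.mpr (Ideal.subset_span ⟨_, _, hu, rfl⟩)
      simp only [LinearMap.comp_apply, AlgHom.toLinearMap_apply, piA_monomial]
      simpa [s] using hmem
    intro f hf
    have h := LinearMap.congr_fun hs f
    rw [LinearMap.comp_apply, AlgHom.toLinearMap_apply, (RingHom.mem_ker).mp hf, map_zero] at h
    exact Ideal.Quotient.eq_zero_iff_mem.mp h.symm
  · rw [Ideal.span_le]
    rintro _ ⟨u, v, huv, rfl⟩
    rw [SetLike.mem_coe, RingHom.mem_ker, map_sub, piA_monomial, piA_monomial, huv, sub_self]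
end

section
/- Let k be a field and A ∈ ℤ^{d×n}. The toric ideal I_A = ⟨x^u − x^v : u, v ∈ ℕ^n and Au = Av⟩ is a prime ideal of the polynomial ring k[x_1,…,x_n]. -/
/-!
The linear map `u ↦ A u` from exponent vectors to `ℤ^d` induces a ring homomorphism from
`k[x_1,…,x_n]` to the group algebra `k[ℤ^d]` (Laurent polynomials). The target is a domain because
`ℤ^d` has unique sums, so the kernel is prime, and the point is that this kernel is exactly the
toric ideal.

Each binomial generator is clearly in the kernel. Conversely, choosing a preimage in `ℕ^n` of every
point in the image of `u ↦ A u` gives an additive map `L` back from `k[ℤ^d]`. Writing `φ` for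
the homomorphism above, `p - L (φ p)` lies in the toric ideal for every `p`, since this holds for
scalar multiples of monomials. If `φ p = 0` this says that `p` itself lies in the toric ideal.
-/

open MvPolynomial

/-- The additive map `u ↦ A u` from exponent vectors to `ℤ^d`. -/
noncomputable def toricDegree {d n : ℕ} (A : Matrix (Fin d) (Fin n) ℤ) :
    (Fin n →₀ ℕ) →+ (Fin d → ℤ) where
  toFun u := A.mulVec (fun i => (u i : ℤ))
  map_zero' := by
    ext j
    simp [Matrix.mulVec, dotProduct]
  map_add' u v := by
    rw [← Matrix.mulVec_add]
    congr 1

/-- The monomial map `x^u ↦ t^{A u}` into the Laurent polynomial ring `k[ℤ^d]`. -/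
noncomputable def toricHom (k : Type*) [Field k] {d n : ℕ} (A : Matrix (Fin d) (Fin n) ℤ) :
    MvPolynomial (Fin n) k →+* AddMonoidAlgebra k (Fin d → ℤ) :=
  AddMonoidAlgebra.mapDomainRingHom k (toricDegree A)

lemma toricHom_monomial (k : Type*) [Field k] {d n : ℕ} (A : Matrix (Fin d) (Fin n) ℤ)
    (u : Fin n →₀ ℕ) (c : k) :
    toricHom k A (monomial u c) = AddMonoidAlgebra.single (toricDegree A u) c :=
  AddMonoidAlgebra.mapDomain_single

/-- The additive map `k[ℤ^d] → k[x_1,…,x_n]` sending `c t^z` to `c x^w` for a chosen `w` with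
`A w = z`.
When `z` is not of the form `A w`, some fixed `w` is used. -/
noncomputable def toricLift (k : Type*) [Field k] {d n : ℕ} (A : Matrix (Fin d) (Fin n) ℤ) :
    AddMonoidAlgebra k (Fin d → ℤ) →+ MvPolynomial (Fin n) k :=
  { toFun := AddMonoidAlgebra.mapDomain (Function.invFun (toricDegree A))
    map_zero' := AddMonoidAlgebra.mapDomain_zero _
    map_add' := AddMonoidAlgebra.mapDomain_add _ }

lemma toricLift_single (k : Type*) [Field k] {d n : ℕ} (A : Matrix (Fin d) (Fin n) ℤ)
    (z : Fin d → ℤ) (c : k) :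
    toricLift k A (AddMonoidAlgebra.single z c) =
      monomial (Function.invFun (toricDegree A) z) c :=
  AddMonoidAlgebra.mapDomain_single

/-- The toric ideal `I_A = ⟨x^u − x^v : u, v ∈ ℕ^n, Au = Av⟩`
is a prime ideal of `k[x_1,…,x_n]`. -/
theorem toric_ideal_isPrime
    (k : Type*) [Field k] (d n : ℕ) (A : Matrix (Fin d) (Fin n) ℤ) :
    (Ideal.span {f : MvPolynomial (Fin n) k | ∃ u v : Fin n →₀ ℕ,
      A.mulVec (fun i => (u i : ℤ)) = A.mulVec (fun i => (v i : ℤ)) ∧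
      f = monomial u 1 - monomial v 1}).IsPrime := by
  set I := Ideal.span {f : MvPolynomial (Fin n) k | ∃ u v : Fin n →₀ ℕ,
      A.mulVec (fun i => (u i : ℤ)) = A.mulVec (fun i => (v i : ℤ)) ∧
      f = monomial u 1 - monomial v 1} with hI
  have key : ∀ p, p - toricLift k A (toricHom k A p) ∈ I := by
    intro p
    rw [p.as_sum, map_sum, map_sum, ← Finset.sum_sub_distrib]
    refine Ideal.sum_mem _ fun u _ => ?_
    rw [toricHom_monomial, toricLift_single]
    set w := Function.invFun (toricDegree A) (toricDegree A u)
    have hw : toricDegree A w = toricDegree A u := Function.invFun_eq ⟨u, rfl⟩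
    have hmem : (monomial u 1 - monomial w 1 : MvPolynomial (Fin n) k) ∈ I :=
      Ideal.subset_span ⟨u, w, hw.symm, rfl⟩
    simpa [mul_sub, C_mul_monomial] using I.mul_mem_left (C (p.coeff u)) hmem
  have hker : I = RingHom.ker (toricHom k A) := by
    apply le_antisymm
    · rw [hI, Ideal.span_le]
      rintro _ ⟨u, v, huv, rfl⟩
      have h : toricDegree A u = toricDegree A v := huv
      simp [RingHom.mem_ker, toricHom_monomial, h]
    · intro p hp
      have h := key p
      rwa [(RingHom.mem_ker).1 hp, map_zero, sub_zero] at h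
  rw [hker]
  exact RingHom.ker_isPrime _
end

section
/- Let k be an algebraically closed field. A binomial ideal I ⊆ k[x_1,…,x_n] is prime if and only if there exist a subset J ⊆ {1,…,n}, a saturated sublattice L ⊆ ℤ^J, and a character ρ : L → kˣ such that I = I_{ρ,J}, where I_{ρ,J} = I_ρ + m_J with I_ρ = ⟨x^u − ρ(u−v)·x^v : u, v ∈ ℕ^J and u − v ∈ L⟩ and m_J = ⟨x_i : i ∉ J⟩. -/
/-!
A lattice ideal `I_{ρ,J}` with `L` saturated is prime because it is the kernel of a map to a
Laurent polynomial ring. Saturation makes `ℤⁿ/L` free of finite rank `r`, so `ρ` extends to a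
character `σ` of `ℤⁿ`, and `x_i ↦ σ(e_i)·[e_i mod L]` for `i ∈ J`, `x_i ↦ 0` for `i ∉ J`, defines a
map `k[x] → k[ℤ^r]` into a domain. Its kernel is no larger than `I_{ρ,J}`, because sending a class
of `ℤⁿ/L` to the normalised monomial of any representative in `ℕ^J` gives a linear map
`k[ℤ^r] → k[x]/I_{ρ,J}` through which the quotient map factors (`latticeIdeal_isPrime`).

Conversely, let `I` be a prime binomial ideal, let `K` be the fraction field of `k[x]/I`, and let
`J` be the set of `i` with `x_i ∉ I`. The images of the `x_i`, `i ∈ J`, are nonzero in `K`, so they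
define a homomorphism `τ : ℤⁿ → Kˣ` (trivial on the coordinates outside `J`). Take for `L` the
vectors of `ℤ^J` on which `τ` has values in `kˣ`, and for `ρ` the restriction of `τ`. A root in `K`
of an element of `k` lies in `k`, as `k` is algebraically closed, so `L` is saturated. A binomial
`x^u - c x^v` with `u, v ∈ ℕ^J` lies in `I` exactly when `τ(u - v) = c`, which matches the
generators of `I` with those of `I_{ρ,J}` (`exists_eq_latticeIdeal`).
-/

open MvPolynomial

/-- An ideal of `k[x_1,…,x_n]` is a binomial ideal if it is generated by binomials
`x^u − λx^v` (with `λ = 0` allowed, so monomials are permitted as generators). -/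
def IsBinomialIdeal (k : Type*) [CommRing k] {n : ℕ}
    (I : Ideal (MvPolynomial (Fin n) k)) : Prop :=
  ∃ S : Set (MvPolynomial (Fin n) k), I = Ideal.span S ∧
    ∀ f ∈ S, ∃ (u v : Fin n →₀ ℕ) (c : k), f = monomial u 1 - monomial v c

section LatticeIdeals

variable {k : Type*} [Field k] {n : ℕ}

/-- An exponent vector in `ℕⁿ`, viewed in `ℤⁿ`. -/
def intVec (u : Fin n →₀ ℕ) : Fin n → ℤ := fun i => (u i : ℤ)

/-- The ideal `I_{ρ,J} = I_ρ + m_J`. Only the values of `ρ` on `L` matter. -/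
noncomputable def latticeIdeal (J : Set (Fin n)) (L : Submodule ℤ (Fin n → ℤ)) (ρ : (Fin n → ℤ) → kˣ) :
    Ideal (MvPolynomial (Fin n) k) :=
  Ideal.span
    ({f | ∃ u v : Fin n →₀ ℕ,
        (∀ i ∉ J, u i = 0) ∧ (∀ i ∉ J, v i = 0) ∧ intVec u - intVec v ∈ L ∧
        f = monomial u 1 - monomial v ((ρ (intVec u - intVec v) : kˣ) : k)}
      ∪ {f | ∃ i, i ∉ J ∧ f = X i})

theorem monomial_eq_smul (u : Fin n →₀ ℕ) (c : k) :
    (monomial u c : MvPolynomial (Fin n) k) = c • monomial u 1 := by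
  rw [smul_monomial, smul_eq_mul, mul_one]

theorem monomial_mem_latticeIdeal {J : Set (Fin n)} (L : Submodule ℤ (Fin n → ℤ))
    (ρ : (Fin n → ℤ) → kˣ) {u : Fin n →₀ ℕ} (hu : ¬ ∀ i ∉ J, u i = 0) (c : k) :
    (monomial u c : MvPolynomial (Fin n) k) ∈ latticeIdeal J L ρ := by
  push Not at hu
  obtain ⟨i, hi, hui⟩ := hu
  have hX : (X i : MvPolynomial (Fin n) k) ∈ latticeIdeal J L ρ :=
    Ideal.subset_span (Or.inr ⟨i, hi, rfl⟩)
  refine Ideal.mem_of_dvd _ ?_ hX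
  rw [X_dvd_monomial]
  exact Or.inr hui

/-- An algebra map that kills the variables outside `J` and agrees on the others with a
multiplicative map `θ` on `ℤⁿ` sends `x^u` to `θ u` for `u ∈ ℕ^J`. -/
theorem map_monomial_of_supported {A : Type*} [CommRing A] [Algebra k A]
    (φ : MvPolynomial (Fin n) k →ₐ[k] A) (θ : Multiplicative (Fin n → ℤ) →* A)
    {J : Set (Fin n)} (hJ : ∀ i ∈ J, φ (X i) = θ (Multiplicative.ofAdd (Pi.single i 1)))
    {u : Fin n →₀ ℕ} (hu : ∀ i ∉ J, u i = 0) :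
    φ (monomial u 1) = θ (Multiplicative.ofAdd (intVec u)) := by
  have h1 : intVec u = ∑ i, u i • (Pi.single i 1 : Fin n → ℤ) := by
    rw [← Finset.univ_sum_single (intVec u)]
    refine Finset.sum_congr rfl fun i _ => ?_
    ext j
    by_cases h : j = i
    · subst h; simp [intVec]
    · simp [h]
  rw [h1, ofAdd_sum, map_prod, monomial_eq, Finsupp.prod_fintype _ _ (by simp)]
  simp only [map_one, one_mul, map_prod, map_pow, ofAdd_nsmul]
  refine Finset.prod_congr rfl fun i _ => ?_
  by_cases hi : i ∈ J
  · rw [hJ i hi]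
  · rw [hu i hi, pow_zero, pow_zero]

theorem map_monomial_of_not_supported {A : Type*} [CommRing A] [Algebra k A]
    (φ : MvPolynomial (Fin n) k →ₐ[k] A) {J : Set (Fin n)} (hJ : ∀ i ∉ J, φ (X i) = 0)
    {u : Fin n →₀ ℕ} (hu : ¬ ∀ i ∉ J, u i = 0) : φ (monomial u 1) = 0 := by
  push Not at hu
  obtain ⟨i, hi, hui⟩ := hu
  have h : (X i : MvPolynomial (Fin n) k) ∣ monomial u 1 := by
    rw [X_dvd_monomial]; exact Or.inr hui
  have h2 := map_dvd φ h
  rwa [hJ i hi, zero_dvd_iff] at h2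

/-- A saturated sublattice of `ℤⁿ` is the kernel of a map to some `ℤ^r`; it is therefore a
direct summand, so every character on it extends to `ℤⁿ`. -/
theorem exists_quotient_and_extension (L : Submodule ℤ (Fin n → ℤ))
    (hL : ∀ (m : ℤ) (w : Fin n → ℤ), m ≠ 0 → m • w ∈ L → w ∈ L)
    (ρ : (Fin n → ℤ) → kˣ) (hρ : ∀ a ∈ L, ∀ b ∈ L, ρ (a + b) = ρ a * ρ b) :
    ∃ (r : ℕ) (π : (Fin n → ℤ) →ₗ[ℤ] (Fin r → ℤ)) (σ : Multiplicative (Fin n → ℤ) →* kˣ),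
      (∀ w, π w = 0 ↔ w ∈ L) ∧ ∀ w ∈ L, σ (Multiplicative.ofAdd w) = ρ w := by
  have htf : Module.IsTorsionFree ℤ ((Fin n → ℤ) ⧸ L) := by
    refine ⟨fun m hm => ?_⟩
    rw [isSMulRegular_iff_right_eq_zero_of_smul]
    intro x hx
    obtain ⟨w, rfl⟩ := L.mkQ_surjective x
    rw [← map_smul, Submodule.mkQ_apply, Submodule.Quotient.mk_eq_zero] at hx
    rw [Submodule.mkQ_apply, Submodule.Quotient.mk_eq_zero]
    exact hL m w hm.ne_zero hx
  have hfree : Module.Free ℤ ((Fin n → ℤ) ⧸ L) := Module.free_of_finite_type_torsion_free'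
  obtain ⟨s, hs⟩ := Module.projective_lifting_property L.mkQ LinearMap.id L.mkQ_surjective
  have hs' : ∀ q, L.mkQ (s q) = q := fun q => by
    simpa using LinearMap.congr_fun hs q
  have hmem : ∀ w, w - s (L.mkQ w) ∈ L := fun w => by
    rw [← Submodule.Quotient.mk_eq_zero, ← Submodule.mkQ_apply, map_sub, hs', sub_self]
  let b := Module.finBasis ℤ ((Fin n → ℤ) ⧸ L)
  have hρ0 : ρ 0 = 1 := by
    have := hρ 0 L.zero_mem 0 L.zero_mem
    rw [add_zero] at this
    exact left_eq_mul.mp this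
  refine ⟨_, b.equivFun.toLinearMap ∘ₗ L.mkQ,
    { toFun := fun w => ρ (w.toAdd - s (L.mkQ w.toAdd))
      map_one' := by simp [hρ0]
      map_mul' := fun a c => by
        rw [← hρ _ (hmem _) _ (hmem _)]
        congr 1
        rw [toAdd_mul, map_add, map_add]
        abel }, fun w => ?_, fun w hw => ?_⟩
  · rw [LinearMap.comp_apply, LinearEquiv.coe_coe, LinearEquiv.map_eq_zero_iff,
      Submodule.mkQ_apply, Submodule.Quotient.mk_eq_zero]
  · have h0 : L.mkQ w = 0 := by
      rw [Submodule.mkQ_apply, Submodule.Quotient.mk_eq_zero]; exact hw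
    simp only [MonoidHom.coe_mk, OneHom.coe_mk, toAdd_ofAdd, h0, map_zero, sub_zero]

theorem latticeIdeal_isPrime (J : Set (Fin n)) (L : Submodule ℤ (Fin n → ℤ))
    (ρ : (Fin n → ℤ) → kˣ)
    (hL : ∀ (m : ℤ) (w : Fin n → ℤ), m ≠ 0 → m • w ∈ L → w ∈ L)
    (hρ : ∀ a ∈ L, ∀ b ∈ L, ρ (a + b) = ρ a * ρ b) : (latticeIdeal J L ρ).IsPrime := by
  classical
  obtain ⟨r, π, σ, hπ, hσ⟩ := exists_quotient_and_extension L hL ρ hρ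
  let A := AddMonoidAlgebra k (Fin r → ℤ)
  let θ : Multiplicative (Fin n → ℤ) →* A :=
    { toFun := fun w => AddMonoidAlgebra.single (π w.toAdd) ((σ w : kˣ) : k)
      map_one' := by
        rw [toAdd_one, map_zero, map_one, Units.val_one]; rfl
      map_mul' := fun a c => by
        rw [AddMonoidAlgebra.single_mul_single, toAdd_mul, map_add, map_mul, Units.val_mul] }
  have hθ : ∀ w, θ (Multiplicative.ofAdd w) =
      AddMonoidAlgebra.single (π w) ((σ (Multiplicative.ofAdd w) : kˣ) : k) := fun w => rfl
  let φ : MvPolynomial (Fin n) k →ₐ[k] A :=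
    aeval fun i => if i ∈ J then θ (Multiplicative.ofAdd (Pi.single i 1)) else 0
  have hφJ : ∀ i ∈ J, φ (X i) = θ (Multiplicative.ofAdd (Pi.single i 1)) := fun i hi => by
    simp [φ, hi]
  have hφ0 : ∀ i ∉ J, φ (X i) = 0 := fun i hi => by simp [φ, hi]
  have hker : latticeIdeal J L ρ = RingHom.ker φ := by
    apply le_antisymm
    · refine Ideal.span_le.mpr ?_
      rintro f (⟨u, v, hu, hv, huv, rfl⟩ | ⟨i, hi, rfl⟩)
      · have hπe : π (intVec u) = π (intVec v) := by
          rw [← sub_eq_zero, ← map_sub, hπ]; exact huv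
        have hσe : σ (Multiplicative.ofAdd (intVec u)) =
            ρ (intVec u - intVec v) * σ (Multiplicative.ofAdd (intVec v)) := by
          rw [← hσ _ huv, ← map_mul, ← ofAdd_add, sub_add_cancel]
        rw [SetLike.mem_coe, RingHom.mem_ker, map_sub, monomial_eq_smul v, map_smul,
          map_monomial_of_supported φ θ hφJ hu, map_monomial_of_supported φ θ hφJ hv, hθ, hθ,
          AddMonoidAlgebra.smul_single, hπe, hσe, smul_eq_mul, Units.val_mul, sub_self]
      · exact hφ0 i hi
    · -- the linear map back: a class with a representative `u ∈ ℕ^J` goes to `σ(u)⁻¹ x^u`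
      let R : (Fin r → ℤ) → (Fin n →₀ ℕ) → Prop :=
        fun g u => (∀ i ∉ J, u i = 0) ∧ π (intVec u) = g
      let back : (Fin r → ℤ) → MvPolynomial (Fin n) k ⧸ latticeIdeal J L ρ := fun g =>
        if h : ∃ u, R g u then
          (((σ (Multiplicative.ofAdd (intVec h.choose)))⁻¹ : kˣ) : k) •
            Ideal.Quotient.mkₐ k _ (monomial h.choose 1)
        else 0
      let ψ : A →ₗ[k] MvPolynomial (Fin n) k ⧸ latticeIdeal J L ρ :=
        Finsupp.linearCombination k back ∘ₗ (AddMonoidAlgebra.coeffLinearEquiv k).toLinearMap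
      have hψ : ∀ g c, ψ (AddMonoidAlgebra.single g c) = c • back g := fun g c => by
        change Finsupp.linearCombination k back (AddMonoidAlgebra.single g c).coeff = _
        rw [AddMonoidAlgebra.coeff_single, Finsupp.linearCombination_single]
      have hcomp : ψ ∘ₗ φ.toLinearMap =
          (Ideal.Quotient.mkₐ k (latticeIdeal J L ρ)).toLinearMap := by
        apply MvPolynomial.basisMonomials (Fin n) k |>.ext
        intro u
        rw [coe_basisMonomials, LinearMap.comp_apply, AlgHom.toLinearMap_apply,
          AlgHom.toLinearMap_apply]
        by_cases hu : ∀ i ∉ J, u i = 0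
        · rw [map_monomial_of_supported φ θ hφJ hu, hθ, hψ]
          have h : ∃ v, R (π (intVec u)) v := ⟨u, hu, rfl⟩
          have hb : back (π (intVec u)) = _ := dif_pos h
          obtain ⟨hv, hvu⟩ := h.choose_spec
          rw [hb]
          generalize h.choose = v at hv hvu
          have huv : intVec u - intVec v ∈ L := by
            rw [← hπ, map_sub, hvu, sub_self]
          have hgen : (monomial u 1 - monomial v ((ρ (intVec u - intVec v) : kˣ) : k) :
              MvPolynomial (Fin n) k) ∈ latticeIdeal J L ρ :=
            Ideal.subset_span (Or.inl ⟨u, v, hu, hv, huv, rfl⟩)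
          rw [smul_smul, ← map_smul, ← Units.val_mul, ← map_inv, ← map_mul, ← ofAdd_neg,
            ← ofAdd_add, ← sub_eq_add_neg, hσ _ huv, ← monomial_eq_smul]
          exact (Ideal.Quotient.eq.mpr hgen).symm
        · rw [map_monomial_of_not_supported φ hφ0 hu, map_zero]
          exact (Ideal.Quotient.eq_zero_iff_mem.mpr
            (monomial_mem_latticeIdeal L ρ hu 1)).symm
      intro f hf
      have := LinearMap.congr_fun hcomp f
      rw [LinearMap.comp_apply, AlgHom.toLinearMap_apply, RingHom.mem_ker.mp hf, map_zero] at this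
      exact Ideal.Quotient.eq_zero_iff_mem.mp this.symm
  have hdom : IsDomain A := NoZeroDivisors.to_isDomain A
  rw [hker]
  exact RingHom.ker_isPrime _

/-- In an extension field `K` of an algebraically closed field `k`, a unit whose `m`-th power
lies in `k`, for some `m ≠ 0`, lies in `k`. -/
theorem mem_range_of_zpow_mem_range [IsAlgClosed k] {K : Type*} [Field K] [Algebra k K] (t : Kˣ)
    (m : ℤ) (hm : m ≠ 0) (h : t ^ m ∈ (Units.map (algebraMap k K : k →* K)).range) :
    t ∈ (Units.map (algebraMap k K : k →* K)).range := by
  have h' : t ^ m.natAbs ∈ (Units.map (algebraMap k K : k →* K)).range := by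
    rcases Int.natAbs_eq m with he | he
    · rwa [he, zpow_natCast] at h
    · rw [he, zpow_neg, inv_mem_iff, zpow_natCast] at h
      exact h
  obtain ⟨c, hc⟩ := h'
  have hm' : m.natAbs ≠ 0 := Int.natAbs_ne_zero.mpr hm
  have hroot : ((Polynomial.X ^ m.natAbs - Polynomial.C (c : k)).map
      (algebraMap k K)).IsRoot (t : K) := by
    have := congrArg Units.val hc
    simp only [Units.coe_map, MonoidHom.coe_coe, Units.val_pow_eq_pow_val] at this
    simp [this]
  obtain ⟨d, hd⟩ := (IsAlgClosed.splits _).mem_range_of_isRoot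
    (Polynomial.X_pow_sub_C_ne_zero (Nat.pos_of_ne_zero hm') _) hroot
  have hd0 : d ≠ 0 := by
    rintro rfl
    rw [map_zero] at hd
    exact t.ne_zero hd.symm
  exact ⟨Units.mk0 d hd0, Units.ext hd⟩

/-- A binomial ideal that is the kernel of a map to a field has the form `I_{ρ,J}`; every prime
ideal is such a kernel. -/
theorem exists_eq_latticeIdeal [IsAlgClosed k] {K : Type*} [Field K] [Algebra k K]
    (φ : MvPolynomial (Fin n) k →ₐ[k] K) {I : Ideal (MvPolynomial (Fin n) k)}
    (hker : ∀ f, f ∈ I ↔ φ f = 0) (hI : IsBinomialIdeal k I) :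
    ∃ (J : Set (Fin n)) (L : Submodule ℤ (Fin n → ℤ)) (ρ : (Fin n → ℤ) → kˣ),
      (∀ w ∈ L, ∀ i ∉ J, w i = 0) ∧
      (∀ (m : ℤ) (w : Fin n → ℤ), m ≠ 0 → (∀ i ∉ J, w i = 0) → m • w ∈ L → w ∈ L) ∧
      ρ 0 = 1 ∧ (∀ a ∈ L, ∀ b ∈ L, ρ (a + b) = ρ a * ρ b) ∧ I = latticeIdeal J L ρ := by
  classical
  let J : Set (Fin n) := {i | φ (X i) ≠ 0}
  let t : Fin n → Kˣ := fun i => if h : φ (X i) ≠ 0 then Units.mk0 _ h else 1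
  let τ : Multiplicative (Fin n → ℤ) →* Kˣ :=
    { toFun := fun w => ∏ i, t i ^ (w.toAdd i)
      map_one' := by simp
      map_mul' := fun a b => by simp [zpow_add, Finset.prod_mul_distrib] }
  let ι : kˣ →* Kˣ := Units.map (algebraMap k K : k →* K)
  have hι : Function.Injective ι := Units.map_injective (algebraMap k K).injective
  let θ : Multiplicative (Fin n → ℤ) →* K := (Units.coeHom K).comp τ
  have hθ : ∀ w, θ w = (τ w : K) := fun w => rfl
  have hφJ : ∀ i ∈ J, φ (X i) = θ (Multiplicative.ofAdd (Pi.single i 1)) := fun i hi => by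
    have h1 : τ (Multiplicative.ofAdd (Pi.single i 1)) = t i := by
      change ∏ j, t j ^ ((Pi.single i 1 : Fin n → ℤ) j) = t i
      rw [Finset.prod_eq_single i]
      · simp
      · intro j _ hj; simp [hj]
      · simp
    have hi' : φ (X i) ≠ 0 := hi
    rw [hθ, h1]
    simp only [t, dif_pos hi', Units.val_mk0]
  have hφ0 : ∀ i ∉ J, φ (X i) = 0 := fun i hi => not_not.mp hi
  let L : Submodule ℤ (Fin n → ℤ) := AddSubgroup.toIntSubmodule
    { carrier := {w | (∀ i ∉ J, w i = 0) ∧ τ (Multiplicative.ofAdd w) ∈ ι.range}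
      zero_mem' := ⟨fun _ _ => rfl, by rw [ofAdd_zero, map_one]; exact one_mem _⟩
      add_mem' := fun {a b} ha hb => ⟨fun i hi => by
          rw [Pi.add_apply, ha.1 i hi, hb.1 i hi, add_zero], by
          rw [ofAdd_add, map_mul]; exact mul_mem ha.2 hb.2⟩
      neg_mem' := fun {a} ha => ⟨fun i hi => by
          rw [Pi.neg_apply, ha.1 i hi, neg_zero], by
          rw [ofAdd_neg, map_inv]; exact inv_mem ha.2⟩ }
  have hLmem : ∀ w, w ∈ L ↔ (∀ i ∉ J, w i = 0) ∧ τ (Multiplicative.ofAdd w) ∈ ι.range :=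
    fun w => Iff.rfl
  let ρ : (Fin n → ℤ) → kˣ := fun w =>
    if h : τ (Multiplicative.ofAdd w) ∈ ι.range then h.choose else 1
  have hρ : ∀ w ∈ L, ι (ρ w) = τ (Multiplicative.ofAdd w) := fun w hw => by
    have h := ((hLmem w).mp hw).2
    simp only [ρ, dif_pos h]
    exact h.choose_spec
  refine ⟨J, L, ρ, fun w hw => ((hLmem w).mp hw).1, fun m w hm hw hmw => ?_, ?_,
    fun a ha b hb => ?_, ?_⟩
  · refine (hLmem w).mpr ⟨hw, ?_⟩
    have h := ((hLmem _).mp hmw).2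
    rw [ofAdd_zsmul, map_zpow] at h
    exact mem_range_of_zpow_mem_range _ m hm h
  · apply hι
    rw [hρ 0 L.zero_mem, ofAdd_zero, map_one, map_one]
  · apply hι
    rw [map_mul, hρ _ ha, hρ _ hb, hρ _ (L.add_mem ha hb), ofAdd_add, map_mul]
  · -- multiplicativity of `τ`, written in `K`
    have hτ : ∀ u v : Fin n →₀ ℕ, (τ (Multiplicative.ofAdd (intVec u)) : K) =
        (τ (Multiplicative.ofAdd (intVec u - intVec v)) : K) *
          (τ (Multiplicative.ofAdd (intVec v)) : K) := fun u v => by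
      rw [← Units.val_mul, ← map_mul, ← ofAdd_add, sub_add_cancel]
    apply le_antisymm
    · obtain ⟨S, rfl, hS⟩ := hI
      refine Ideal.span_le.mpr fun f hf => ?_
      have hf0 : φ f = 0 := (hker f).mp (Ideal.subset_span hf)
      obtain ⟨u, v, c, rfl⟩ := hS f hf
      rw [map_sub, monomial_eq_smul v, map_smul, sub_eq_zero] at hf0
      by_cases hu : ∀ i ∉ J, u i = 0
      · rw [map_monomial_of_supported φ θ hφJ hu, hθ] at hf0
        have hv : ∀ i ∉ J, v i = 0 := by
          by_contra hv
          rw [map_monomial_of_not_supported φ hφ0 hv, smul_zero] at hf0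
          exact Units.ne_zero _ hf0
        rw [map_monomial_of_supported φ θ hφJ hv, hθ] at hf0
        have hc : c ≠ 0 := by
          rintro rfl
          rw [zero_smul] at hf0
          exact Units.ne_zero _ hf0
        rw [hτ u v, Algebra.smul_def] at hf0
        have hcτ : ι (Units.mk0 c hc) = τ (Multiplicative.ofAdd (intVec u - intVec v)) :=
          Units.ext (mul_right_cancel₀ (Units.ne_zero _) hf0).symm
        have huv : intVec u - intVec v ∈ L := (hLmem _).mpr
          ⟨fun i hi => by simp [intVec, hu i hi, hv i hi], _, hcτ⟩
        have hcρ : ρ (intVec u - intVec v) = Units.mk0 c hc := by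
          apply hι
          rw [hρ _ huv, hcτ]
        exact Ideal.subset_span (Or.inl ⟨u, v, hu, hv, huv, by rw [hcρ, Units.val_mk0]⟩)
      · rw [map_monomial_of_not_supported φ hφ0 hu] at hf0
        refine Ideal.sub_mem _ (monomial_mem_latticeIdeal L ρ hu 1) ?_
        by_cases hv : ∀ i ∉ J, v i = 0
        · rw [map_monomial_of_supported φ θ hφJ hv, hθ] at hf0
          have hc : c = 0 := (smul_eq_zero.mp hf0.symm).resolve_right (Units.ne_zero _)
          rw [hc, monomial_zero]
          exact Ideal.zero_mem _
        · exact monomial_mem_latticeIdeal L ρ hv c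
    · refine Ideal.span_le.mpr ?_
      rintro f (⟨u, v, hu, hv, huv, rfl⟩ | ⟨i, hi, rfl⟩)
      · have h := congrArg Units.val (hρ _ huv)
        rw [SetLike.mem_coe, hker, map_sub, monomial_eq_smul v, map_smul,
          map_monomial_of_supported φ θ hφJ hu, map_monomial_of_supported φ θ hφJ hv, hθ, hθ,
          hτ u v, ← h, Algebra.smul_def]
        exact sub_self _
      · exact (hker _).mpr (hφ0 i hi)

end LatticeIdeals

/-- over an algebraically closed field, a binomial ideal `I` is prime
iff `I = I_{ρ,J} = I_ρ + m_J` for some `J ⊆ {1,…,n}`, some saturated sublattice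
`L ⊆ ℤ^J` and some character `ρ : L → kˣ`. -/
theorem binomial_ideal_isPrime_iff
    (k : Type*) [Field k] [IsAlgClosed k] (n : ℕ)
    (I : Ideal (MvPolynomial (Fin n) k)) (hI : IsBinomialIdeal k I) :
    I.IsPrime ↔
      ∃ (J : Set (Fin n)) (L : Submodule ℤ (Fin n → ℤ)) (ρ : (Fin n → ℤ) → kˣ),
        -- L ⊆ ℤ^J
        (∀ w ∈ L, ∀ i ∉ J, w i = 0) ∧
        -- L saturated in ℤ^J
        (∀ (m : ℤ) (w : Fin n → ℤ), m ≠ 0 → (∀ i ∉ J, w i = 0) →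
          m • w ∈ L → w ∈ L) ∧
        -- ρ is a character on L
        (ρ 0 = 1) ∧ (∀ a ∈ L, ∀ b ∈ L, ρ (a + b) = ρ a * ρ b) ∧
        -- I = I_ρ + m_J
        I = Ideal.span
          ({f | ∃ u v : Fin n →₀ ℕ,
              (∀ i ∉ J, u i = 0) ∧ (∀ i ∉ J, v i = 0) ∧
              ((fun i => (u i : ℤ)) - fun i => (v i : ℤ)) ∈ L ∧
              f = monomial u 1 -
                monomial v ((ρ ((fun i => (u i : ℤ)) - fun i => (v i : ℤ)) : kˣ) : k)}
            ∪ {f | ∃ i, i ∉ J ∧ f = X i}) := by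
  constructor
  · intro hp
    let K := FractionRing (MvPolynomial (Fin n) k ⧸ I)
    let φ : MvPolynomial (Fin n) k →ₐ[k] K :=
      (IsScalarTower.toAlgHom k (MvPolynomial (Fin n) k ⧸ I) K).comp (Ideal.Quotient.mkₐ k I)
    refine exists_eq_latticeIdeal φ (fun f => ?_) hI
    change _ ↔ algebraMap (MvPolynomial (Fin n) k ⧸ I) K (Ideal.Quotient.mk I f) = 0
    rw [FaithfulSMul.algebraMap_eq_zero_iff, Ideal.Quotient.eq_zero_iff_mem]
  · rintro ⟨J, L, ρ, hLJ, hsat, -, hρ, rfl⟩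
    -- saturation in `ℤ^J` implies saturation in `ℤⁿ`, as `ℤ^J` is itself saturated
    refine latticeIdeal_isPrime J L ρ (fun m w hm hw => hsat m w hm (fun i hi => ?_) hw) hρ
    have h := hLJ _ hw i hi
    rw [Pi.smul_apply, smul_eq_mul] at h
    exact (mul_eq_zero.mp h).resolve_left hm
end

section
/- Let k be a field, Q an additive commutative monoid, and I ⊆ k[Q] a binomial ideal in the monoid algebra. Define the relation ∼ on Q by u ∼ v if and only if t^u − λ·t^v ∈ I for some λ ∈ kˣ. Then ∼ is a congruence on Q (an equivalence relation with u ∼ v ⟹ u + w ∼ v + w for all w ∈ Q), and for every congruence class C ⊆ Q of ∼, the image in k[Q]/I of the k-linear span of the monomials {t^u : u ∈ C} has k-dimension 0 if some (equivalently, every) u ∈ C satisfies t^u ∈ I, and k-dimension exactly 1 otherwise. -/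
open AddMonoidAlgebra

/-!
Modulo `I`, the condition `t^u − c t^v ∈ I` says that the class of `t^u` is `c` times the class of
`t^v` (`single_sub_single_mem_iff`). Hence `u ∼ v` means that the classes of `t^u` and `t^v` in
`k[Q]/I` are unit multiples of each other, which is visibly an equivalence relation, and
multiplying by `t^w` shows that it is a congruence. All monomials of the class of `u` therefore map
into the line spanned by the class of `t^u` (`map_span_class_eq`), and that line has dimension
`0` or `1` according to whether `t^u` lies in `I`.
-/

theorem single_sub_single_mem_iff {k Q : Type*} [Field k] [AddCommMonoid Q]
    (I : Ideal (AddMonoidAlgebra k Q)) (u v : Q) (c : k) :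
    AddMonoidAlgebra.single u (1 : k) - AddMonoidAlgebra.single v c ∈ I ↔
      Ideal.Quotient.mkₐ k I (AddMonoidAlgebra.single u 1) =
        c • Ideal.Quotient.mkₐ k I (AddMonoidAlgebra.single v 1) := by
  rw [← map_smul, AddMonoidAlgebra.smul_single, smul_eq_mul, mul_one]
  exact (Ideal.Quotient.mk_eq_mk_iff_sub_mem _ _).symm

theorem map_span_class_eq {k Q : Type*} [Field k] [AddCommMonoid Q]
    (I : Ideal (AddMonoidAlgebra k Q)) (u : Q) :
    Submodule.map (Ideal.Quotient.mkₐ k I).toLinearMap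
        (Submodule.span k {f : AddMonoidAlgebra k Q | ∃ v : Q,
          (∃ c : kˣ, AddMonoidAlgebra.single v (1 : k) -
            AddMonoidAlgebra.single u (c : k) ∈ I) ∧
          f = AddMonoidAlgebra.single v (1 : k)}) =
      Submodule.span k {Ideal.Quotient.mkₐ k I (AddMonoidAlgebra.single u 1)} := by
  rw [Submodule.map_span]
  apply le_antisymm
  · rw [Submodule.span_le]
    rintro _ ⟨_, ⟨v, ⟨c, hc⟩, rfl⟩, rfl⟩
    exact Submodule.mem_span_singleton.2 ⟨c, ((single_sub_single_mem_iff I v u c).1 hc).symm⟩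
  · rw [Submodule.span_singleton_le_iff_mem]
    exact Submodule.subset_span ⟨_, ⟨u, ⟨1, by simp⟩, rfl⟩, rfl⟩

/-- a binomial ideal `I ⊆ k[Q]` induces a congruence `∼` on `Q`
(`u ∼ v` iff `t^u − λ t^v ∈ I` for some unit `λ`), and for each congruence class
`C`, the image in `k[Q]/I` of the span of the monomials `{t^u : u ∈ C}` has
dimension `0` if the monomials of `C` lie in `I`, and dimension `1` otherwise. -/
theorem binomial_ideal_congruence_and_hilbert
    (k : Type*) [Field k] (Q : Type*) [AddCommMonoid Q]
    (I : Ideal (AddMonoidAlgebra k Q))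
    (hI : ∃ S : Set (AddMonoidAlgebra k Q), I = Ideal.span S ∧
      ∀ f ∈ S, ∃ (a b : Q) (c : k),
        f = AddMonoidAlgebra.single a 1 - AddMonoidAlgebra.single b c) :
    let r : Q → Q → Prop := fun u v => ∃ c : kˣ,
      AddMonoidAlgebra.single u (1 : k) - AddMonoidAlgebra.single v (c : k) ∈ I
    -- ∼ is an additively closed equivalence relation, i.e. a congruence:
    Equivalence r ∧
    (∀ u v w : Q, r u v → r (u + w) (v + w)) ∧
    -- the Hilbert function of k[Q]/I takes only the values 0 and 1:
    (∀ u : Q,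
      (AddMonoidAlgebra.single u (1 : k) ∈ I →
        Module.rank k (Submodule.map (Ideal.Quotient.mkₐ k I).toLinearMap
          (Submodule.span k {f : AddMonoidAlgebra k Q |
            ∃ v : Q, r v u ∧ f = AddMonoidAlgebra.single v (1 : k)})) = 0) ∧
      (AddMonoidAlgebra.single u (1 : k) ∉ I →
        Module.rank k (Submodule.map (Ideal.Quotient.mkₐ k I).toLinearMap
          (Submodule.span k {f : AddMonoidAlgebra k Q |
            ∃ v : Q, r v u ∧ f = AddMonoidAlgebra.single v (1 : k)})) = 1)) := by
  intro r
  have hr (u v : Q) : r u v ↔ ∃ c : kˣ,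
      Ideal.Quotient.mkₐ k I (AddMonoidAlgebra.single u 1) =
        (c : k) • Ideal.Quotient.mkₐ k I (AddMonoidAlgebra.single v 1) :=
    exists_congr fun c => single_sub_single_mem_iff I u v c
  refine ⟨⟨fun u => ?_, fun {u v} h => ?_, fun {u v w} h₁ h₂ => ?_⟩, fun u v w h => ?_,
    fun u => ⟨fun hu => ?_, fun hu => ?_⟩⟩
  · exact (hr u u).2 ⟨1, by simp⟩
  · obtain ⟨c, hc⟩ := (hr u v).1 h
    exact (hr v u).2 ⟨c⁻¹, by rw [hc, smul_smul, Units.inv_mul, one_smul]⟩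
  · obtain ⟨c, hc⟩ := (hr u v).1 h₁
    obtain ⟨d, hd⟩ := (hr v w).1 h₂
    exact (hr u w).2 ⟨c * d, by rw [hc, hd, smul_smul, Units.val_mul]⟩
  · obtain ⟨c, hc⟩ := h
    refine ⟨c, ?_⟩
    have h := I.mul_mem_right (AddMonoidAlgebra.single w (1 : k)) hc
    rwa [sub_mul, AddMonoidAlgebra.single_mul_single, AddMonoidAlgebra.single_mul_single,
      mul_one, mul_one] at h
  · have h0 : Ideal.Quotient.mkₐ k I (AddMonoidAlgebra.single u 1) = 0 :=
      Ideal.Quotient.eq_zero_iff_mem.2 hu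
    rw [map_span_class_eq I u, h0, Submodule.span_zero_singleton]
    exact rank_bot k _
  · have h0 : Ideal.Quotient.mkₐ k I (AddMonoidAlgebra.single u 1) ≠ 0 :=
      fun h => hu (Ideal.Quotient.eq_zero_iff_mem.1 h)
    rw [map_span_class_eq I u]
    exact Module.rank_eq_one_iff_finrank_eq_one.2 (finrank_span_singleton h0)
end

section
/- Let k be an algebraically closed field. Every associated prime of a binomial ideal I ⊆ k[x_1,…,x_n] is itself a binomial ideal (i.e., is generated by binomials x^u − λx^v with λ ∈ k, monomials allowed). -/
/-!
Let `P` be the annihilator of the class of `h` modulo the binomial ideal `I`, let `N` be the monoid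
of exponents of monomials outside `P` (`expo P`), and let `k[N]` (`sub k N`) be the span of these
monomials. The monomials in `P` are themselves binomials, so it suffices to generate `P ∩ k[N]` by
binomials. Replacing `I` by its saturation at the monomials of `k[N]` (`sat`) does not change the
annihilator of `h`.

Since `I` is binomial, it is homogeneous for every partition of the exponents that is compatible
with its binomials (`res_mem`). Splitting `h` along the orbits of `N` therefore writes `P ∩ k[N]` as
a finite intersection of annihilators, and primality leaves a single orbit
(`exists_single_orbit`). Hence `h` may be taken to be `q x^w` with `q ∈ k[N]` (`exists_mul_eq`), so
that `P ∩ k[N]` consists of the `g` with `g q ∈ J`, where `J` is the colon of the saturation by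
`x^w`.

Let `L` (`lat P`) be the lattice of differences `u - v` for binomials `x^u - c x^v ∈ P` with
`u, v ∈ N`, `c ≠ 0`. As `k` is algebraically closed, `L` is saturated in `ℤ^n` (`Bin.of_nsmul`), so
`ℤ^n / L` is finitely generated and torsion-free and has the unique sums property. The ideal `J` is
homogeneous for the grading by `ℤ^n / L` (`res_deg_mem`). Comparing the component of `g q` in a
uniquely attained degree shows that `P ∩ k[N]` is homogeneous too (`component_mem`). A homogeneous
polynomial is, modulo the binomials of `P`, a multiple of one monomial outside `P`
(`exists_monomial_of_homog`); if it lies in `P` that multiple is zero, so it is in the ideal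
generated by the binomials of `P`.
-/

open MvPolynomial

namespace BinomialPrimes

variable {k : Type*} [Field k] {n : ℕ}

/-! ### Projections onto sets of monomials and the binomial congruence -/

open Classical in
/-- The `k`-linear projection of `k[x_1,…,x_n]` onto the span of the monomials with exponent
in `U`. -/
noncomputable def res (U : Set (Fin n →₀ ℕ)) :
    MvPolynomial (Fin n) k →ₗ[k] MvPolynomial (Fin n) k :=
  (basisMonomials (Fin n) k).constr k (fun u => if u ∈ U then monomial u 1 else 0)

open Classical in
lemma res_monomial (U : Set (Fin n →₀ ℕ)) (u : Fin n →₀ ℕ) (c : k) :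
    res U (monomial u c) = if u ∈ U then monomial u c else 0 := by
  have h1 : monomial u c = c • (basisMonomials (Fin n) k u) := by
    simp [smul_monomial]
  rw [h1, map_smul, res, Module.Basis.constr_basis]
  split_ifs <;> simp

open Classical in
lemma coeff_res (U : Set (Fin n →₀ ℕ)) (f : MvPolynomial (Fin n) k) (u : Fin n →₀ ℕ) :
    coeff u (res U f) = if u ∈ U then coeff u f else 0 := by
  induction f using MvPolynomial.induction_on' with
  | monomial a b =>
    rw [res_monomial]
    by_cases h0 : a = u
    · subst h0; split_ifs <;> simp
    · split_ifs <;> simp [h0, coeff_monomial]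
  | add p q hp hq =>
    rw [map_add, coeff_add, coeff_add, hp, hq]
    split_ifs <;> simp

lemma mem_support_res {U : Set (Fin n →₀ ℕ)} {f : MvPolynomial (Fin n) k} {u : Fin n →₀ ℕ} :
    u ∈ (res U f).support ↔ u ∈ U ∧ u ∈ f.support := by
  classical
  rw [mem_support_iff, coeff_res, mem_support_iff]
  split_ifs with h <;> simp [h]

lemma res_eq_self {U : Set (Fin n →₀ ℕ)} {f : MvPolynomial (Fin n) k}
    (h : ∀ u ∈ f.support, u ∈ U) : res U f = f := by
  classical
  ext u
  rw [coeff_res]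
  split_ifs with hu
  · rfl
  · by_contra h'
    exact hu (h u (mem_support_iff.2 (Ne.symm h')))

/-- `res` commutes with multiplication when membership of `a + y` in `V` is
governed by membership of `y` in `U`. -/
lemma res_mul {U V : Set (Fin n →₀ ℕ)} {g f : MvPolynomial (Fin n) k}
    (h : ∀ a ∈ g.support, ∀ y ∈ f.support, (a + y ∈ V ↔ y ∈ U)) :
    res V (g * f) = g * res U f := by
  classical
  conv_lhs => rw [g.as_sum, f.as_sum]
  conv_rhs => rw [g.as_sum, f.as_sum]
  rw [map_sum, Finset.sum_mul_sum, Finset.sum_mul_sum, map_sum]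
  refine Finset.sum_congr rfl fun a ha => ?_
  rw [map_sum]
  refine Finset.sum_congr rfl fun y hy => ?_
  rw [monomial_mul, res_monomial, res_monomial]
  by_cases hU : y ∈ U
  · rw [if_pos hU, if_pos ((h a ha y hy).2 hU), monomial_mul]
  · rw [if_neg hU, if_neg (fun hV => hU ((h a ha y hy).1 hV)), mul_zero]

lemma mem_support_mon {a u : Fin n →₀ ℕ} {c : k} (h : u ∈ (monomial a c).support) : u = a := by
  classical
  have := support_monomial_subset h
  simpa using this

/-- Two exponents are related if the ideal `I` contains a binomial `x^u - c x^v` with `c ≠ 0`. -/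
def Bin (I : Ideal (MvPolynomial (Fin n) k)) (u v : Fin n →₀ ℕ) : Prop :=
  ∃ c : k, c ≠ 0 ∧ monomial u 1 - monomial v c ∈ I

section Bin

variable {I : Ideal (MvPolynomial (Fin n) k)} {u v w : Fin n →₀ ℕ}

lemma Bin.refl (I : Ideal (MvPolynomial (Fin n) k)) (u : Fin n →₀ ℕ) : Bin I u u :=
  ⟨1, one_ne_zero, by simp⟩

lemma Bin.symm (h : Bin I u v) : Bin I v u := by
  obtain ⟨c, hc, h⟩ := h
  refine ⟨c⁻¹, inv_ne_zero hc, ?_⟩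
  have := I.mul_mem_left (C (-c⁻¹)) h
  rw [mul_sub, C_mul_monomial, C_mul_monomial] at this
  have e : -c⁻¹ * c = -1 := by field_simp
  rw [e] at this
  convert this using 1
  simp only [mul_one, map_neg]
  ring

lemma Bin.trans (h : Bin I u v) (h' : Bin I v w) : Bin I u w := by
  obtain ⟨c, hc, h⟩ := h
  obtain ⟨d, hd, h'⟩ := h'
  refine ⟨c * d, mul_ne_zero hc hd, ?_⟩
  have := I.add_mem h (I.mul_mem_left (C c) h')
  rw [mul_sub, C_mul_monomial, C_mul_monomial] at this
  convert this using 1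
  simp

lemma Bin.add_right (h : Bin I u v) (a : Fin n →₀ ℕ) : Bin I (u + a) (v + a) := by
  obtain ⟨c, hc, h⟩ := h
  refine ⟨c, hc, ?_⟩
  have := I.mul_mem_left (monomial a 1) h
  rw [mul_sub, monomial_mul, monomial_mul] at this
  simpa [add_comm] using this

lemma Bin.add {u' v' : Fin n →₀ ℕ} (h : Bin I u v) (h' : Bin I u' v') :
    Bin I (u + u') (v + v') := by
  refine (h.add_right u').trans ?_
  rw [add_comm v u', add_comm v v']
  exact h'.add_right v

end Bin

/-- A binomial ideal is homogeneous for any decomposition of the exponents that is compatible with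
the binomials (with nonzero coefficients) it contains. -/
lemma res_mem {I : Ideal (MvPolynomial (Fin n) k)} (hI : IsBinomialIdeal k I)
    {U : Set (Fin n →₀ ℕ)} (hU : ∀ u v, Bin I u v → u ∈ U → v ∈ U)
    {f : MvPolynomial (Fin n) k} (hf : f ∈ I) : res U f ∈ I := by
  classical
  obtain ⟨S, hS, hbin⟩ := hI
  suffices H : ∀ r, res U (r * f) ∈ I by simpa using H 1
  have hf' : f ∈ Ideal.span S := hS ▸ hf
  induction hf' using Submodule.span_induction with
  | zero => simp
  | add x y hx hy ihx ihy =>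
    intro r
    rw [mul_add, map_add]
    exact I.add_mem (ihx (hS ▸ hx) r) (ihy (hS ▸ hy) r)
  | smul a x hx ih =>
    intro r
    rw [smul_eq_mul, ← mul_assoc]
    exact ih (hS ▸ hx) _
  | mem s hs =>
    intro r
    induction r using MvPolynomial.induction_on' with
    | add p q hp hq =>
      rw [add_mul, map_add]
      exact I.add_mem hp hq
    | monomial a b =>
      obtain ⟨u, v, c, rfl⟩ := hbin s hs
      have hmem : monomial (u + a) 1 - monomial (v + a) c ∈ I := by
        have := I.mul_mem_left (monomial a 1) hf
        rw [mul_sub, monomial_mul, monomial_mul] at this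
        simpa [add_comm] using this
      have key : res U (monomial (u + a) (1 : k) - monomial (v + a) c) ∈ I := by
        rw [map_sub, res_monomial, res_monomial]
        by_cases hc : c = 0
        · subst hc
          split_ifs <;> simp_all
        · have hB : Bin I (u + a) (v + a) := ⟨c, hc, hmem⟩
          by_cases h1 : u + a ∈ U
          · rw [if_pos h1, if_pos (hU _ _ hB h1)]
            exact hmem
          · rw [if_neg h1, if_neg (fun h2 => h1 (hU _ _ hB.symm h2))]
            simp
      have e : monomial a b * (monomial u (1 : k) - monomial v c)
          = b • (monomial (u + a) (1 : k) - monomial (v + a) c) := by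
        rw [mul_sub, monomial_mul, monomial_mul, smul_sub, smul_monomial, smul_monomial,
          add_comm a u, add_comm a v]
        simp
      rw [e, map_smul, smul_eq_C_mul]
      exact I.mul_mem_left _ key

/-! ### Saturation and reduction to a single orbit -/

/-- The exponents of the monomials outside a prime ideal. -/
def expo (P : Ideal (MvPolynomial (Fin n) k)) [hP : P.IsPrime] : AddSubmonoid (Fin n →₀ ℕ) where
  carrier := {m | monomial m (1 : k) ∉ P}
  zero_mem' := fun h => hP.ne_top ((Ideal.eq_top_iff_one P).2 h)
  add_mem' := by
    intro a b ha hb h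
    have e : monomial (a + b) (1 : k) = monomial a 1 * monomial b 1 := by simp [monomial_mul]
    rw [e] at h
    exact (hP.mem_or_mem h).elim ha hb

lemma mem_expo {P : Ideal (MvPolynomial (Fin n) k)} [P.IsPrime] {m : Fin n →₀ ℕ} :
    m ∈ expo P ↔ monomial m (1 : k) ∉ P := Iff.rfl

lemma mem_expo_of_le {P : Ideal (MvPolynomial (Fin n) k)} [P.IsPrime] {u v : Fin n →₀ ℕ}
    (h : u ≤ v) (hv : v ∈ expo P) : u ∈ expo P := by
  obtain ⟨w, rfl⟩ := exists_add_of_le h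
  intro hu
  apply hv
  have e : monomial (u + w) (1 : k) = monomial u 1 * monomial w 1 := by simp [monomial_mul]
  rw [e]
  exact P.mul_mem_right _ hu

/-- The saturation of `I` with respect to the monomials with exponent in `N`. -/
def sat (I : Ideal (MvPolynomial (Fin n) k)) (N : AddSubmonoid (Fin n →₀ ℕ)) :
    Ideal (MvPolynomial (Fin n) k) where
  carrier := {f | ∃ m ∈ N, monomial m (1 : k) * f ∈ I}
  zero_mem' := ⟨0, N.zero_mem, by simp⟩
  add_mem' := by
    rintro f g ⟨a, ha, hf⟩ ⟨b, hb, hg⟩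
    refine ⟨a + b, N.add_mem ha hb, ?_⟩
    have e : monomial (a + b) (1 : k) = monomial a 1 * monomial b 1 := by simp [monomial_mul]
    have := I.add_mem (I.mul_mem_left (monomial b 1) hf) (I.mul_mem_left (monomial a 1) hg)
    rw [e]
    convert this using 1
    ring
  smul_mem' := by
    rintro r f ⟨a, ha, hf⟩
    refine ⟨a, ha, ?_⟩
    have := I.mul_mem_left r hf
    rw [smul_eq_mul]
    convert this using 1
    ring

lemma mem_sat {I : Ideal (MvPolynomial (Fin n) k)} {N : AddSubmonoid (Fin n →₀ ℕ)}
    {f : MvPolynomial (Fin n) k} : f ∈ sat I N ↔ ∃ m ∈ N, monomial m (1 : k) * f ∈ I := Iff.rfl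

lemma le_sat (I : Ideal (MvPolynomial (Fin n) k)) (N : AddSubmonoid (Fin n →₀ ℕ)) :
    I ≤ sat I N := fun _ hf => ⟨0, N.zero_mem, I.mul_mem_left _ hf⟩

lemma mem_sat_of_mul {I : Ideal (MvPolynomial (Fin n) k)} {N : AddSubmonoid (Fin n →₀ ℕ)}
    {f : MvPolynomial (Fin n) k} {a : Fin n →₀ ℕ} (ha : a ∈ N)
    (h : monomial a (1 : k) * f ∈ sat I N) : f ∈ sat I N := by
  obtain ⟨m, hm, h⟩ := h
  refine ⟨m + a, N.add_mem hm ha, ?_⟩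
  have e : monomial (m + a) (1 : k) = monomial m 1 * monomial a 1 := by simp [monomial_mul]
  rwa [e, mul_assoc]

/-- The exponents `y` such that `x^y` agrees with `x^w`, up to a scalar and
modulo `I`, after multiplication by monomials `x^a`, `x^b` with `a, b ∈ N` subject to
the condition `Q a b`. -/
def orb (I : Ideal (MvPolynomial (Fin n) k)) (N : AddSubmonoid (Fin n →₀ ℕ)) (w : Fin n →₀ ℕ)
    (Q : (Fin n →₀ ℕ) → (Fin n →₀ ℕ) → Prop) : Set (Fin n →₀ ℕ) :=
  {y | ∃ a ∈ N, ∃ b ∈ N, Bin I (y + a) (w + b) ∧ Q a b}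

lemma orb_closed {I : Ideal (MvPolynomial (Fin n) k)} {N : AddSubmonoid (Fin n →₀ ℕ)}
    {w : Fin n →₀ ℕ} {Q : (Fin n →₀ ℕ) → (Fin n →₀ ℕ) → Prop} (u v : Fin n →₀ ℕ)
    (h : Bin I u v) (hu : u ∈ orb I N w Q) : v ∈ orb I N w Q := by
  obtain ⟨a, ha, b, hb, hB, hQ⟩ := hu
  exact ⟨a, ha, b, hb, (h.symm.add_right a).trans hB, hQ⟩

lemma add_mem_orb {I : Ideal (MvPolynomial (Fin n) k)} {N : AddSubmonoid (Fin n →₀ ℕ)}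
    {w m y : Fin n →₀ ℕ} (hm : m ∈ N) :
    m + y ∈ orb I N w (fun _ _ => True) ↔ y ∈ orb I N w (fun _ _ => True) := by
  constructor
  · rintro ⟨a, ha, b, hb, hB, -⟩
    refine ⟨m + a, N.add_mem hm ha, b, hb, ?_, trivial⟩
    convert hB using 1
    abel
  · rintro ⟨a, ha, b, hb, hB, -⟩
    refine ⟨a, ha, b + m, N.add_mem hb hm, ?_, trivial⟩
    convert hB.add_right m using 1 <;> abel

lemma res_orb_mem_sat {I : Ideal (MvPolynomial (Fin n) k)} (hI : IsBinomialIdeal k I)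
    {N : AddSubmonoid (Fin n →₀ ℕ)} {w : Fin n →₀ ℕ} {f : MvPolynomial (Fin n) k}
    (hf : f ∈ sat I N) : res (orb I N w (fun _ _ => True)) f ∈ sat I N := by
  obtain ⟨m, hm, h⟩ := hf
  refine ⟨m, hm, ?_⟩
  rw [← res_mul (V := orb I N w (fun _ _ => True))]
  · exact res_mem hI orb_closed h
  · intro a ha y _
    rw [mem_support_mon ha]
    exact add_mem_orb hm

/-- The polynomials all of whose exponents lie in `N`. -/
def sub (k : Type*) [Field k] {n : ℕ} (N : AddSubmonoid (Fin n →₀ ℕ)) :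
    Subring (MvPolynomial (Fin n) k) where
  carrier := {f | ∀ u ∈ f.support, u ∈ N}
  zero_mem' := by simp
  one_mem' := by
    intro u hu
    rw [mem_support_mon (a := 0) (c := (1 : k)) hu]
    exact N.zero_mem
  add_mem' := by
    classical
    intro f g hf hg u hu
    exact (Finset.mem_union.1 (support_add hu)).elim (hf u) (hg u)
  neg_mem' := by
    intro f hf u hu
    exact hf u (by simpa using hu)
  mul_mem' := by
    classical
    intro f g hf hg u hu
    obtain ⟨a, ha, b, hb, rfl⟩ := Finset.mem_add.1 (support_mul f g hu)
    exact N.add_mem (hf a ha) (hg b hb)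

lemma mem_sub {N : AddSubmonoid (Fin n →₀ ℕ)} {f : MvPolynomial (Fin n) k} :
    f ∈ sub k N ↔ ∀ u ∈ f.support, u ∈ N := Iff.rfl

lemma monomial_mem_sub {N : AddSubmonoid (Fin n →₀ ℕ)} {u : Fin n →₀ ℕ} (hu : u ∈ N) (c : k) :
    monomial u c ∈ sub k N := fun v hv => by rwa [mem_support_mon hv]

lemma res_mem_sub {N : AddSubmonoid (Fin n →₀ ℕ)} {f : MvPolynomial (Fin n) k}
    (U : Set (Fin n →₀ ℕ)) (hf : f ∈ sub k N) : res U f ∈ sub k N :=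
  fun u hu => hf u (mem_support_res.1 hu).2

/-- A witness `h` for the annihilator can be chosen with all its exponents in a single orbit:
the annihilator of `h` is the intersection of those of its orbit components, and a prime that is a
finite intersection is one of the intersectands. -/
lemma exists_single_orbit {I P : Ideal (MvPolynomial (Fin n) k)} (hI : IsBinomialIdeal k I)
    [hP : P.IsPrime] (h : MvPolynomial (Fin n) k)
    (hh : ∀ g ∈ sub k (expo P), g ∈ P ↔ g * h ∈ sat I (expo P)) :
    ∃ h' : MvPolynomial (Fin n) k, (∀ g ∈ sub k (expo P), g ∈ P ↔ g * h' ∈ sat I (expo P)) ∧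
      ∃ w, ∀ y ∈ h'.support, y ∈ orb I (expo P) w (fun _ _ => True) := by
  induction hN : h.support.card using Nat.strong_induction_on generalizing h with
  | _ N ih =>
  have h0 : h ≠ 0 := by
    rintro rfl
    exact hP.ne_top ((Ideal.eq_top_iff_one P).2 ((hh 1 (one_mem _)).2 (by simp)))
  obtain ⟨w, hw⟩ : h.support.Nonempty := by
    rwa [Finset.nonempty_iff_ne_empty, ne_eq, support_eq_empty]
  set U := orb I (expo P) w (fun _ _ => True) with hU
  by_cases hall : ∀ y ∈ h.support, y ∈ U
  · exact ⟨h, hh, w, hall⟩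
  push Not at hall
  obtain ⟨y, hy, hyU⟩ := hall
  have hwU : w ∈ U := ⟨0, zero_mem _, 0, zero_mem _, Bin.refl _ _, trivial⟩
  have hmul : ∀ g ∈ sub k (expo P), res U (g * h) = g * res U h := fun g hg =>
    res_mul fun a ha y _ => add_mem_orb (hg a ha)
  have hsplit : ∀ g ∈ sub k (expo P), g * h ∈ sat I (expo P) → g * res U h ∈ sat I (expo P) := by
    intro g hg hgh
    rw [← hmul g hg]
    exact res_orb_mem_sat hI hgh
  have hsplit' : ∀ g ∈ sub k (expo P), g * h ∈ sat I (expo P) →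
      g * (h - res U h) ∈ sat I (expo P) := by
    intro g hg hgh
    rw [mul_sub]
    exact sub_mem hgh (hsplit g hg hgh)
  by_cases c1 : ∀ g ∈ sub k (expo P), g * res U h ∈ sat I (expo P) → g ∈ P
  · refine ih _ ?_ (res U h) (fun g hg => ⟨fun hgP => hsplit g hg ((hh g hg).1 hgP), c1 g hg⟩) rfl
    rw [← hN]
    refine Finset.card_lt_card ⟨fun u hu => (mem_support_res.1 hu).2, fun hsub => ?_⟩
    exact hyU (mem_support_res.1 (hsub hy)).1
  by_cases c2 : ∀ g ∈ sub k (expo P), g * (h - res U h) ∈ sat I (expo P) → g ∈ P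
  · refine ih _ ?_ (h - res U h)
      (fun g hg => ⟨fun hgP => hsplit' g hg ((hh g hg).1 hgP), c2 g hg⟩) rfl
    rw [← hN]
    classical
    refine Finset.card_lt_card ⟨fun u hu => ?_, fun hsub => ?_⟩
    · rw [mem_support_iff, coeff_sub, coeff_res] at hu
      rw [mem_support_iff]
      intro h'
      apply hu
      simp [h']
    · have := hsub hw
      rw [mem_support_iff, coeff_sub, coeff_res, if_pos hwU, sub_self] at this
      exact this rfl
  push Not at c1 c2
  obtain ⟨g1, hg1, hg1', hg1P⟩ := c1
  obtain ⟨g2, hg2, hg2', hg2P⟩ := c2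
  exfalso
  have : g1 * g2 ∈ P := by
    rw [hh _ (mul_mem hg1 hg2)]
    have := add_mem (Ideal.mul_mem_left _ g2 hg1') (Ideal.mul_mem_left _ g1 hg2')
    convert this using 1
    ring
  exact (hP.mem_or_mem this).elim hg1P hg2P

/-- A polynomial with exponents in the orbit of `w` is, up to a monomial unit and modulo `I`,
a multiple of `x^w`. -/
lemma exists_mul_eq {I : Ideal (MvPolynomial (Fin n) k)} {N : AddSubmonoid (Fin n →₀ ℕ)}
    {w : Fin n →₀ ℕ} (h : MvPolynomial (Fin n) k)
    (hh : ∀ y ∈ h.support, y ∈ orb I N w (fun _ _ => True)) :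
    ∃ A ∈ N, ∃ q ∈ sub k N, monomial A (1 : k) * h - q * monomial w 1 ∈ I := by
  classical
  suffices H : ∀ s : Finset (Fin n →₀ ℕ), (∀ y ∈ s, y ∈ orb I N w (fun _ _ => True)) →
      ∃ A ∈ N, ∃ q ∈ sub k N,
        monomial A (1 : k) * (∑ y ∈ s, monomial y (coeff y h)) - q * monomial w 1 ∈ I by
    have := H h.support hh
    rwa [← h.as_sum] at this
  intro s
  induction s using Finset.induction_on with
  | empty => exact fun _ => ⟨0, zero_mem _, 0, zero_mem _, by simp⟩
  | insert y s hys ih =>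
    intro hs
    obtain ⟨A, hA, q, hq, hm⟩ := ih fun z hz => hs z (Finset.mem_insert_of_mem hz)
    obtain ⟨a, ha, b, hb, ⟨c, hc, hB⟩, -⟩ := hs y (Finset.mem_insert_self _ _)
    refine ⟨A + a, add_mem hA ha, monomial a 1 * q + monomial (A + b) (coeff y h * c),
      add_mem (mul_mem (monomial_mem_sub ha _) hq) (monomial_mem_sub (add_mem hA hb) _), ?_⟩
    rw [Finset.sum_insert hys]
    have := add_mem (I.mul_mem_left (monomial a 1) hm)
      (I.mul_mem_left (monomial A (coeff y h)) hB)
    convert this using 1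
    have e1 : monomial (A + a) (1 : k) = monomial A 1 * monomial a 1 := by simp [monomial_mul]
    have e2 : monomial (A + b) (coeff y h * c) * monomial w (1 : k)
        = monomial A (coeff y h) * monomial (w + b) c := by
      rw [monomial_mul, monomial_mul, mul_one]
      congr 2
      abel
    have e3 : monomial A (coeff y h) * monomial (y + a) (1 : k)
        = monomial A 1 * monomial a 1 * monomial y (coeff y h) := by
      simp only [monomial_mul, mul_one, one_mul]
      congr 1
      abel_nf
    rw [mul_sub (monomial A _) , e3, ← e2, e1]
    ring

/-! ### The grading by the exponent lattice of the prime -/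

lemma Bin.cancel {P : Ideal (MvPolynomial (Fin n) k)} [hP : P.IsPrime] {u v t : Fin n →₀ ℕ}
    (ht : t ∈ expo P) (h : Bin P (u + t) (v + t)) : Bin P u v := by
  obtain ⟨c, hc, h⟩ := h
  refine ⟨c, hc, (hP.mem_or_mem (x := monomial t (1 : k)) ?_).resolve_left ht⟩
  rw [mul_sub, monomial_mul, monomial_mul]
  simpa [add_comm] using h

/-- Over an algebraically closed field the exponent lattice of a prime is saturated:
`x^u / x^v` is algebraic over `k` in the fraction field of `k[x]/P`, hence a constant. -/
lemma Bin.of_nsmul [IsAlgClosed k] {P : Ideal (MvPolynomial (Fin n) k)} [hP : P.IsPrime]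
    {u v : Fin n →₀ ℕ} (hu : u ∈ expo P) (hv : v ∈ expo P) {d : ℕ} (hd : d ≠ 0)
    (h : Bin P (d • u) (d • v)) : Bin P u v := by
  obtain ⟨c, hc, h⟩ := h
  let A := MvPolynomial (Fin n) k ⧸ P
  let L := FractionRing A
  let φ : MvPolynomial (Fin n) k →ₐ[k] L :=
    (IsScalarTower.toAlgHom k A L).comp (Ideal.Quotient.mkₐ k P)
  have hφ : ∀ f, φ f = 0 ↔ f ∈ P := by
    intro f
    have e : φ f = algebraMap A L (Ideal.Quotient.mk P f) := rfl
    rw [e, map_eq_zero_iff _ (IsFractionRing.injective A L), Ideal.Quotient.eq_zero_iff_mem]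
  have hmon : ∀ (w : Fin n →₀ ℕ) (c : k), monomial w c = c • monomial w (1 : k) := by
    intro w c
    simp [smul_monomial]
  have hpow : ∀ w : Fin n →₀ ℕ, monomial (d • w) (1 : k) = monomial w 1 ^ d := by
    intro w
    simp [monomial_pow]
  have hv0 : φ (monomial v 1) ≠ 0 := fun h0 => hv ((hφ _).1 h0)
  have hu0 : φ (monomial u 1) ≠ 0 := fun h0 => hu ((hφ _).1 h0)
  rw [← hφ, hmon (d • v) c, hpow, hpow, map_sub, map_smul, map_pow, map_pow, sub_eq_zero] at h
  set t : L := φ (monomial u 1) / φ (monomial v 1) with ht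
  have htd : t ^ d = algebraMap k L c := by
    rw [ht, div_pow, h, Algebra.smul_def, mul_div_assoc, div_self (pow_ne_zero _ hv0),
      mul_one]
  have htint : IsIntegral k t := by
    refine IsIntegral.of_pow (Nat.pos_of_ne_zero hd) ?_
    rw [htd]
    exact isIntegral_algebraMap
  obtain ⟨r, hr⟩ := minpoly.mem_range_of_degree_eq_one k t
    (IsAlgClosed.degree_eq_one_of_irreducible k (minpoly.irreducible htint))
  have hur : φ (monomial u 1) = algebraMap k L r * φ (monomial v 1) := by
    rw [hr, ht, div_mul_cancel₀ _ hv0]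
  refine ⟨r, ?_, ?_⟩
  · rintro rfl
    rw [map_zero, zero_mul] at hur
    exact hu0 hur
  · rw [← hφ, hmon v r, map_sub, map_smul, hur, Algebra.smul_def, sub_self]

/-- Exponent vectors regarded in `ℤ^n`. -/
noncomputable def toZ (n : ℕ) : (Fin n →₀ ℕ) →+ (Fin n → ℤ) where
  toFun u i := u i
  map_zero' := by ext; simp
  map_add' := by intros; ext; simp

/-- The lattice of differences `u - v` of exponents of the binomials `x^u - c x^v`, `c ≠ 0`,
in `P` whose monomials are not in `P`. -/
def lat (P : Ideal (MvPolynomial (Fin n) k)) [P.IsPrime] : AddSubgroup (Fin n → ℤ) where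
  carrier := {z | ∃ u ∈ expo P, ∃ v ∈ expo P, Bin P u v ∧ z = toZ n u - toZ n v}
  zero_mem' := ⟨0, zero_mem _, 0, zero_mem _, Bin.refl _ _, by simp⟩
  add_mem' := by
    rintro _ _ ⟨u, hu, v, hv, h, rfl⟩ ⟨u', hu', v', hv', h', rfl⟩
    refine ⟨u + u', add_mem hu hu', v + v', add_mem hv hv', h.add h', ?_⟩
    rw [map_add, map_add]
    abel
  neg_mem' := by
    rintro _ ⟨u, hu, v, hv, h, rfl⟩
    exact ⟨v, hv, u, hu, h.symm, by abel⟩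

lemma toZ_injective : Function.Injective (toZ n) := by
  intro u v h
  ext i
  have := congrFun h i
  simpa [toZ] using this

/-- The degree map from exponents to `ℤ^n` modulo the lattice of `P`. -/
noncomputable def deg (P : Ideal (MvPolynomial (Fin n) k)) [P.IsPrime] :
    (Fin n →₀ ℕ) →+ (Fin n → ℤ) ⧸ lat P :=
  (QuotientAddGroup.mk' (lat P)).comp (toZ n)

lemma deg_eq_of_bin {P : Ideal (MvPolynomial (Fin n) k)} [P.IsPrime] {u v : Fin n →₀ ℕ}
    (hu : u ∈ expo P) (hv : v ∈ expo P) (h : Bin P u v) : deg P u = deg P v := by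
  refine ((QuotientAddGroup.eq_iff_sub_mem).2 ?_)
  exact ⟨u, hu, v, hv, h, rfl⟩

lemma bin_of_deg_eq {P : Ideal (MvPolynomial (Fin n) k)} [P.IsPrime] {u v : Fin n →₀ ℕ}
    (h : deg P u = deg P v) : Bin P u v := by
  obtain ⟨s, hs, t, ht, hB, e⟩ := (QuotientAddGroup.eq_iff_sub_mem).1 h
  have e' : u + t = v + s := by
    apply toZ_injective
    rw [map_add, map_add]
    have : toZ n u - toZ n v = toZ n s - toZ n t := e
    rw [sub_eq_sub_iff_add_eq_add] at this
    rw [this, add_comm]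
  refine Bin.cancel ht ?_
  rw [e', add_comm v s, add_comm v t]
  exact hB.add_right v

lemma isAddTorsionFree_quotient [IsAlgClosed k] (P : Ideal (MvPolynomial (Fin n) k)) [P.IsPrime] :
    IsAddTorsionFree ((Fin n → ℤ) ⧸ lat P) := by
  refine ⟨fun d hd a b hab => ?_⟩
  obtain ⟨a, rfl⟩ := QuotientAddGroup.mk_surjective a
  obtain ⟨b, rfl⟩ := QuotientAddGroup.mk_surjective b
  rw [QuotientAddGroup.eq_iff_sub_mem]
  have hab' : d • (a - b) ∈ lat P := by
    rw [smul_sub, ← QuotientAddGroup.eq_iff_sub_mem]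
    simpa using hab
  generalize a - b = z at hab'
  obtain ⟨u, hu, v, hv, hB, e⟩ := hab'
  let p : Fin n →₀ ℕ := Finsupp.equivFunOnFinite.symm fun i => (z i).toNat
  let m : Fin n →₀ ℕ := Finsupp.equivFunOnFinite.symm fun i => (-z i).toNat
  have hz : z = toZ n p - toZ n m := by
    ext i
    simp only [toZ, p, m, AddMonoidHom.coe_mk, ZeroHom.coe_mk, Pi.sub_apply,
      Finsupp.equivFunOnFinite_symm_apply_apply]
    omega
  have hcoord : ∀ i, (d : ℤ) * z i = u i - v i := by
    intro i
    have := congrFun e i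
    simpa [toZ] using this
  have hd1 : (1 : ℤ) ≤ d := by exact_mod_cast Nat.pos_of_ne_zero hd
  have hp : p ∈ expo P := by
    refine mem_expo_of_le (fun i => ?_) hu
    have := hcoord i
    simp only [p, Finsupp.equivFunOnFinite_symm_apply_apply]
    rw [Int.toNat_le]
    by_cases h0 : z i ≤ 0
    · omega
    · nlinarith
  have hm : m ∈ expo P := by
    refine mem_expo_of_le (fun i => ?_) hv
    have := hcoord i
    simp only [m, Finsupp.equivFunOnFinite_symm_apply_apply]
    rw [Int.toNat_le]
    by_cases h0 : 0 ≤ z i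
    · omega
    · nlinarith
  refine ⟨p, hp, m, hm, Bin.of_nsmul hp hm hd (bin_of_deg_eq ?_), hz⟩
  refine (QuotientAddGroup.eq_iff_sub_mem).2 ?_
  rw [map_nsmul, map_nsmul, ← smul_sub, ← hz, e]
  exact ⟨u, hu, v, hv, hB, rfl⟩

/-- A colon ideal of the saturation by a monomial is homogeneous in the variables outside `P`, for
the grading by `deg P`, as soon as `P` contains it in those variables. -/
lemma res_deg_mem {I P : Ideal (MvPolynomial (Fin n) k)} (hI : IsBinomialIdeal k I) [P.IsPrime]
    {w : Fin n →₀ ℕ}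
    (hJP : ∀ f ∈ sub k (expo P), f * monomial w 1 ∈ sat I (expo P) → f ∈ P)
    {f : MvPolynomial (Fin n) k} (hf : f ∈ sub k (expo P))
    (hfJ : f * monomial w 1 ∈ sat I (expo P)) (d : (Fin n → ℤ) ⧸ lat P) :
    res {u | deg P u = d} f * monomial w 1 ∈ sat I (expo P) := by
  obtain ⟨m, hm, h⟩ := hfJ
  refine ⟨m, hm, ?_⟩
  have e : ∀ g : MvPolynomial (Fin n) k,
      monomial m (1 : k) * (g * monomial w 1) = monomial (m + w) 1 * g := by
    intro g
    have : monomial (m + w) (1 : k) = monomial m 1 * monomial w 1 := by simp [monomial_mul]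
    rw [this]
    ring
  rw [e] at h ⊢
  rw [← res_mul (V := orb I (expo P) w fun a b => deg P b = d + deg P m + deg P a)]
  · exact res_mem hI orb_closed h
  · intro a ha y hy
    rw [mem_support_mon ha]
    have hyN := hf y hy
    constructor
    · rintro ⟨a, ha, b, hb, ⟨c, hc, hB⟩, hQ⟩
      have hmya : m + y + a ∈ expo P := add_mem (add_mem hm hyN) ha
      have hP : Bin P (m + y + a) b := by
        refine ⟨c, hc, hJP _ (sub_mem (monomial_mem_sub hmya _) (monomial_mem_sub hb _)) ?_⟩
        refine le_sat I _ ?_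
        rw [sub_mul, monomial_mul, monomial_mul]
        have e1 : m + y + a + w = m + w + y + a := by abel
        rw [e1, add_comm b w, mul_one, mul_one]
        exact hB
      have := deg_eq_of_bin hmya hb hP
      rw [hQ, map_add, map_add, add_left_inj, add_comm, add_left_inj] at this
      exact this
    · intro hd
      refine ⟨0, zero_mem _, m + y, add_mem hm hyN, ?_, ?_⟩
      · convert Bin.refl I (w + (m + y)) using 1
        abel
      · change deg P (m + y) = d + deg P m + deg P 0
        rw [map_add, map_zero, add_zero, add_comm, show deg P y = d from hd]

/-- The ideal generated by the binomials contained in `P`. -/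
noncomputable def binPart (P : Ideal (MvPolynomial (Fin n) k)) : Ideal (MvPolynomial (Fin n) k) :=
  Ideal.span {f | f ∈ P ∧ ∃ (u v : Fin n →₀ ℕ) (c : k), f = monomial u 1 - monomial v c}

lemma binPart_le (P : Ideal (MvPolynomial (Fin n) k)) : binPart P ≤ P :=
  Ideal.span_le.2 fun _ hf => hf.1

/-- Modulo the binomials of `P`, a homogeneous polynomial is a multiple of a single monomial. -/
lemma exists_monomial_of_homog {P : Ideal (MvPolynomial (Fin n) k)} [P.IsPrime]
    {f : MvPolynomial (Fin n) k} (hf : f ∈ sub k (expo P)) {a : (Fin n → ℤ) ⧸ lat P}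
    (ha : ∀ u ∈ f.support, deg P u = a) :
    ∃ u ∈ expo P, ∃ c : k, (c ≠ 0 → deg P u = a) ∧ f - monomial u c ∈ binPart P := by
  by_cases h0 : f = 0
  · exact ⟨0, zero_mem _, 0, by simp, by simp [h0]⟩
  obtain ⟨w, hw⟩ : f.support.Nonempty := by
    rwa [Finset.nonempty_iff_ne_empty, ne_eq, support_eq_empty]
  have hB : ∀ u, ∃ c : k, u ∈ f.support → monomial u (1 : k) - monomial w c ∈ P := by
    intro u
    by_cases hu : u ∈ f.support
    · obtain ⟨c, -, h⟩ := bin_of_deg_eq ((ha u hu).trans (ha w hw).symm)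
      exact ⟨c, fun _ => h⟩
    · exact ⟨0, fun h => absurd h hu⟩
  choose r hr using hB
  refine ⟨w, hf w hw, ∑ u ∈ f.support, coeff u f * r u, fun _ => ha w hw, ?_⟩
  have e : f - monomial w (∑ u ∈ f.support, coeff u f * r u)
      = ∑ u ∈ f.support, C (coeff u f) * (monomial u (1 : k) - monomial w (r u)) := by
    simp_rw [mul_sub, C_mul_monomial, mul_one]
    rw [Finset.sum_sub_distrib, ← f.as_sum, map_sum]
  rw [e]
  exact sum_mem fun u hu => Ideal.mul_mem_left _ _ (Ideal.subset_span ⟨hr u hu, _, _, _, rfl⟩)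

/-! ### Homogeneity of the prime -/

lemma sum_res_deg (P : Ideal (MvPolynomial (Fin n) k)) [P.IsPrime]
    [DecidableEq ((Fin n → ℤ) ⧸ lat P)] (f : MvPolynomial (Fin n) k) :
    ∑ a ∈ f.support.image (deg P), res {u | deg P u = a} f = f := by
  classical
  ext u
  rw [coeff_sum]
  have hc : ∀ a, coeff u (res {u | deg P u = a} f) = if deg P u = a then coeff u f else 0 := by
    intro a
    refine (coeff_res _ f u).trans ?_
    by_cases h : deg P u = a
    · rw [if_pos h]
      exact if_pos h
    · rw [if_neg h]
      exact if_neg h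
  rw [Finset.sum_congr rfl fun a _ => hc a, Finset.sum_ite_eq]
  split_ifs with h
  · rfl
  · by_contra h'
    exact h (Finset.mem_image_of_mem _ (mem_support_iff.2 (Ne.symm h')))

/-- If `P`, in the variables outside `P`, is the colon of a homogeneous ideal `J` by a polynomial
`q`, then the homogeneous components of an element of `P` lie in `P`. Torsion-freeness of the
grading group provides a pair of degrees with a unique sum, which isolates a product of two
components. -/
lemma component_mem [IsAlgClosed k] {P J : Ideal (MvPolynomial (Fin n) k)} [hP : P.IsPrime]
    (hJsat : ∀ a ∈ expo P, ∀ f, monomial a (1 : k) * f ∈ J → f ∈ J)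
    (hJhom : ∀ f ∈ sub k (expo P), f ∈ J → ∀ d, res {u | deg P u = d} f ∈ J)
    {q : MvPolynomial (Fin n) k} (hq : q ∈ sub k (expo P))
    (hPq : ∀ g ∈ sub k (expo P), g ∈ P ↔ g * q ∈ J)
    {g : MvPolynomial (Fin n) k} (hg : g ∈ sub k (expo P)) (hgP : g ∈ P)
    (a : (Fin n → ℤ) ⧸ lat P) : res {u | deg P u = a} g ∈ P := by
  classical
  have := isAddTorsionFree_quotient P
  have hU : UniqueSums ((Fin n → ℤ) ⧸ lat P) := inferInstance
  set D : ((Fin n → ℤ) ⧸ lat P) → Set (Fin n →₀ ℕ) := fun a => {u | deg P u = a} with hD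
  -- the product of a homogeneous polynomial with a component of `f` is a component of the product
  have hcomp : ∀ (g f : MvPolynomial (Fin n) k) (a b : (Fin n → ℤ) ⧸ lat P),
      (∀ u ∈ g.support, deg P u = a) → res (D (a + b)) (g * f) = g * res (D b) f := by
    intro g f a b ha
    refine res_mul fun u hu y _ => ?_
    change deg P (u + y) = a + b ↔ deg P y = b
    rw [map_add, ha u hu, add_right_inj]
  have hdeg : ∀ (f : MvPolynomial (Fin n) k) (a : (Fin n → ℤ) ⧸ lat P),
      ∀ u ∈ (res (D a) f).support, deg P u = a := fun f a u hu => (mem_support_res.1 hu).1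
  -- a homogeneous element of `P` multiplies every component of `q` into `J`
  have hkill : ∀ f ∈ sub k (expo P), f ∈ P → ∀ a, (∀ u ∈ f.support, deg P u = a) →
      ∀ b, f * res (D b) q ∈ J := by
    intro f hf hfP a ha b
    rw [← hcomp f q a b ha]
    exact hJhom _ (mul_mem hf hq) ((hPq f hf).1 hfP) _
  by_contra hcon
  set A := (g.support.image (deg P)).filter fun a => res (D a) g ∉ P with hA
  set B := (q.support.image (deg P)).filter fun b => res (D b) q ∉ J with hB
  have hAne : A.Nonempty := by
    refine ⟨a, Finset.mem_filter.2 ⟨?_, hcon⟩⟩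
    by_contra h
    apply hcon
    have : res (D a) g = 0 := by
      rw [← support_eq_empty, Finset.eq_empty_iff_forall_notMem]
      intro u hu
      exact h (Finset.mem_image.2 ⟨u, (mem_support_res.1 hu).2, hdeg _ _ u hu⟩)
    rw [this]
    exact zero_mem _
  have hBne : B.Nonempty := by
    by_contra hBe
    have hqJ : q ∈ J := by
      rw [← sum_res_deg P q]
      refine sum_mem fun b hb => ?_
      by_contra hb'
      exact hBe ⟨b, Finset.mem_filter.2 ⟨hb, hb'⟩⟩
    exact hP.ne_top ((Ideal.eq_top_iff_one P).2 ((hPq 1 (one_mem _)).2 (by simpa using hqJ)))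
  obtain ⟨a0, ha0, b0, hb0, huniq⟩ := hU.uniqueAdd_of_nonempty hAne hBne
  obtain ⟨ha0i, ha0P⟩ := Finset.mem_filter.1 ha0
  obtain ⟨hb0i, hb0J⟩ := Finset.mem_filter.1 hb0
  -- all terms of the `a0 + b0` component of `g * q` other than the distinguished one lie in `J`
  have hterm : ∀ a ∈ g.support.image (deg P), a ≠ a0 →
      res (D (a0 + b0)) (res (D a) g * q) ∈ J := by
    intro a ha hne
    have e : a0 + b0 = a + (a0 + b0 - a) := by abel
    rw [e, hcomp _ q a _ (hdeg g a)]
    by_cases haP : res (D a) g ∈ P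
    · exact hkill _ (res_mem_sub _ hg) haP a (hdeg g a) _
    · refine J.mul_mem_left _ ?_
      by_contra hbJ
      refine hne (huniq (Finset.mem_filter.2 ⟨ha, haP⟩)
        (Finset.mem_filter.2 ⟨?_, hbJ⟩) e.symm).1
      by_contra h
      apply hbJ
      have : res (D (a0 + b0 - a)) q = 0 := by
        rw [← support_eq_empty, Finset.eq_empty_iff_forall_notMem]
        intro u hu
        exact h (Finset.mem_image.2 ⟨u, (mem_support_res.1 hu).2, hdeg _ _ u hu⟩)
      rw [this]
      exact zero_mem _
  have htot : res (D (a0 + b0)) (g * q) ∈ J :=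
    hJhom _ (mul_mem hg hq) ((hPq g hg).1 hgP) _
  have hdist : res (D a0) g * res (D b0) q ∈ J := by
    rw [← hcomp _ q a0 b0 (hdeg g a0)]
    have e : res (D (a0 + b0)) (g * q) = res (D (a0 + b0)) (res (D a0) g * q)
        + ∑ a ∈ (g.support.image (deg P)).erase a0, res (D (a0 + b0)) (res (D a) g * q) := by
      rw [Finset.add_sum_erase _ (fun a => res (D (a0 + b0)) (res (D a) g * q)) ha0i, ← map_sum,
        ← Finset.sum_mul, sum_res_deg]
    rw [e] at htot
    refine (J.add_mem_iff_left (sum_mem fun a ha => ?_)).1 htot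
    exact hterm a (Finset.mem_of_mem_erase ha) (Finset.ne_of_mem_erase ha)
  -- the `a0` component of `g` acts on the components of `q` as a nonzero multiple of a monomial
  obtain ⟨u, hu, c, hc, huc⟩ := exists_monomial_of_homog (res_mem_sub _ hg) (hdeg g a0)
  have hc0 : c ≠ 0 := by
    rintro rfl
    apply ha0P
    simpa using binPart_le P huc
  have hmon : (res (D a0) g - monomial u c) * res (D b0) q ∈ J := by
    refine hkill _ (sub_mem (res_mem_sub _ hg) (monomial_mem_sub hu c)) (binPart_le P huc) a0 ?_ b0
    intro v hv
    rcases Finset.mem_union.1 (support_sub _ _ _ hv) with hv | hv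
    · exact hdeg g a0 v hv
    · rw [mem_support_mon hv]
      exact hc hc0
  have hmon' : monomial u c * res (D b0) q ∈ J := by
    have := sub_mem hdist hmon
    convert this using 1
    ring
  apply hb0J
  refine hJsat u hu _ ?_
  have := J.mul_mem_left (C c⁻¹) hmon'
  rwa [← mul_assoc, C_mul_monomial, inv_mul_cancel₀ hc0] at this

/-- If `P` is the annihilator of the class of `h` modulo a binomial ideal, then `P` is generated by
its binomials. -/
lemma le_binPart [IsAlgClosed k] {I P : Ideal (MvPolynomial (Fin n) k)}
    (hI : IsBinomialIdeal k I) [hP : P.IsPrime] {h : MvPolynomial (Fin n) k}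
    (hh : ∀ g, g ∈ P ↔ g * h ∈ I) : P ≤ binPart P := by
  classical
  have hh' : ∀ g ∈ sub k (expo P), g ∈ P ↔ g * h ∈ sat I (expo P) := by
    refine fun g _ => ⟨fun hg => le_sat I _ ((hh g).1 hg), ?_⟩
    rintro ⟨m, hm, hmg⟩
    rw [← mul_assoc, ← hh] at hmg
    exact (hP.mem_or_mem hmg).resolve_left hm
  obtain ⟨h', hh', w, hw⟩ := exists_single_orbit hI h hh'
  obtain ⟨A, hA, q, hq, hAq⟩ := exists_mul_eq h' hw
  have hPq : ∀ g ∈ sub k (expo P), g ∈ P ↔ g * q * monomial w 1 ∈ sat I (expo P) := by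
    intro g hg
    have h1 := Ideal.mul_mem_left _ g (le_sat I (expo P) hAq)
    have e : g * (monomial A (1 : k) * h' - q * monomial w 1)
        = monomial A 1 * (g * h') - g * q * monomial w 1 := by ring
    rw [e] at h1
    rw [hh' g hg]
    constructor
    · intro h2
      have := sub_mem (Ideal.mul_mem_left _ (monomial A 1) h2) h1
      rwa [sub_sub_cancel] at this
    · intro h2
      have := add_mem h1 h2
      rw [sub_add_cancel] at this
      exact mem_sat_of_mul hA this
  let J : Ideal (MvPolynomial (Fin n) k) :=
    Submodule.comap (LinearMap.mulRight (MvPolynomial (Fin n) k) (monomial w (1 : k)))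
      (sat I (expo P))
  have hJ : ∀ f, f ∈ J ↔ f * monomial w 1 ∈ sat I (expo P) := fun f => Iff.rfl
  intro g hg
  -- monomials lying in `P` are binomials with a zero coefficient
  have hrest : g - res (expo P : Set (Fin n →₀ ℕ)) g ∈ binPart P := by
    rw [(g - res (expo P : Set (Fin n →₀ ℕ)) g).as_sum]
    refine sum_mem fun u hu => ?_
    rw [mem_support_iff, coeff_sub, coeff_res] at hu
    have huP : u ∉ expo P := by
      intro hu'
      apply hu
      rw [if_pos (SetLike.mem_coe.2 hu'), sub_self]
    rw [mem_expo, not_not] at huP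
    rw [← mul_one (coeff u _), ← C_mul_monomial]
    exact Ideal.mul_mem_left _ _ (Ideal.subset_span ⟨huP, u, 0, 0, by simp⟩)
  have hg0 : res (expo P : Set (Fin n →₀ ℕ)) g ∈ sub k (expo P) :=
    fun u hu => (mem_support_res.1 hu).1
  have hg0P : res (expo P : Set (Fin n →₀ ℕ)) g ∈ P := by
    have := sub_mem hg (binPart_le P hrest)
    rwa [sub_sub_cancel] at this
  suffices H : res (expo P : Set (Fin n →₀ ℕ)) g ∈ binPart P by
    have := add_mem hrest H
    rwa [sub_add_cancel] at this
  generalize res (expo P : Set (Fin n →₀ ℕ)) g = g0 at hg0 hg0P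
  rw [← sum_res_deg P g0]
  refine sum_mem fun a _ => ?_
  have hcomp : res {u | deg P u = a} g0 ∈ P := by
    refine component_mem (J := J) ?_ ?_ hq (fun f hf => hPq f hf) hg0 hg0P a
    · intro a ha f hf
      rw [hJ, mul_assoc] at hf
      exact mem_sat_of_mul ha hf
    · intro f hf hfJ d
      refine res_deg_mem hI (fun f hf hfJ => ?_) hf hfJ d
      rw [hPq f hf, mul_assoc, mul_comm q, ← mul_assoc]
      exact Ideal.mul_mem_right _ _ hfJ
  obtain ⟨u, hu, c, -, huc⟩ := exists_monomial_of_homog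
    (res_mem_sub {u | deg P u = a} hg0) (a := a) (fun u hu => (mem_support_res.1 hu).1)
  have hc : c = 0 := by
    by_contra hc0
    have h1 := sub_mem hcomp (binPart_le P huc)
    rw [sub_sub_cancel] at h1
    have h2 := P.mul_mem_left (C c⁻¹) h1
    rw [C_mul_monomial, inv_mul_cancel₀ hc0] at h2
    exact hu h2
  simpa [hc] using huc

end BinomialPrimes

/-- Eisenbud–Sturmfels: over an algebraically closed field, every
associated prime of a binomial ideal is itself a binomial ideal. -/
theorem associated_prime_of_binomial_is_binomial
    (k : Type*) [Field k] [IsAlgClosed k] (n : ℕ)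
    (I P : Ideal (MvPolynomial (Fin n) k)) (hI : IsBinomialIdeal k I)
    (hP : IsAssociatedPrime P (MvPolynomial (Fin n) k ⧸ I)) :
    IsBinomialIdeal k P := by
  obtain ⟨hprime, x, hx⟩ := isAssociatedPrime_iff.1 hP
  obtain ⟨h, rfl⟩ := Ideal.Quotient.mk_surjective x
  have hh : ∀ g, g ∈ P ↔ g * h ∈ I := by
    intro g
    rw [hx, Submodule.mem_colon_singleton, Submodule.mem_bot, ← Ideal.Quotient.eq_zero_iff_mem,
      map_mul]
    rfl
  exact ⟨_, le_antisymm (BinomialPrimes.le_binPart hI hh) (BinomialPrimes.binPart_le P),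
    fun f hf => hf.2⟩
end

section
/- Let k be an algebraically closed field (of arbitrary characteristic) and Q a finitely generated commutative monoid. Every binomial ideal I in the monoid algebra k[Q] admits a binomial primary decomposition: there exist finitely many primary binomial ideals P_1,…,P_r of k[Q] with I = P_1 ∩ ⋯ ∩ P_r. -/
/-!
The monoid algebra is Noetherian, so by Noetherian induction it suffices to show that a binomial
ideal `I` which is not a finite intersection of strictly larger binomial ideals (`BinIrred`) is
primary. Write `F` for the monoid of exponents of monomials that are nonzerodivisors modulo `I`.
Each way in which `I` could fail to be primary is excluded by a decomposition of `I` into larger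
binomial ideals.

* `cellular`: a monomial is either nilpotent or regular modulo `I`. Otherwise
  `I = (I + (m)) ∩ (I : m)` for a high power `m` of it, and the colon ideal of a binomial ideal by a
  monomial is binomial.
* `stab`: if `t^a ∉ I`, then a relation between `t^(a+f)` and `t^(a+f')` modulo `I` with `f, f' ∈ F`
  already holds between `t^f` and `t^f'`. Otherwise
  `I = (I + (t^s)) ∩ (I + (t^f - c t^f'))` for a multiple `t^s` of `t^a` that is annihilated by all
  nilpotent monomials.
* `rel_of_nsmul`: the congruence that `I` induces on `F` has no torsion prime to the characteristic.
  Otherwise a relation `t^(na) - c t^(nb) ∈ I` factors over the algebraically closed field, and `I`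
  is the intersection of the ideals `I + (t^a - r t^b)` over the roots `r` of `X^n - c`.

Grade `k[Q]` by exponents modulo torsion (`tor`). By the last point and the Frobenius, a homogeneous
element of degree in `F` is nilpotent or a nonzerodivisor modulo `I` (`nilpotent_or_nzd`). The degrees
coming from `F` lie in a torsion-free cancellative monoid, where finite sets have unique sums, so a
nonempty sum of homogeneous nonzerodivisors of distinct degrees is a nonzerodivisor on
`k[F]/(I ∩ k[F])` (`nzd_sum`). By `stab`, each `F`-orbit of monomials outside `I` spans, up to
localization, a free module of rank one over this ring, so it is a nonzerodivisor on `k[Q]/I`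
(`nzd_extend`). Hence every element outside the radical of `I` is a nonzerodivisor plus a nilpotent,
and `I` is primary (`BinIrred.isPrimary`).
-/

/-- An ideal of the monoid algebra `k[Q]` is a binomial ideal if it is generated
by elements `t^a − λ t^b` (with `λ = 0` allowed, so monomials are permitted). -/
def IsBinomialMonoidIdeal (k : Type*) [CommRing k] (Q : Type*) [AddCommMonoid Q]
    (I : Ideal (AddMonoidAlgebra k Q)) : Prop :=
  ∃ S : Set (AddMonoidAlgebra k Q), I = Ideal.span S ∧
    ∀ f ∈ S, ∃ (a b : Q) (c : k),
      f = AddMonoidAlgebra.single a 1 - AddMonoidAlgebra.single b c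

namespace BinomialDecomposition

variable {k : Type*} [Field k] {Q : Type*} [AddCommMonoid Q]

/-! ### Monomials and restriction of support -/

/-- The monomial `t^a`. -/
noncomputable def mon (k : Type*) [Field k] {Q : Type*} [AddCommMonoid Q] (a : Q) :
    AddMonoidAlgebra k Q :=
  AddMonoidAlgebra.single a 1

/-- The subspace of elements whose support lies in `S`. -/
noncomputable def supp (k : Type*) [Field k] {Q : Type*} [AddCommMonoid Q] (S : Set Q) :
    Submodule k (AddMonoidAlgebra k Q) :=
  Submodule.span k (Set.image (mon k) S)

open Classical in
/-- The projection deleting all terms whose exponent is not in `S`. -/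
noncomputable def res (k : Type*) [Field k] {Q : Type*} [AddCommMonoid Q] (S : Set Q) :
    AddMonoidAlgebra k Q →ₗ[k] AddMonoidAlgebra k Q where
  toFun f := AddMonoidAlgebra.ofCoeff (f.coeff.filter (· ∈ S))
  map_add' f g := by simp [Finsupp.filter_add]
  map_smul' c f := by simp [Finsupp.filter_smul]

lemma smul_mon (c : k) (a : Q) : c • mon k a = AddMonoidAlgebra.single a c := by
  simp [mon]

lemma mon_add (a b : Q) : mon k (a + b) = mon k a * mon k b := by
  simp [mon, AddMonoidAlgebra.single_mul_single]

lemma mon_zero : mon k (0 : Q) = 1 := rfl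

lemma mon_nsmul (n : ℕ) (a : Q) : mon k (n • a) = mon k a ^ n := by
  simp [mon, AddMonoidAlgebra.single_pow]

lemma mon_mem_supp {S : Set Q} {a : Q} (h : a ∈ S) : mon k a ∈ supp k S :=
  Submodule.subset_span ⟨a, h, rfl⟩

lemma supp_univ (f : AddMonoidAlgebra k Q) : f ∈ supp k (Set.univ : Set Q) := by
  induction f using AddMonoidAlgebra.induction_linear with
  | zero => exact zero_mem _
  | add f g hf hg => exact add_mem hf hg
  | single a c =>
    rw [← smul_mon]
    exact Submodule.smul_mem _ _ (mon_mem_supp (Set.mem_univ a))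

@[elab_as_elim]
lemma supp_induction {S : Set Q} {motive : (f : AddMonoidAlgebra k Q) → f ∈ supp k S → Prop}
    (hmon : ∀ a (ha : a ∈ S), motive (mon k a) (mon_mem_supp ha)) (hzero : motive 0 (zero_mem _))
    (hadd : ∀ f g hf hg, motive f hf → motive g hg → motive (f + g) (add_mem hf hg))
    (hsmul : ∀ (c : k) f hf, motive f hf → motive (c • f) (Submodule.smul_mem _ c hf))
    {f : AddMonoidAlgebra k Q} (hf : f ∈ supp k S) : motive f hf := by
  refine Submodule.span_induction ?_ hzero hadd hsmul hf
  rintro _ ⟨a, ha, rfl⟩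
  exact hmon a ha

lemma supp_mono {S S' : Set Q} (h : S ⊆ S') {f : AddMonoidAlgebra k Q} (hf : f ∈ supp k S) :
    f ∈ supp k S' :=
  Submodule.span_mono (Set.image_mono h) hf

lemma supp_mul {S S' T : Set Q} (h : ∀ a ∈ S, ∀ b ∈ S', a + b ∈ T)
    {f g : AddMonoidAlgebra k Q} (hf : f ∈ supp k S) (hg : g ∈ supp k S') :
    f * g ∈ supp k T := by
  induction hf using supp_induction with
  | hmon a ha =>
    induction hg using supp_induction with
    | hmon b hb => rw [← mon_add]; exact mon_mem_supp (h a ha b hb)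
    | hzero => simp
    | hadd f g _ _ hf hg => rw [mul_add]; exact add_mem hf hg
    | hsmul c f _ hf => rw [mul_smul_comm]; exact Submodule.smul_mem _ _ hf
  | hzero => simp
  | hadd f g _ _ hf hg => rw [add_mul]; exact add_mem hf hg
  | hsmul c f _ hf => rw [smul_mul_assoc]; exact Submodule.smul_mem _ _ hf

lemma res_mon_mem {S : Set Q} {a : Q} (h : a ∈ S) : res k S (mon k a) = mon k a := by
  ext b
  simp only [res, mon, LinearMap.coe_mk, AddHom.coe_mk, AddMonoidAlgebra.coeff_single]
  rw [Finsupp.filter_single_of_pos]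
  exact h

lemma res_mon_notMem {S : Set Q} {a : Q} (h : a ∉ S) : res k S (mon k a) = 0 := by
  ext b
  simp only [res, mon, LinearMap.coe_mk, AddHom.coe_mk, AddMonoidAlgebra.coeff_single]
  rw [Finsupp.filter_single_of_neg]
  · simp
  · exact h

lemma res_of_supp {S S' : Set Q} (h : S ⊆ S') {f : AddMonoidAlgebra k Q} (hf : f ∈ supp k S) :
    res k S' f = f := by
  induction hf using supp_induction with
  | hmon a ha => exact res_mon_mem (h ha)
  | hzero => simp
  | hadd f g _ _ hf hg => rw [map_add, hf, hg]
  | hsmul c f _ hf => rw [map_smul, hf]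

lemma res_of_supp_disjoint {S S' : Set Q} (h : ∀ a ∈ S, a ∉ S') {f : AddMonoidAlgebra k Q}
    (hf : f ∈ supp k S) : res k S' f = 0 := by
  induction hf using supp_induction with
  | hmon a ha => exact res_mon_notMem (h a ha)
  | hzero => simp
  | hadd f g _ _ hf hg => rw [map_add, hf, hg, add_zero]
  | hsmul c f _ hf => rw [map_smul, hf, smul_zero]

lemma res_mem_supp_inter {S S' : Set Q} {f : AddMonoidAlgebra k Q} (hf : f ∈ supp k S') :
    res k S f ∈ supp k (S' ∩ S) := by
  induction hf using supp_induction with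
  | hmon a ha =>
    by_cases h : a ∈ S
    · rw [res_mon_mem h]; exact mon_mem_supp ⟨ha, h⟩
    · rw [res_mon_notMem h]; exact zero_mem _
  | hzero => simp
  | hadd f g _ _ hf hg => rw [map_add]; exact add_mem hf hg
  | hsmul c f _ hf => rw [map_smul]; exact Submodule.smul_mem _ _ hf

lemma res_mem_supp (S : Set Q) (f : AddMonoidAlgebra k Q) : res k S f ∈ supp k S :=
  supp_mono Set.inter_subset_right (res_mem_supp_inter (supp_univ f))

lemma res_add_res_compl (S : Set Q) (f : AddMonoidAlgebra k Q) :
    res k S f + res k Sᶜ f = f := by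
  induction supp_univ f using supp_induction with
  | hmon a ha =>
    by_cases h : a ∈ S
    · rw [res_mon_mem h, res_mon_notMem (by simpa using h), add_zero]
    · rw [res_mon_notMem h, res_mon_mem (by simpa using h), zero_add]
  | hzero => simp
  | hadd f g _ _ hf hg =>
    rw [map_add, map_add]
    nth_rw 3 [← hf]
    nth_rw 3 [← hg]
    abel
  | hsmul c f _ hf => rw [map_smul, map_smul, ← smul_add, hf]

/-- Restriction of support passes through multiplication by elements of `k[F]` when `S` has the
same preimage `S'` under translation by each exponent in `F`. -/
lemma res_mul {F S S' : Set Q} (h : ∀ a ∈ F, ∀ b, a + b ∈ S ↔ b ∈ S')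
    {x : AddMonoidAlgebra k Q} (hx : x ∈ supp k F) (y : AddMonoidAlgebra k Q) :
    res k S (x * y) = x * res k S' y := by
  induction hx using supp_induction with
  | hmon a ha =>
    induction supp_univ y using supp_induction with
    | hmon b hb =>
      rw [← mon_add]
      by_cases hb : b ∈ S'
      · rw [res_mon_mem hb, res_mon_mem ((h a ha b).2 hb), mon_add]
      · rw [res_mon_notMem hb, res_mon_notMem (fun h' => hb ((h a ha b).1 h')), mul_zero]
    | hzero => simp
    | hadd f g _ _ hf hg => rw [mul_add, map_add, map_add, hf, hg, mul_add]
    | hsmul c f _ hf => rw [mul_smul_comm, map_smul, map_smul, hf, mul_smul_comm]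
  | hzero => simp
  | hadd f g _ _ hf hg => rw [add_mul, map_add, hf, hg, add_mul]
  | hsmul c f _ hf => rw [smul_mul_assoc, map_smul, hf, smul_mul_assoc]

/-- Every element is the finite sum of its components with respect to a function `φ` on
exponents. -/
lemma exists_sum_res {X : Type*} (φ : Q → X) {S : Set Q} {f : AddMonoidAlgebra k Q}
    (hf : f ∈ supp k S) :
    ∃ s : Finset X, (∀ x ∈ s, x ∈ Set.image φ S) ∧ f = ∑ x ∈ s, res k (φ ⁻¹' {x}) f := by
  classical
  suffices h : ∃ s : Finset X, (∀ x ∈ s, x ∈ Set.image φ S) ∧ ∀ t : Finset X, s ⊆ t →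
      f = ∑ x ∈ t, res k (φ ⁻¹' {x}) f by
    obtain ⟨s, hs, h⟩ := h
    exact ⟨s, hs, h s subset_rfl⟩
  induction hf using supp_induction with
  | hmon a ha =>
    refine ⟨{φ a}, by simpa using ⟨a, ha, rfl⟩, fun t ht => ?_⟩
    rw [Finset.sum_eq_single (φ a), res_mon_mem (by simp)]
    · exact fun x _ hx => res_mon_notMem (by simpa using hx.symm)
    · exact fun h => absurd (ht (by simp)) h
  | hzero => exact ⟨∅, by simp, by simp⟩
  | hadd f g _ _ hf hg =>
    obtain ⟨s, hs, hf⟩ := hf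
    obtain ⟨t, ht, hg⟩ := hg
    refine ⟨s ∪ t, fun x hx => ?_, fun u hu => ?_⟩
    · rcases Finset.mem_union.1 hx with h | h
      exacts [hs x h, ht x h]
    · simp only [map_add, Finset.sum_add_distrib]
      rw [← hf u (Finset.union_subset_left hu), ← hg u (Finset.union_subset_right hu)]
  | hsmul c f _ hf =>
    obtain ⟨s, hs, hf⟩ := hf
    refine ⟨s, hs, fun t ht => ?_⟩
    simp only [map_smul, ← Finset.smul_sum]
    rw [← hf t ht]

lemma mem_of_res_mem {X : Type*} (φ : Q → X) {I : Ideal (AddMonoidAlgebra k Q)}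
    {f : AddMonoidAlgebra k Q} (h : ∀ x, res k (φ ⁻¹' {x}) f ∈ I) : f ∈ I := by
  obtain ⟨s, -, hs⟩ := exists_sum_res φ (supp_univ f)
  rw [hs]
  exact sum_mem fun x _ => h x

/-! ### Binomial ideals and their congruences -/

/-- The congruence attached to `I`: the monomials `t^a` and `t^b` agree modulo `I` up to a
nonzero scalar. All exponents of monomials in `I` form a single class. -/
def Rel (I : Ideal (AddMonoidAlgebra k Q)) (a b : Q) : Prop :=
  ∃ c : k, c ≠ 0 ∧ mon k a - c • mon k b ∈ I

lemma smul_mem_ideal (I : Ideal (AddMonoidAlgebra k Q)) (c : k) {f : AddMonoidAlgebra k Q}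
    (h : f ∈ I) : c • f ∈ I :=
  Submodule.smul_of_tower_mem I c h

lemma smul_mem_ideal_iff (I : Ideal (AddMonoidAlgebra k Q)) {c : k} (hc : c ≠ 0)
    {f : AddMonoidAlgebra k Q} : c • f ∈ I ↔ f ∈ I := by
  refine ⟨fun h => ?_, smul_mem_ideal I c⟩
  have := smul_mem_ideal I c⁻¹ h
  rwa [smul_smul, inv_mul_cancel₀ hc, one_smul] at this

section Rel

variable {I : Ideal (AddMonoidAlgebra k Q)} {a b c d : Q}

lemma Rel.refl (a : Q) : Rel I a a := ⟨1, one_ne_zero, by simp⟩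

lemma Rel.symm (h : Rel I a b) : Rel I b a := by
  obtain ⟨c, hc, h⟩ := h
  refine ⟨c⁻¹, inv_ne_zero hc, ?_⟩
  have := smul_mem_ideal I (-c⁻¹) h
  rw [smul_sub, smul_smul, neg_mul, inv_mul_cancel₀ hc] at this
  convert! this using 1
  module

lemma Rel.trans (h : Rel I a b) (h' : Rel I b c) : Rel I a c := by
  obtain ⟨r, hr, h⟩ := h
  obtain ⟨s, hs, h'⟩ := h'
  refine ⟨r * s, mul_ne_zero hr hs, ?_⟩
  convert! add_mem h (smul_mem_ideal I r h') using 1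
  module

lemma Rel.add_left (e : Q) (h : Rel I a b) : Rel I (e + a) (e + b) := by
  obtain ⟨r, hr, h⟩ := h
  refine ⟨r, hr, ?_⟩
  convert! I.mul_mem_left (mon k e) h using 1
  rw [mon_add, mon_add, mul_sub, mul_smul_comm]

lemma Rel.add (h : Rel I a b) (h' : Rel I c d) : Rel I (a + c) (b + d) := by
  refine (h'.add_left a).trans ?_
  rw [add_comm a, add_comm b]
  exact h.add_left d

lemma Rel.nsmul (n : ℕ) (h : Rel I a b) : Rel I (n • a) (n • b) := by
  induction n with
  | zero => simpa using Rel.refl _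
  | succ n ih => rw [succ_nsmul, succ_nsmul]; exact ih.add h

lemma Rel.mem_iff (h : Rel I a b) : mon k a ∈ I ↔ mon k b ∈ I := by
  obtain ⟨c, hc, h⟩ := h
  rw [← smul_mem_ideal_iff I hc (f := mon k b)]
  exact ⟨fun h' => by simpa using sub_mem h' h, fun h' => by simpa using add_mem h h'⟩

lemma Rel.of_mem (ha : mon k a ∈ I) (hb : mon k b ∈ I) : Rel I a b :=
  ⟨1, one_ne_zero, by simpa using sub_mem ha hb⟩

end Rel

/-- The congruence attached to `I`, as a setoid. -/
def relSetoid (I : Ideal (AddMonoidAlgebra k Q)) : Setoid Q where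
  r := Rel I
  iseqv := ⟨Rel.refl, Rel.symm, Rel.trans⟩

/-- A combination of monomials all equivalent to `t^a` is a multiple of `t^a` modulo `I`. -/
lemma exists_smul_of_supp {I : Ideal (AddMonoidAlgebra k Q)} {S : Set Q} {a : Q}
    (h : ∀ b ∈ S, Rel I b a) {f : AddMonoidAlgebra k Q} (hf : f ∈ supp k S) :
    ∃ c : k, f - c • mon k a ∈ I := by
  induction hf using supp_induction with
  | hmon b hb =>
    obtain ⟨c, -, hc⟩ := h b hb
    exact ⟨c, hc⟩
  | hzero => exact ⟨0, by simp⟩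
  | hadd f g _ _ hf hg =>
    obtain ⟨r, hr⟩ := hf
    obtain ⟨s, hs⟩ := hg
    refine ⟨r + s, ?_⟩
    convert! add_mem hr hs using 1
    module
  | hsmul c f _ hf =>
    obtain ⟨r, hr⟩ := hf
    refine ⟨c * r, ?_⟩
    convert! smul_mem_ideal I c hr using 1
    module

/-- A binomial ideal is stable under restriction to any set of exponents that is a union of
classes of its congruence (the monomials lying in `I` need not be respected). -/
lemma res_mem {I : Ideal (AddMonoidAlgebra k Q)} (hI : IsBinomialMonoidIdeal k Q I) {S : Set Q}
    (hS : ∀ a b, Rel I a b → mon k a ∉ I → (a ∈ S ↔ b ∈ S)) {f : AddMonoidAlgebra k Q}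
    (hf : f ∈ I) : res k S f ∈ I := by
  have hmon : ∀ a, mon k a ∈ I → res k S (mon k a) ∈ I := by
    intro a ha
    by_cases h : a ∈ S
    · rwa [res_mon_mem h]
    · rw [res_mon_notMem h]; exact zero_mem _
  have key : ∀ a b (c : k), mon k a - c • mon k b ∈ I → res k S (mon k a - c • mon k b) ∈ I := by
    intro a b c h
    rw [map_sub, map_smul]
    by_cases ha : mon k a ∈ I
    · refine sub_mem (hmon a ha) ?_
      by_cases hc : c = 0
      · simp [hc]
      · refine smul_mem_ideal I c (hmon b ?_)
        rw [← smul_mem_ideal_iff I hc]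
        simpa using sub_mem ha h
    · have hc : c ≠ 0 := by
        rintro rfl
        exact ha (by simpa using h)
      have hab := hS a b ⟨c, hc, h⟩ ha
      by_cases has : a ∈ S
      · rwa [res_mon_mem has, res_mon_mem (hab.1 has)]
      · rw [res_mon_notMem has, res_mon_notMem (fun h => has (hab.2 h))]
        simp
  obtain ⟨B, hIB, hB⟩ := hI
  suffices h : ∀ x ∈ Ideal.span B, ∀ r, res k S (r * x) ∈ I by
    simpa using h f (hIB ▸ hf) 1
  intro x hx
  induction hx using Submodule.span_induction with
  | mem x hx =>
    intro r
    have hxI : x ∈ I := hIB ▸ Ideal.subset_span hx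
    obtain ⟨a, b, c, rfl⟩ := hB x hx
    rw [← smul_mon, ← smul_mon, one_smul] at hxI ⊢
    induction supp_univ r using supp_induction with
    | hmon e _ =>
      have h := I.mul_mem_left (mon k e) hxI
      rw [mul_sub, mul_smul_comm, ← mon_add, ← mon_add] at h ⊢
      exact key _ _ _ h
    | hzero => simp
    | hadd f g _ _ hf hg => rw [add_mul, map_add]; exact add_mem hf hg
    | hsmul c f _ hf => rw [smul_mul_assoc, map_smul]; exact smul_mem_ideal I _ hf
  | zero => simp
  | add x y _ _ h1 h2 =>
    intro r
    rw [mul_add, map_add]; exact add_mem (h1 r) (h2 r)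
  | smul r x _ h =>
    intro r'
    rw [smul_eq_mul, ← mul_assoc]
    exact h _

/-- Conversely, an ideal stable under restriction to the classes of its own congruence is
binomial. -/
lemma isBinomial_of_res {J : Ideal (AddMonoidAlgebra k Q)}
    (hJ : ∀ f ∈ J, ∀ a, res k {b | Rel J b a} f ∈ J) : IsBinomialMonoidIdeal k Q J := by
  let B : Set (AddMonoidAlgebra k Q) :=
    {f | f ∈ J ∧ ∃ (a b : Q) (c : k), f = mon k a - c • mon k b}
  have hBJ : Ideal.span B ≤ J := Ideal.span_le.2 fun f hf => hf.1
  refine ⟨B, le_antisymm (fun f hf => ?_) hBJ, ?_⟩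
  · refine mem_of_res_mem (Quotient.mk (relSetoid J)) fun x => ?_
    obtain ⟨a, rfl⟩ := Quotient.exists_rep x
    have hset : Quotient.mk (relSetoid J) ⁻¹' {Quotient.mk (relSetoid J) a} = {b | Rel J b a} := by
      ext b
      exact Quotient.eq (r := relSetoid J)
    change res k (Quotient.mk (relSetoid J) ⁻¹' {Quotient.mk (relSetoid J) a}) f ∈ _
    rw [hset]
    obtain ⟨c, hc⟩ := exists_smul_of_supp (I := Ideal.span B) (a := a)
      (fun b hb => by
        obtain ⟨c, hc, h⟩ := hb
        exact ⟨c, hc, Ideal.subset_span ⟨h, b, a, c, rfl⟩⟩) (res_mem_supp {b | Rel J b a} f)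
    have hcJ : c • mon k a ∈ J := by simpa using sub_mem (hJ f hf a) (hBJ hc)
    have hcB : c • mon k a ∈ Ideal.span B := by
      by_cases h0 : c = 0
      · simp [h0]
      · refine smul_mem_ideal _ c (Ideal.subset_span ⟨(smul_mem_ideal_iff J h0).1 hcJ, a, a, 0, ?_⟩)
        simp
    simpa using add_mem hc hcB
  · rintro f ⟨-, a, b, c, rfl⟩
    exact ⟨a, b, c, by rw [← smul_mon, ← smul_mon, one_smul]⟩

lemma isBinomial_sup {I : Ideal (AddMonoidAlgebra k Q)} (hI : IsBinomialMonoidIdeal k Q I)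
    (a b : Q) (c : k) :
    IsBinomialMonoidIdeal k Q (I ⊔ Ideal.span {mon k a - c • mon k b}) := by
  obtain ⟨B, rfl, hB⟩ := hI
  refine ⟨B ∪ {mon k a - c • mon k b}, (Ideal.span_union _ _).symm, ?_⟩
  rintro f (hf | rfl)
  · exact hB f hf
  · exact ⟨a, b, c, by rw [← smul_mon, ← smul_mon, one_smul]⟩

/-- The colon ideal `(I : y)`. -/
def colon (I : Ideal (AddMonoidAlgebra k Q)) (y : AddMonoidAlgebra k Q) :
    Ideal (AddMonoidAlgebra k Q) where
  carrier := {f | y * f ∈ I}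
  add_mem' {f g} hf hg := by
    rw [Set.mem_ofPred_eq, mul_add]
    exact add_mem hf hg
  zero_mem' := by simp
  smul_mem' r f hf := by
    rw [Set.mem_ofPred_eq, smul_eq_mul, mul_left_comm]
    exact I.mul_mem_left r hf

lemma mem_colon {I : Ideal (AddMonoidAlgebra k Q)} {y f : AddMonoidAlgebra k Q} :
    f ∈ colon I y ↔ y * f ∈ I := Iff.rfl

lemma rel_colon {I : Ideal (AddMonoidAlgebra k Q)} {q a b : Q} :
    Rel (colon I (mon k q)) a b ↔ Rel I (q + a) (q + b) := by
  simp only [Rel, mem_colon, mul_sub, mul_smul_comm, mon_add]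

/-- Translation by `q` carries the congruence of `(I : t^q)` to that of `I`, so `res_mem` for `I`
gives the criterion `isBinomial_of_res` for the colon ideal. -/
lemma isBinomial_colon {I : Ideal (AddMonoidAlgebra k Q)} (hI : IsBinomialMonoidIdeal k Q I)
    (q : Q) : IsBinomialMonoidIdeal k Q (colon I (mon k q)) := by
  refine isBinomial_of_res fun f hf a => ?_
  have h : res k {b | Rel I b (q + a)} (mon k q * f) ∈ I :=
    res_mem hI (fun b c h _ => ⟨fun h' => h.symm.trans h', fun h' => h.trans h'⟩) hf
  rw [res_mul (F := {q}) (S' := {b | Rel (colon I (mon k q)) b a})] at h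
  · exact h
  · rintro _ rfl b
    exact rel_colon.symm
  · exact mon_mem_supp rfl


/-! ### Binomially irreducible ideals are cellular -/

/-- `I` is not a finite intersection of strictly larger binomial ideals. Taking the empty
family shows that `I` is proper. -/
def BinIrred (I : Ideal (AddMonoidAlgebra k Q)) : Prop :=
  ∀ s : Finset (Ideal (AddMonoidAlgebra k Q)),
    (∀ J ∈ s, I < J ∧ IsBinomialMonoidIdeal k Q J) → ∃ x, x ∉ I ∧ ∀ J ∈ s, x ∈ J

lemma BinIrred.pair {I J J' : Ideal (AddMonoidAlgebra k Q)} (h : BinIrred I)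
    (hJ : I < J) (hJb : IsBinomialMonoidIdeal k Q J)
    (hJ' : I < J') (hJb' : IsBinomialMonoidIdeal k Q J') : ∃ x, x ∉ I ∧ x ∈ J ∧ x ∈ J' := by
  classical
  obtain ⟨x, hx, h⟩ := h {J, J'} (by simp [hJ, hJb, hJ', hJb'])
  exact ⟨x, hx, by simpa using h⟩

lemma lt_sup_span {I : Ideal (AddMonoidAlgebra k Q)} {x : AddMonoidAlgebra k Q} (h : x ∉ I) :
    I < I ⊔ Ideal.span {x} :=
  left_lt_sup.2 fun h' => h (h' (Ideal.mem_span_singleton_self x))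

/-- The exponents `q` for which `t^q` is a nonzerodivisor modulo `I`. -/
def regular (I : Ideal (AddMonoidAlgebra k Q)) : AddSubmonoid Q where
  carrier := {q | ∀ f, mon k q * f ∈ I → f ∈ I}
  zero_mem' f hf := by simpa [mon_zero] using hf
  add_mem' {a b} ha hb f hf := by
    rw [mon_add, mul_assoc] at hf
    exact hb f (ha _ hf)

section Irred

variable [IsNoetherianRing (AddMonoidAlgebra k Q)] {I : Ideal (AddMonoidAlgebra k Q)}

/-- Every monomial is regular or nilpotent modulo `I`: with `m = t^(Nq)` for `N` so large that the
chain `(I : t^(nq))` is stationary, `I` is the intersection of `I + (m)` and `(I : m)`. -/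
lemma cellular (hI : IsBinomialMonoidIdeal k Q I) (hirr : BinIrred I) (q : Q)
    (hq : q ∉ regular I) : mon k q ∈ I.radical := by
  by_contra hrad
  let φ : ℕ →o Ideal (AddMonoidAlgebra k Q) :=
    { toFun := fun n => colon I (mon k (n • q))
      monotone' := by
        intro m n hmn f hf
        obtain ⟨d, rfl⟩ := Nat.exists_eq_add_of_le' hmn
        rw [mem_colon, add_nsmul, mon_add, mul_assoc]
        exact I.mul_mem_left _ hf }
  obtain ⟨n, hn⟩ := monotone_stabilizes_iff_noetherian.2 ‹_› φ
  have hstab : ∀ f, mon k ((n + 1) • q) * (mon k ((n + 1) • q) * f) ∈ I →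
      mon k ((n + 1) • q) * f ∈ I := by
    intro f hf
    rw [← mul_assoc, ← mon_add, ← add_nsmul] at hf
    have h : f ∈ φ (n + 1 + (n + 1)) := hf
    rw [← hn _ (by omega), hn (n + 1) (by omega)] at h
    exact h
  obtain ⟨x, hxI, hx1, hx2⟩ := hirr.pair
    (J := I ⊔ Ideal.span {mon k ((n + 1) • q) - (0 : k) • mon k 0})
    (J' := colon I (mon k ((n + 1) • q)))
    (lt_sup_span (by
      rw [zero_smul, sub_zero, mon_nsmul]
      exact fun h => hrad ⟨_, h⟩)) (isBinomial_sup hI _ _ _)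
    (by
      refine lt_of_le_of_ne (fun f hf => I.mul_mem_left _ hf) fun h => hq fun f hf => ?_
      rw [h, mem_colon, succ_nsmul, mon_add, mul_assoc]
      exact I.mul_mem_left _ hf) (isBinomial_colon hI _)
  obtain ⟨i, hi, j, hj, rfl⟩ := Submodule.mem_sup.1 hx1
  obtain ⟨g, rfl⟩ := Ideal.mem_span_singleton'.1 hj
  rw [zero_smul, sub_zero, mul_comm] at hx2 hxI
  rw [mem_colon, mul_add] at hx2
  exact hxI (add_mem hi (hstab g ((add_mem_cancel_left (I.mul_mem_left _ hi)).1 hx2)))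

/-- A monomial `t^a ∉ I` has a monomial multiple outside `I` that is killed by all nilpotent
monomials: take one whose colon ideal is maximal. -/
lemma exists_socle {a : Q} (ha : mon k a ∉ I) :
    ∃ q, mon k (a + q) ∉ I ∧ ∀ n, mon k n ∈ I.radical → mon k (n + (a + q)) ∈ I := by
  obtain ⟨_, ⟨q, hq, rfl⟩, hmax⟩ := set_has_maximal_iff_noetherian.2
    ‹IsNoetherianRing (AddMonoidAlgebra k Q)›
    {J | ∃ q, mon k (a + q) ∉ I ∧ colon I (mon k (a + q)) = J} ⟨_, 0, by simpa using ha, rfl⟩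
  refine ⟨q, hq, fun n ⟨e, he⟩ => ?_⟩
  by_contra hn
  have hle : ∀ f, mon k n * (mon k (a + q) * f) ∈ I → mon k (a + q) * f ∈ I := by
    intro f hf
    have h := hmax (colon I (mon k (a + (n + q)))) ⟨n + q, by rwa [add_left_comm], rfl⟩
    by_contra hfI
    refine h (lt_of_le_of_ne (fun g hg => ?_) fun h' => hfI ?_)
    · rw [mem_colon, add_left_comm, mon_add, mul_assoc]
      exact I.mul_mem_left _ hg
    · rw [← mem_colon, h', mem_colon, add_left_comm, mon_add, mul_assoc]
      exact hf
  have hpow : ∀ e : ℕ, mon k n ^ e * mon k (a + q) ∈ I → mon k (a + q) ∈ I := by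
    intro e
    induction e with
    | zero => simp
    | succ e ih =>
      intro h
      refine ih ?_
      rw [mul_comm]
      refine hle _ ?_
      convert! h using 1
      ring
  exact hq (hpow e (I.mul_mem_right _ he))

/-- The group of regular monomials acts with trivial stabilizers on socle monomials: otherwise
`I` would be the intersection of `I + (t^s)` and `I + (t^f - c t^f')`. -/
lemma stab_socle (hI : IsBinomialMonoidIdeal k Q I) (hirr : BinIrred I) {s f f' : Q} {c : k}
    (hs : mon k s ∉ I) (hsoc : ∀ n, mon k n ∈ I.radical → mon k (n + s) ∈ I)
    (h : mon k s * (mon k f - c • mon k f') ∈ I) (hf : f ∈ regular I) (hf' : f' ∈ regular I) :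
    mon k f - c • mon k f' ∈ I := by
  by_contra hcon
  obtain ⟨x, hxI, hx1, hx2⟩ := hirr.pair (lt_sup_span hcon) (isBinomial_sup hI _ _ _)
    (J' := I ⊔ Ideal.span {mon k s - (0 : k) • mon k 0})
    (lt_sup_span (by simpa using hs)) (isBinomial_sup hI _ _ _)
  obtain ⟨i, hi, j, hj, rfl⟩ := Submodule.mem_sup.1 hx1
  obtain ⟨g, rfl⟩ := Ideal.mem_span_singleton'.1 hj
  obtain ⟨i', hi', j', hj', hx⟩ := Submodule.mem_sup.1 hx2
  obtain ⟨h', rfl⟩ := Ideal.mem_span_singleton'.1 hj'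
  rw [zero_smul, sub_zero] at hx
  set u := mon k f - c • mon k f' with hu
  set z := res k (regular I : Set Q) h' * mon k s with hz
  -- the orbit of `s` under regular translations
  let S : Set Q := {a | ∃ f₁ ∈ regular I, ∃ f₂ ∈ regular I, Rel I (f₁ + a) (f₂ + s)}
  have hz' : res k (regular I : Set Q)ᶜ h' * mon k s ∈ I := by
    have hsupp := res_mem_supp (regular I : Set Q)ᶜ h'
    generalize res k (regular I : Set Q)ᶜ h' = v at hsupp
    induction hsupp using supp_induction with
    | hmon n hn => rw [← mon_add]; exact hsoc n (cellular hI hirr n hn)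
    | hzero => simp
    | hadd f g _ _ hf hg => rw [add_mul]; exact add_mem hf hg
    | hsmul c f _ hf => rw [smul_mul_assoc]; exact smul_mem_ideal I _ hf
  have hd : z - g * u ∈ I := by
    have h1 : h' * mon k s = z + res k (regular I : Set Q)ᶜ h' * mon k s := by
      rw [hz, ← add_mul, res_add_res_compl]
    have h2 : z - g * u = i - i' - res k (regular I : Set Q)ᶜ h' * mon k s := by
      rw [h1] at hx
      linear_combination hx
    rw [h2]
    exact sub_mem (sub_mem hi hi') hz'
  have hzS : res k S z = z := by
    refine res_of_supp (S := S) subset_rfl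
      (supp_mul (S' := {s}) ?_ (res_mem_supp (regular I : Set Q) h') (mon_mem_supp rfl))
    rintro a ha _ rfl
    exact ⟨0, zero_mem _, a, ha, by simpa using Rel.refl _⟩
  have hguS : res k S (g * u) = u * res k S g := by
    rw [mul_comm]
    refine res_mul (F := regular I) (fun a ha b => ⟨?_, ?_⟩) (sub_mem (mon_mem_supp hf)
      (Submodule.smul_mem _ _ (mon_mem_supp hf'))) g
    · rintro ⟨f₁, h₁, f₂, h₂, hr⟩
      exact ⟨f₁ + a, add_mem h₁ ha, f₂, h₂, by rwa [add_assoc]⟩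
    · rintro ⟨f₁, h₁, f₂, h₂, hr⟩
      refine ⟨f₁, h₁, a + f₂, add_mem ha h₂, ?_⟩
      rw [add_left_comm, add_assoc]
      exact hr.add_left a
  have hguI : u * res k S g ∈ I := by
    have hsupp := res_mem_supp S g
    generalize res k S g = v at hsupp
    induction hsupp using supp_induction with
    | hmon b hb =>
      obtain ⟨f₁, h₁, f₂, h₂, r, hr, hr'⟩ := hb
      refine h₁ _ ?_
      have h3 : mon k f₁ * (u * mon k b) =
          u * (mon k (f₁ + b) - r • mon k (f₂ + s)) + r • (mon k f₂ * (mon k s * u)) := by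
        rw [mon_add, mon_add, mul_sub, mul_smul_comm]
        have : u * (mon k f₂ * mon k s) = mon k f₂ * (mon k s * u) := by ring
        rw [this]
        ring
      rw [h3]
      exact add_mem (I.mul_mem_left _ hr') (smul_mem_ideal I r (I.mul_mem_left _ h))
    | hzero => simp
    | hadd f g _ _ hf hg => rw [mul_add]; exact add_mem hf hg
    | hsmul c f _ hf => rw [mul_smul_comm]; exact smul_mem_ideal I _ hf
  have hdS : res k S (z - g * u) ∈ I := by
    refine res_mem hI (fun a b hab _ => ?_) hd
    have key : ∀ a b, Rel I a b → a ∈ S → b ∈ S := by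
      rintro a b hab ⟨f₁, h₁, f₂, h₂, hr⟩
      exact ⟨f₁, h₁, f₂, h₂, (hab.symm.add_left f₁).trans hr⟩
    exact ⟨key a b hab, key b a hab.symm⟩
  rw [map_sub, hzS, hguS] at hdS
  have hzI : z ∈ I := by simpa using add_mem hdS hguI
  exact hxI (add_mem hi (by simpa using sub_mem hzI hd))

/-- Regular monomials act with trivial stabilizers on all monomials outside `I`: multiply into the
socle and use `stab_socle`. -/
lemma stab (hI : IsBinomialMonoidIdeal k Q I) (hirr : BinIrred I) {a f f' : Q}
    (ha : mon k a ∉ I) (hf : f ∈ regular I) (hf' : f' ∈ regular I)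
    (h : Rel I (a + f) (a + f')) : Rel I f f' := by
  obtain ⟨q, hq, hsoc⟩ := exists_socle ha
  obtain ⟨c, hc, h⟩ := h
  refine ⟨c, hc, stab_socle hI hirr hq hsoc ?_ hf hf'⟩
  convert! I.mul_mem_left (mon k q) h using 1
  rw [mon_add, mon_add, mon_add, mul_sub, mul_sub, mul_smul_comm, mul_smul_comm]
  congr 1
  · ring
  · congr 1
    ring

/-- `(I : t^a) ∩ k[F] = I ∩ k[F]` for the monoid `F` of regular exponents and `t^a ∉ I`. -/
lemma mem_of_mon_mul_mem (hI : IsBinomialMonoidIdeal k Q I) (hirr : BinIrred I) {a : Q}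
    (ha : mon k a ∉ I) {u : AddMonoidAlgebra k Q} (hu : u ∈ supp k (regular I : Set Q))
    (h : mon k a * u ∈ I) : u ∈ I := by
  refine mem_of_res_mem (fun b => Quotient.mk (relSetoid I) (a + b)) fun x => ?_
  set S : Set Q := (fun b => Quotient.mk (relSetoid I) (a + b)) ⁻¹' {x} with hS
  have hv : mon k a * res k S u ∈ I := by
    rw [← res_mul (F := {a}) (S := Quotient.mk (relSetoid I) ⁻¹' {x}) _ (mon_mem_supp rfl)]
    · refine res_mem hI (fun b c hbc _ => ?_) h
      have : Quotient.mk (relSetoid I) b = Quotient.mk (relSetoid I) c := Quotient.sound hbc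
      simp [this]
    · rintro _ rfl b
      rfl
  have hsupp := res_mem_supp_inter (S := S) hu
  rcases (↑(regular I) ∩ S : Set Q).eq_empty_or_nonempty with hE | ⟨b, hbF, hbS⟩
  · rw [hE] at hsupp
    have : res k S u = 0 := by simpa [supp] using hsupp
    rw [this]
    exact zero_mem _
  · obtain ⟨c, hc⟩ := exists_smul_of_supp (I := I) (a := b) (fun b' hb' =>
      stab hI hirr ha hb'.1 hbF (Quotient.exact (s := relSetoid I) (hb'.2.trans hbS.symm))) hsupp
    have h0 : c = 0 := by
      by_contra h0
      have h1 := sub_mem hv (I.mul_mem_left (mon k a) hc)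
      rw [← mul_sub, sub_sub_cancel, mul_smul_comm, smul_mem_ideal_iff I h0, mul_comm] at h1
      exact ha (hbF _ h1)
    simpa [h0] using hc

/-- Two exponents are equivalent if their monomials generate the same submodule of `k[Q]/I` after
inverting the regular monomials. -/
def orb (I : Ideal (AddMonoidAlgebra k Q)) : Setoid Q where
  r a b := ∃ f₁ ∈ regular I, ∃ f₂ ∈ regular I, Rel I (f₁ + a) (f₂ + b)
  iseqv := by
    refine ⟨fun a => ⟨0, zero_mem _, 0, zero_mem _, Rel.refl _⟩, ?_, ?_⟩
    · rintro a b ⟨f₁, h₁, f₂, h₂, h⟩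
      exact ⟨f₂, h₂, f₁, h₁, h.symm⟩
    · rintro a b c ⟨f₁, h₁, f₂, h₂, h⟩ ⟨f₃, h₃, f₄, h₄, h'⟩
      refine ⟨f₃ + f₁, add_mem h₃ h₁, f₂ + f₄, add_mem h₂ h₄, ?_⟩
      rw [add_assoc, add_assoc]
      refine (h.add_left f₃).trans ?_
      rw [add_left_comm]
      exact h'.add_left f₂

/-- An element of `k[F]` that is a nonzerodivisor on `k[F]/(I ∩ k[F])` is one on `k[Q]/I`,
because each orbit of `F` spans, up to localization, a free module of rank one. -/
lemma nzd_extend (hI : IsBinomialMonoidIdeal k Q I) (hirr : BinIrred I)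
    {x : AddMonoidAlgebra k Q} (hx : x ∈ supp k (regular I : Set Q))
    (hreg : ∀ h ∈ supp k (regular I : Set Q), x * h ∈ I → h ∈ I)
    {y : AddMonoidAlgebra k Q} (hy : x * y ∈ I) : y ∈ I := by
  refine mem_of_res_mem (Quotient.mk (orb I)) fun o => ?_
  obtain ⟨a, rfl⟩ := Quotient.exists_rep o
  set S : Set Q := Quotient.mk (orb I) ⁻¹' {Quotient.mk (orb I) a} with hS
  change res k S y ∈ I
  have hSmem : ∀ b ∈ S, (orb I).r b a := fun b hb => Quotient.exact (s := orb I) hb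
  have hxy : x * res k S y ∈ I := by
    have hres : res k S (x * y) = x * res k S y := by
      refine res_mul (F := (regular I : Set Q)) (fun f hf b => ?_) hx y
      have : Quotient.mk (orb I) (f + b) = Quotient.mk (orb I) b :=
        Quotient.sound ⟨0, zero_mem _, f, hf, by simpa using Rel.refl _⟩
      rw [hS, Set.mem_preimage, Set.mem_preimage, this]
    rw [← hres]
    refine res_mem hI (fun b c hbc _ => ?_) hy
    have : Quotient.mk (orb I) b = Quotient.mk (orb I) c :=
      Quotient.sound ⟨0, zero_mem _, 0, zero_mem _, hbc.add_left 0⟩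
    rw [hS, Set.mem_preimage, Set.mem_preimage, this]
  have hfrac : ∃ f ∈ regular I, ∃ h ∈ supp k (regular I : Set Q),
      mon k f * res k S y - mon k a * h ∈ I := by
    have hsupp := res_mem_supp S y
    generalize res k S y = v at hsupp
    induction hsupp using supp_induction with
    | hmon b hb =>
      obtain ⟨f₁, h₁, f₂, h₂, c, -, h⟩ := hSmem b hb
      refine ⟨f₁, h₁, c • mon k f₂, Submodule.smul_mem _ _ (mon_mem_supp h₂), ?_⟩
      rw [mul_smul_comm, ← mon_add, ← mon_add, add_comm a]
      exact h
    | hzero => exact ⟨0, zero_mem _, 0, zero_mem _, by simp⟩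
    | hadd u v _ _ hu hv =>
      obtain ⟨f, hf, h, hh, hu⟩ := hu
      obtain ⟨f', hf', h', hh', hv⟩ := hv
      refine ⟨f + f', add_mem hf hf', mon k f' * h + mon k f * h',
        add_mem (supp_mul (fun _ ha _ hb => add_mem ha hb) (mon_mem_supp hf') hh)
          (supp_mul (fun _ ha _ hb => add_mem ha hb) (mon_mem_supp hf) hh'), ?_⟩
      convert! add_mem (I.mul_mem_left (mon k f') hu) (I.mul_mem_left (mon k f) hv) using 1
      rw [mon_add]
      ring
    | hsmul c u _ hu =>
      obtain ⟨f, hf, h, hh, hu⟩ := hu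
      refine ⟨f, hf, c • h, Submodule.smul_mem _ _ hh, ?_⟩
      rw [mul_smul_comm, mul_smul_comm, ← smul_sub]
      exact smul_mem_ideal I c hu
  obtain ⟨f, hf, h, hh, hfh⟩ := hfrac
  have hah : mon k a * h ∈ I := by
    by_cases ha : mon k a ∈ I
    · exact I.mul_mem_right _ ha
    · refine I.mul_mem_left _ (hreg h hh (mem_of_mon_mul_mem hI hirr ha
        (supp_mul (fun _ ha _ hb => add_mem ha hb) hx hh) ?_))
      have h1 := sub_mem (I.mul_mem_left (mon k f) hxy) (I.mul_mem_left x hfh)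
      convert! h1 using 1
      ring
  exact hf _ (by simpa using add_mem hfh hah)

end Irred

/-! ### Prime-to-characteristic torsion -/

/-- The factorization of `v^n - c w^n` into distinct factors, with `n` prime to the
characteristic: homogenize that of `X^n - c`. -/
lemma exists_prod_eq_pow_sub [IsAlgClosed k] {n : ℕ} (hn : (n : k) ≠ 0) {c : k} (hc : c ≠ 0) :
    ∃ s : Finset k, ∀ v w : AddMonoidAlgebra k Q,
      ∏ r ∈ s, (v - r • w) = v ^ n - c • w ^ n := by
  classical
  open Polynomial in
  let p : k[X] := X ^ n - C c
  have hn0 : n ≠ 0 := by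
    rintro rfl
    simp at hn
  have hp : ∏ r ∈ p.roots.toFinset, (Polynomial.X - Polynomial.C r) = p := by
    have hnodup : p.roots.Nodup :=
      Polynomial.nodup_roots (Polynomial.separable_X_pow_sub_C c hn hc)
    have h := (IsAlgClosed.splits p).eq_prod_roots_of_monic (Polynomial.monic_X_pow_sub_C c hn0)
    conv_rhs => rw [h]
    rw [Finset.prod, Multiset.toFinset_val, hnodup.dedup]
  have hdeg : p.roots.toFinset.card = n := by
    have h := congrArg Polynomial.natDegree hp
    rwa [Polynomial.natDegree_prod_of_monic _ _ fun r _ => Polynomial.monic_X_sub_C r,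
      Finset.sum_congr rfl fun r _ => Polynomial.natDegree_X_sub_C r, Finset.sum_const,
      smul_eq_mul, mul_one, Polynomial.natDegree_X_pow_sub_C] at h
  refine ⟨p.roots.toFinset, fun v w => ?_⟩
  have hom := Polynomial.homogenize_finsetProd (s := p.roots.toFinset)
    (p := fun r => Polynomial.X - Polynomial.C r) (n := fun _ => 1)
    (fun r _ => (Polynomial.natDegree_X_sub_C r).le)
  rw [hp, Finset.sum_const, smul_eq_mul, mul_one, hdeg] at hom
  have h := congrArg (MvPolynomial.aeval ![v, w]) hom
  simp only [p, Polynomial.homogenize_sub, Polynomial.homogenize_X_pow le_rfl,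
    Polynomial.homogenize_C, Polynomial.homogenize_X one_ne_zero, map_prod, map_sub, map_mul,
    map_pow, MvPolynomial.aeval_X, MvPolynomial.aeval_C, Matrix.cons_val_zero,
    Matrix.cons_val_one, Nat.sub_self, pow_zero, pow_one, mul_one, ← Algebra.smul_def] at h
  exact h.symm

/-- Modulo `v - r₀ w`, each factor `v - r w` with `r ≠ r₀` is a nonzero multiple of `w`. -/
lemma prod_eq_smul_add (v w : AddMonoidAlgebra k Q) (r₀ : k) (s : Finset k) (h : r₀ ∉ s) :
    ∃ c : k, c ≠ 0 ∧ ∃ d, ∏ r ∈ s, (v - r • w) = c • w ^ s.card + d * (v - r₀ • w) := by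
  classical
  induction s using Finset.induction_on with
  | empty => exact ⟨1, one_ne_zero, 0, by simp⟩
  | insert r s hr ih =>
    rw [Finset.mem_insert, not_or] at h
    obtain ⟨c, hc, d, hd⟩ := ih h.2
    refine ⟨(r₀ - r) * c, mul_ne_zero (sub_ne_zero.2 h.1) hc,
      c • w ^ s.card + (v - r • w) * d, ?_⟩
    rw [Finset.prod_insert hr, hd, Finset.card_insert_of_notMem hr]
    simp only [Algebra.smul_def, map_mul, map_sub]
    ring

/-- The ideals `I + (v - r w)` for distinct `r` become pairwise coprime once `w` is inverted. -/
lemma exists_pow_mul_mem (I : Ideal (AddMonoidAlgebra k Q)) (v w x : AddMonoidAlgebra k Q)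
    (s : Finset k) (h : ∀ r ∈ s, x ∈ I ⊔ Ideal.span {v - r • w}) :
    ∃ N : ℕ, w ^ N * x ∈ I ⊔ Ideal.span {∏ r ∈ s, (v - r • w)} := by
  classical
  induction s using Finset.induction_on with
  | empty => exact ⟨0, by simp⟩
  | insert r₀ s hr ih =>
    obtain ⟨N, hN⟩ := ih fun r hr => h r (Finset.mem_insert_of_mem hr)
    obtain ⟨c, hc, d, hd⟩ := prod_eq_smul_add v w r₀ s hr
    obtain ⟨i, hi, j, hj, hij⟩ := Submodule.mem_sup.1 hN
    obtain ⟨g, rfl⟩ := Ideal.mem_span_singleton'.1 hj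
    set J := I ⊔ Ideal.span {v - r₀ • w} with hJ
    have hx : w ^ N * x ∈ J := J.mul_mem_left _ (h r₀ (Finset.mem_insert_self _ _))
    have hu : v - r₀ • w ∈ J := le_sup_right (a := I) (Ideal.mem_span_singleton_self _)
    have hg : g * w ^ s.card ∈ J := by
      rw [← smul_mem_ideal_iff J hc]
      have h1 : c • (g * w ^ s.card) = w ^ N * x - i - g * d * (v - r₀ • w) := by
        rw [← hij, hd, ← mul_smul_comm]
        ring
      rw [h1]
      exact sub_mem (sub_mem hx (le_sup_left (a := I) hi)) (J.mul_mem_left _ hu)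
    obtain ⟨i', hi', j', hj', hij'⟩ := Submodule.mem_sup.1 hg
    obtain ⟨g', rfl⟩ := Ideal.mem_span_singleton'.1 hj'
    refine ⟨N + s.card, ?_⟩
    rw [Finset.prod_insert hr]
    have h2 : w ^ (N + s.card) * x = (w ^ s.card * i + i' * ∏ r ∈ s, (v - r • w)) +
        g' * ((v - r₀ • w) * ∏ r ∈ s, (v - r • w)) := by
      rw [pow_add, mul_right_comm, ← hij]
      linear_combination (-∏ r ∈ s, (v - r • w)) * hij'
    rw [h2]
    exact Submodule.add_mem_sup (add_mem (I.mul_mem_left _ hi) (I.mul_mem_right _ hi'))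
      (Ideal.mem_span_singleton'.2 ⟨g', rfl⟩)

lemma BinIrred.one_notMem {I : Ideal (AddMonoidAlgebra k Q)} (hirr : BinIrred I) : 1 ∉ I := by
  obtain ⟨x, hx, -⟩ := hirr ∅ (by simp)
  exact fun h => hx ((Ideal.eq_top_iff_one I).2 h ▸ Submodule.mem_top)

lemma BinIrred.mon_notMem {I : Ideal (AddMonoidAlgebra k Q)} (hirr : BinIrred I) {a : Q}
    (ha : a ∈ regular I) : mon k a ∉ I :=
  fun h => hirr.one_notMem (ha 1 (by rwa [mul_one]))

/-- If `t^(n a) - c t^(n b) ∈ I` with `n` prime to the characteristic, then `I` is the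
intersection of the ideals `I + (t^a - r t^b)` over the roots `r` of `X^n - c`. -/
lemma rel_of_nsmul [IsAlgClosed k] {I : Ideal (AddMonoidAlgebra k Q)}
    (hI : IsBinomialMonoidIdeal k Q I) (hirr : BinIrred I) {n : ℕ} (hn : (n : k) ≠ 0) {a b : Q}
    (ha : a ∈ regular I) (hb : b ∈ regular I) (h : Rel I (n • a) (n • b)) : Rel I a b := by
  classical
  obtain ⟨c, hc, h⟩ := h
  obtain ⟨s, hs⟩ := exists_prod_eq_pow_sub (Q := Q) hn hc
  by_cases hcase : ∃ r ∈ s, mon k a - r • mon k b ∈ I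
  · obtain ⟨r, -, hr⟩ := hcase
    refine ⟨r, ?_, hr⟩
    rintro rfl
    exact hirr.mon_notMem ha (by simpa using hr)
  push Not at hcase
  exfalso
  obtain ⟨x, hxI, hx⟩ := hirr (s.image fun r => I ⊔ Ideal.span {mon k a - r • mon k b}) (by
    intro J hJ
    obtain ⟨r, hr, rfl⟩ := Finset.mem_image.1 hJ
    exact ⟨lt_sup_span (hcase r hr), isBinomial_sup hI _ _ _⟩)
  obtain ⟨N, hN⟩ := exists_pow_mul_mem I (mon k a) (mon k b) x s
    fun r hr => hx _ (Finset.mem_image_of_mem _ hr)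
  rw [hs, ← mon_nsmul, ← mon_nsmul, sup_eq_left.2, ← mon_nsmul] at hN
  · exact hxI ((regular I).nsmul_mem hb N x hN)
  · rwa [Ideal.span_singleton_le_iff_mem]

/-! ### The torsion-free grading -/

/-- Exponents `a`, `b` are identified if some positive multiples of them are `Rel I`-equivalent;
on regular exponents this is equality modulo torsion in the associated group, while the exponents
of nilpotent monomials form one class. -/
def tor (I : Ideal (AddMonoidAlgebra k Q)) : AddCon Q where
  r a b := ∃ m : ℕ, 0 < m ∧ Rel I (m • a) (m • b)
  iseqv := by
    refine ⟨fun a => ⟨1, one_pos, Rel.refl _⟩, ?_, ?_⟩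
    · rintro a b ⟨m, hm, h⟩
      exact ⟨m, hm, h.symm⟩
    · rintro a b c ⟨m, hm, h⟩ ⟨n, hn, h'⟩
      refine ⟨n * m, Nat.mul_pos hn hm, ?_⟩
      have h1 := h.nsmul n
      have h2 := h'.nsmul m
      rw [smul_smul, smul_smul] at h1 h2
      rw [mul_comm m n] at h2
      exact h1.trans h2
  add' := by
    rintro a b c d ⟨m, hm, h⟩ ⟨n, hn, h'⟩
    refine ⟨n * m, Nat.mul_pos hn hm, ?_⟩
    have h1 := h.nsmul n
    have h2 := h'.nsmul m
    rw [smul_smul, smul_smul] at h1 h2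
    rw [mul_comm m n] at h2
    rw [nsmul_add, nsmul_add]
    exact h1.add h2

lemma tor_iff {I : Ideal (AddMonoidAlgebra k Q)} {a b : Q} :
    ((a : (tor I).Quotient) = b) ↔ ∃ m : ℕ, 0 < m ∧ Rel I (m • a) (m • b) :=
  AddCon.eq (tor I)

lemma Rel.of_add_left {I : Ideal (AddMonoidAlgebra k Q)} {a b c : Q} (ha : a ∈ regular I)
    (h : Rel I (a + b) (a + c)) : Rel I b c := by
  obtain ⟨r, hr, h⟩ := h
  refine ⟨r, hr, ha _ ?_⟩
  rwa [mul_sub, mul_smul_comm, ← mon_add, ← mon_add]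

/-- Finite subsets of a cancellative torsion-free submonoid have a unique sum. -/
lemma exists_uniqueAdd {M : Type*} [AddCommMonoid M] (F : AddSubmonoid M)
    (hcancel : ∀ a ∈ F, ∀ b ∈ F, ∀ c ∈ F, a + b = a + c → b = c)
    (htor : ∀ n : ℕ, n ≠ 0 → ∀ a ∈ F, ∀ b ∈ F, n • a = n • b → a = b)
    {A B : Finset M} (hA : A.Nonempty) (hB : B.Nonempty) (hAF : ∀ a ∈ A, a ∈ F)
    (hBF : ∀ b ∈ B, b ∈ F) : ∃ a ∈ A, ∃ b ∈ B, UniqueAdd A B a b := by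
  classical
  let M' : AddSubmonoid M := AddSubmonoid.closure (A ∪ B : Finset M)
  have hM'F : M' ≤ F := AddSubmonoid.closure_le.2 fun a ha => by
    rcases Finset.mem_union.1 ha with h | h
    exacts [hAF a h, hBF a h]
  have hAM : ∀ a ∈ A, a ∈ M' := fun a ha =>
    AddSubmonoid.subset_closure (Finset.mem_union_left _ ha)
  have hBM : ∀ b ∈ B, b ∈ M' := fun b hb =>
    AddSubmonoid.subset_closure (Finset.mem_union_right _ hb)
  let : AddCancelCommMonoid M' :=
    { (inferInstance : AddCommMonoid M') with
      add_left_cancel := fun a b c h => Subtype.ext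
        (hcancel a (hM'F a.2) b (hM'F b.2) c (hM'F c.2) (congrArg Subtype.val h)) }
  have : AddMonoid.FG M' := (AddMonoid.fg_iff_addSubmonoid_fg M').2 ⟨A ∪ B, rfl⟩
  have : IsAddTorsionFree M' := ⟨fun n hn a b h => Subtype.ext
    (htor n hn a (hM'F a.2) b (hM'F b.2) (congrArg Subtype.val h))⟩
  obtain ⟨a₀, hA₀⟩ := hA
  obtain ⟨b₀, hB₀⟩ := hB
  obtain ⟨a, ha, b, hb, h⟩ := UniqueSums.uniqueAdd_of_nonempty (G := M')
    (A := A.subtype (· ∈ M')) (B := B.subtype (· ∈ M'))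
    ⟨⟨a₀, hAM _ hA₀⟩, by simpa using hA₀⟩ ⟨⟨b₀, hBM _ hB₀⟩, by simpa using hB₀⟩
  rw [Finset.mem_subtype] at ha hb
  refine ⟨a, ha, b, hb, fun a' b' ha' hb' hab => ?_⟩
  have := @h ⟨a', hAM _ ha'⟩ ⟨b', hBM _ hb'⟩ (by simpa using ha') (by simpa using hb')
    (Subtype.ext hab)
  exact ⟨congrArg Subtype.val this.1, congrArg Subtype.val this.2⟩

/-- The set of exponents of degree `γ`, for the grading of `k[Q]` by the quotient of `Q` by
`tor I`. -/
def deg (I : Ideal (AddMonoidAlgebra k Q)) (γ : (tor I).Quotient) : Set Q :=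
  (fun a : Q => (a : (tor I).Quotient)) ⁻¹' {γ}

section Grading

variable {I : Ideal (AddMonoidAlgebra k Q)}

/-- Torsion is purely inseparable: by `rel_of_nsmul`, prime factors of the order other than the
characteristic exponent `p` can be removed. -/
lemma exists_pow_rel [IsAlgClosed k] (hI : IsBinomialMonoidIdeal k Q I) (hirr : BinIrred I)
    (p : ℕ) [ExpChar k p] {a b : Q} (ha : a ∈ regular I) (hb : b ∈ regular I)
    (h : (a : (tor I).Quotient) = b) : ∃ n : ℕ, Rel I (p ^ n • a) (p ^ n • b) := by
  obtain ⟨m, hm, h⟩ := tor_iff.1 h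
  clear * - hI hirr ha hb hm h
  induction m using Nat.strong_induction_on generalizing a b with
  | _ m ih =>
    by_cases h1 : m = 1
    · exact ⟨0, by simpa [h1] using h⟩
    obtain ⟨l, hl, m', rfl⟩ := Nat.exists_prime_and_dvd h1
    have hm' : 0 < m' := Nat.pos_of_mul_pos_left hm
    have hlt : m' < l * m' := lt_mul_of_one_lt_left hm' hl.one_lt
    by_cases hlk : (l : k) = 0
    · have hlp : l = p := by
        cases ‹ExpChar k p› with
        | zero => exact absurd (by exact_mod_cast hlk) hl.ne_zero
        | prime hp => exact (((Nat.prime_dvd_prime_iff_eq hp hl).1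
            ((CharP.cast_eq_zero_iff k p l).1 hlk))).symm
      subst hlp
      obtain ⟨n, hn⟩ := ih m' hlt ((regular I).nsmul_mem ha l) ((regular I).nsmul_mem hb l) hm'
        (by rwa [smul_smul, smul_smul, mul_comm m'])
      exact ⟨n + 1, by rwa [smul_smul, smul_smul, ← pow_succ] at hn⟩
    · refine ih m' hlt ha hb hm' (rel_of_nsmul hI hirr hlk ((regular I).nsmul_mem ha m')
        ((regular I).nsmul_mem hb m') ?_)
      rwa [smul_smul, smul_smul]

lemma res_deg_mem (hI : IsBinomialMonoidIdeal k Q I) (γ : (tor I).Quotient)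
    {f : AddMonoidAlgebra k Q} (hf : f ∈ I) : res k (deg I γ) f ∈ I := by
  refine res_mem hI (fun a b hab _ => ?_) hf
  have : (a : (tor I).Quotient) = b := tor_iff.2 ⟨1, one_pos, by simpa using hab⟩
  rw [deg, Set.mem_preimage, Set.mem_preimage, this]

/-- A sum of homogeneous elements of distinct regular degrees, each a nonzerodivisor modulo `I`,
is a nonzerodivisor on `k[F]/(I ∩ k[F])`, where `F` is the monoid of regular exponents: compare
the components in a degree that is a sum of contributing degrees in only one way. -/
lemma nzd_sum (hI : IsBinomialMonoidIdeal k Q I)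
    {A : Finset (tor I).Quotient} (hA : A.Nonempty)
    (hAF : ∀ γ ∈ A, ∃ a ∈ regular I, (a : (tor I).Quotient) = γ)
    {x : (tor I).Quotient → AddMonoidAlgebra k Q} (hx : ∀ γ ∈ A, x γ ∈ supp k (deg I γ))
    (hreg : ∀ γ ∈ A, ∀ h, x γ * h ∈ I → h ∈ I) {h : AddMonoidAlgebra k Q}
    (hh : h ∈ supp k (regular I : Set Q)) (hxh : (∑ γ ∈ A, x γ) * h ∈ I) : h ∈ I := by
  classical
  by_contra hhI
  obtain ⟨t, ht, hsum⟩ := exists_sum_res (fun a : Q => (a : (tor I).Quotient)) hh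
  change h = ∑ γ ∈ t, res k (deg I γ) h at hsum
  let B := t.filter fun β => res k (deg I β) h ∉ I
  have hrest : ∑ β ∈ t with ¬ res k (deg I β) h ∉ I, res k (deg I β) h ∈ I :=
    sum_mem fun β hβ => not_not.1 (Finset.mem_filter.1 hβ).2
  rw [← Finset.sum_filter_add_sum_filter_not t fun β => res k (deg I β) h ∉ I] at hsum
  have hB : B.Nonempty := by
    rw [Finset.nonempty_iff_ne_empty]
    intro hB
    rw [show (t.filter fun β => res k (deg I β) h ∉ I) = ∅ from hB, Finset.sum_empty,
      zero_add] at hsum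
    exact hhI (hsum ▸ hrest)
  have hBI : (∑ γ ∈ A, x γ) * (∑ β ∈ B, res k (deg I β) h) ∈ I := by
    have h1 := sub_mem hxh (I.mul_mem_left (∑ γ ∈ A, x γ) hrest)
    rw [← mul_sub] at h1
    convert! h1 using 2
    exact eq_sub_of_add_eq hsum.symm
  obtain ⟨α, hα, β, hβ, huniq⟩ := exists_uniqueAdd ((regular I).map (tor I).mk') (by
      rintro _ ⟨a, ha, rfl⟩ _ ⟨b, hb, rfl⟩ _ ⟨c, hc, rfl⟩ habc
      obtain ⟨m, hm, hr⟩ := tor_iff.1 (show ((a + b : Q) : (tor I).Quotient) = (a + c : Q) from habc)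
      rw [nsmul_add, nsmul_add] at hr
      exact tor_iff.2 ⟨m, hm, hr.of_add_left ((regular I).nsmul_mem ha m)⟩) (by
      rintro n hn _ ⟨a, ha, rfl⟩ _ ⟨b, hb, rfl⟩ hab
      rw [← map_nsmul, ← map_nsmul] at hab
      obtain ⟨m, hm, hr⟩ := tor_iff.1 (show ((n • a : Q) : (tor I).Quotient) = (n • b : Q) from hab)
      rw [smul_smul, smul_smul] at hr
      exact tor_iff.2 ⟨m * n, Nat.mul_pos hm (Nat.pos_of_ne_zero hn), hr⟩) hA hB
    (fun γ hγ => hAF γ hγ)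
    (fun γ hγ => ht γ (Finset.mem_filter.1 hγ).1)
  have hmul : ∀ γ ∈ A, ∀ δ, x γ * res k (deg I δ) h ∈ supp k (deg I (γ + δ)) := by
    intro γ hγ δ
    refine supp_mul ?_ (hx γ hγ) (res_mem_supp (deg I δ) h)
    rintro a rfl b rfl
    rfl
  have hres := res_deg_mem hI (α + β) hBI
  rw [Finset.sum_mul_sum, ← Finset.sum_product', map_sum, Finset.sum_eq_single (α, β),
    res_of_supp subset_rfl (hmul α hα β)] at hres
  · exact (Finset.mem_filter.1 hβ).2 (hreg α hα _ hres)
  · rintro ⟨γ, δ⟩ hγδ hne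
    rw [Finset.mem_product] at hγδ
    refine res_of_supp_disjoint (fun a ha ha' => hne ?_) (hmul γ hγδ.1 δ)
    obtain ⟨h1, h2⟩ := huniq hγδ.1 hγδ.2 (ha.symm.trans ha')
    exact Prod.ext h1 h2
  · exact fun hn => absurd (Finset.mk_mem_product hα hβ) hn

end Grading

/-! ### Binomially irreducible ideals are primary -/

section Primary

variable [IsNoetherianRing (AddMonoidAlgebra k Q)] {I : Ideal (AddMonoidAlgebra k Q)}

lemma regular_of_tor (hI : IsBinomialMonoidIdeal k Q I) (hirr : BinIrred I) {a b : Q}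
    (ha : a ∈ regular I) (h : (a : (tor I).Quotient) = b) : b ∈ regular I := by
  by_contra hb
  obtain ⟨e, he⟩ := cellular hI hirr b hb
  obtain ⟨m, hm, hr⟩ := tor_iff.1 h
  refine hirr.mon_notMem ((regular I).nsmul_mem ((regular I).nsmul_mem ha m) e)
    ((hr.nsmul e).mem_iff.2 ?_)
  rw [smul_smul, mul_comm, ← smul_smul, mon_nsmul, mon_nsmul]
  exact I.pow_mem_of_mem he m hm

/-- A homogeneous element of regular degree is nilpotent or a nonzerodivisor modulo `I`: a
high enough power of the Frobenius turns it into a multiple of a single monomial. -/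
lemma nilpotent_or_nzd [IsAlgClosed k] (hI : IsBinomialMonoidIdeal k Q I) (hirr : BinIrred I)
    {a : Q} (ha : a ∈ regular I) {f : AddMonoidAlgebra k Q}
    (hf : f ∈ supp k (deg I (a : (tor I).Quotient))) :
    f ∈ I.radical ∨ ∀ h, f * h ∈ I → h ∈ I := by
  let p := ringExpChar k
  have : ExpChar (AddMonoidAlgebra k Q) p :=
    expChar_of_injective_algebraMap (algebraMap k (AddMonoidAlgebra k Q)).injective p
  have key : ∃ n : ℕ, ∀ n' ≥ n, ∃ c : k, f ^ p ^ n' - c • mon k (p ^ n' • a) ∈ I := by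
    induction hf using supp_induction with
    | hmon b hb =>
      have hab : (b : (tor I).Quotient) = a := hb
      obtain ⟨n, hn⟩ := exists_pow_rel hI hirr p (regular_of_tor hI hirr ha hab.symm) ha hab
      refine ⟨n, fun n' hn' => ?_⟩
      obtain ⟨d, rfl⟩ := Nat.exists_eq_add_of_le' hn'
      obtain ⟨c, -, h⟩ := hn.nsmul (p ^ d)
      refine ⟨c, ?_⟩
      rwa [smul_smul, smul_smul, ← pow_add, mon_nsmul _ b] at h
    | hzero =>
      refine ⟨0, fun n' _ => ⟨0, ?_⟩⟩
      rw [zero_pow (pow_ne_zero _ (expChar_pos k p).ne')]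
      simp
    | hadd u v _ _ hu hv =>
      obtain ⟨n, hn⟩ := hu
      obtain ⟨m, hm⟩ := hv
      refine ⟨max n m, fun n' hn' => ?_⟩
      obtain ⟨c, hc⟩ := hn n' (le_trans (le_max_left _ _) hn')
      obtain ⟨d, hd⟩ := hm n' (le_trans (le_max_right _ _) hn')
      refine ⟨c + d, ?_⟩
      rw [add_pow_expChar_pow]
      convert! add_mem hc hd using 1
      module
    | hsmul r u _ hu =>
      obtain ⟨n, hn⟩ := hu
      refine ⟨n, fun n' hn' => ?_⟩
      obtain ⟨c, hc⟩ := hn n' hn'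
      refine ⟨r ^ p ^ n' * c, ?_⟩
      rw [smul_pow, mul_smul, ← smul_sub]
      exact smul_mem_ideal I _ hc
  obtain ⟨n, hn⟩ := key
  obtain ⟨c, hc⟩ := hn n le_rfl
  by_cases h0 : c = 0
  · left
    exact ⟨p ^ n, by simpa [h0] using hc⟩
  · right
    intro h hfh
    have h1 : f ^ p ^ n * h ∈ I := by
      obtain ⟨e, he⟩ := Nat.exists_eq_succ_of_ne_zero (pow_ne_zero n (expChar_pos k p).ne')
      rw [he, pow_succ, mul_assoc]
      exact I.mul_mem_left _ hfh
    have h2 := sub_mem h1 (I.mul_mem_right h hc)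
    rw [← sub_mul, sub_sub_cancel, smul_mul_assoc, smul_mem_ideal_iff I h0] at h2
    exact (regular I).nsmul_mem ha _ _ h2

/-- Any `x` outside the radical splits into its homogeneous components that are nonzerodivisors
modulo `I`, at least one in number, plus a nilpotent remainder; so `x` is a nonzerodivisor. -/
lemma BinIrred.isPrimary [IsAlgClosed k] (hI : IsBinomialMonoidIdeal k Q I)
    (hirr : BinIrred I) : I.IsPrimary := by
  classical
  refine Ideal.isPrimary_iff.2 ⟨(Ideal.ne_top_iff_one I).2 hirr.one_notMem, fun {y x} hyx => ?_⟩
  by_cases hxrad : x ∈ I.radical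
  · exact Or.inr hxrad
  left
  obtain ⟨s, -, hsum⟩ := exists_sum_res (fun a : Q => (a : (tor I).Quotient)) (supp_univ x)
  change x = ∑ γ ∈ s, res k (deg I γ) x at hsum
  let A := s.filter fun γ => res k (deg I γ) x ∉ I.radical
  set ν := ∑ γ ∈ s with ¬ res k (deg I γ) x ∉ I.radical, res k (deg I γ) x with hν
  have hνrad : ν ∈ I.radical := sum_mem fun γ hγ => not_not.1 (Finset.mem_filter.1 hγ).2
  rw [← Finset.sum_filter_add_sum_filter_not s fun γ => res k (deg I γ) x ∉ I.radical] at hsum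
  set x' := ∑ γ ∈ A, res k (deg I γ) x with hx'
  have hxx' : x = x' + ν := hsum
  have hA : A.Nonempty := by
    rw [Finset.nonempty_iff_ne_empty]
    intro hA
    rw [hx', hA, Finset.sum_empty, zero_add] at hxx'
    exact hxrad (hxx' ▸ hνrad)
  have hAF : ∀ γ ∈ A, ∃ a ∈ regular I, (a : (tor I).Quotient) = γ := by
    intro γ hγ
    obtain ⟨a, rfl⟩ := AddCon.mk'_surjective (c := tor I) γ
    refine ⟨a, ?_, rfl⟩
    by_contra ha
    refine (Finset.mem_filter.1 hγ).2 ?_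
    have hsupp := res_mem_supp (deg I (tor I |>.mk' a)) x
    generalize res k (deg I (tor I |>.mk' a)) x = v at hsupp
    induction hsupp using supp_induction with
    | hmon b hb => exact cellular hI hirr b fun hb' => ha (regular_of_tor hI hirr hb' hb)
    | hzero => exact zero_mem _
    | hadd f g _ _ hf hg => exact add_mem hf hg
    | hsmul c f _ hf => exact smul_mem_ideal _ _ hf
  have hreg : ∀ γ ∈ A, ∀ h, res k (deg I γ) x * h ∈ I → h ∈ I := by
    intro γ hγ
    obtain ⟨a, ha, rfl⟩ := hAF γ hγ
    exact (nilpotent_or_nzd hI hirr ha (res_mem_supp _ x)).resolve_left (Finset.mem_filter.1 hγ).2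
  have hx'F : x' ∈ supp k (regular I : Set Q) := by
    refine sum_mem fun γ hγ => ?_
    obtain ⟨a, ha, rfl⟩ := hAF γ hγ
    exact supp_mono (fun b hb => regular_of_tor hI hirr ha (Eq.symm hb)) (res_mem_supp _ x)
  have hx'reg : ∀ z, x' * z ∈ I → z ∈ I := fun z hz =>
    nzd_extend hI hirr hx'F (fun h hh hxh => nzd_sum hI hA hAF
      (fun γ _ => res_mem_supp _ x) hreg hh hxh) hz
  -- a nonzerodivisor plus a nilpotent is a nonzerodivisor
  obtain ⟨e, he⟩ := hνrad
  have hpow : x' ^ e * y ∈ I := by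
    obtain ⟨d, hd⟩ := sub_dvd_pow_sub_pow x' (-ν) e
    rw [sub_neg_eq_add, ← hxx', neg_pow] at hd
    have h1 : x' ^ e * y = d * (y * x) + (-1) ^ e * y * ν ^ e := by
      linear_combination y * hd
    rw [h1]
    exact add_mem (I.mul_mem_left _ hyx) (I.mul_mem_left _ he)
  clear he
  induction e with
  | zero => simpa using hpow
  | succ e ih =>
    rw [pow_succ', mul_assoc] at hpow
    exact ih (hx'reg _ hpow)

end Primary

/-! ### Noetherian induction -/

lemma exists_finset [IsAlgClosed k] [IsNoetherianRing (AddMonoidAlgebra k Q)]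
    (I : Ideal (AddMonoidAlgebra k Q)) (hI : IsBinomialMonoidIdeal k Q I) :
    ∃ T : Finset (Ideal (AddMonoidAlgebra k Q)),
      (∀ P ∈ T, P.IsPrimary ∧ IsBinomialMonoidIdeal k Q P) ∧ I = T.inf id := by
  classical
  induction I using WellFoundedGT.induction with
  | ind I ih =>
    by_cases hirr : BinIrred I
    · exact ⟨{I}, by simpa using ⟨hirr.isPrimary hI, hI⟩, by simp⟩
    · unfold BinIrred at hirr
      push Not at hirr
      obtain ⟨s, hs, hsI⟩ := hirr
      choose! T hT hTinf using ih
      refine ⟨s.biUnion T, fun P hP => ?_, le_antisymm ?_ fun x hx => ?_⟩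
      · obtain ⟨J, hJ, hP⟩ := Finset.mem_biUnion.1 hP
        exact hT J (hs J hJ).1 (hs J hJ).2 P hP
      · refine Finset.le_inf fun P hP => ?_
        obtain ⟨J, hJ, hP⟩ := Finset.mem_biUnion.1 hP
        refine (hs J hJ).1.le.trans ?_
        rw [hTinf J (hs J hJ).1 (hs J hJ).2]
        exact Finset.inf_le hP
      · by_contra hxI
        obtain ⟨J, hJ, hxJ⟩ := hsI x hxI
        refine hxJ ?_
        rw [hTinf J (hs J hJ).1 (hs J hJ).2]
        have hle : (s.biUnion T).inf id ≤ (T J).inf id :=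
          Finset.inf_mono (Finset.subset_biUnion_of_mem T hJ)
        exact hle hx

end BinomialDecomposition

/-- over an algebraically closed field (of any characteristic),
every binomial ideal of the monoid algebra of a finitely generated commutative
monoid admits a binomial primary decomposition. -/
theorem binomial_primary_decomposition_exists
    (k : Type*) [Field k] [IsAlgClosed k]
    (Q : Type*) [AddCommMonoid Q] [AddMonoid.FG Q]
    (I : Ideal (AddMonoidAlgebra k Q)) (hI : IsBinomialMonoidIdeal k Q I) :
    ∃ (r : ℕ) (P : Fin r → Ideal (AddMonoidAlgebra k Q)),
      (∀ i, (P i).IsPrimary ∧ IsBinomialMonoidIdeal k Q (P i)) ∧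
      I = ⨅ i, P i := by
  have : IsNoetherianRing (AddMonoidAlgebra k Q) := Algebra.FiniteType.isNoetherianRing k _
  obtain ⟨T, hT, hinf⟩ := BinomialDecomposition.exists_finset I hI
  refine ⟨T.card, fun i => (T.equivFin.symm i : Ideal (AddMonoidAlgebra k Q)),
    fun i => hT _ (T.equivFin.symm i).2, ?_⟩
  rw [hinf]
  refine le_antisymm (le_iInf fun i => Finset.inf_le (T.equivFin.symm i).2)
    (Finset.le_inf fun P hP => ?_)
  refine (iInf_le _ (T.equivFin ⟨P, hP⟩)).trans ?_
  simp
end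

section
/- Fix a lattice game: a pointed normal affine semigroup Q = C ∩ ℤ^d (C a pointed rational polyhedral cone), a rule set Γ (a finite subset of ℤ^d ∖ {0} with ℕΓ pointed and such that every p ∈ Q has a Γ-path to 0 in Q), a finite set D ⊆ Q of defeated positions forming a Γ-order ideal (if q ∈ D, p ∈ Q and q − p ∈ ℕΓ, then p ∈ D), and game board B = Q ∖ D. Then there exists a unique pair of subsets W, L ⊆ B such that B is the disjoint union W ⊔ L and (W + Γ) ∩ B = L, where W + Γ = {w + γ : w ∈ W, γ ∈ Γ}. -/
/-!
Say that a board position `w` precedes `p` when `p - w ∈ Γ`. The conditions on `(W, L)` amount to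
`L = B ∖ W` together with: `p ∈ B` lies in `W` iff no predecessor of `p` lies in `W`. Along a
well-founded relation this recursion has exactly one solution.

Well-foundedness (`wellFounded_of_pointed`) comes from Dickson's lemma. The paths to `0` put `Q`
inside `ℕΓ`, so the terms of an infinite descending chain `q` can be written as `ℕ`-combinations
of `Γ`; two of the coefficient vectors are comparable, which gives `m < n` with
`q n - q m ∈ ℕΓ`. Since also `q (m + 1) - q n ∈ ℕΓ`, the rule `γ = q m - q (m + 1) ∈ Γ` satisfies
`-γ ∈ ℕΓ`, so `γ = 0` because `ℕΓ` is pointed; but `0 ∉ Γ`.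
-/

/-- By Dickson's lemma, a sequence in a finitely generated monoid `ℕΓ` has two terms
such that the later minus the earlier one is again in `ℕΓ`. -/
lemma exists_lt_sub_mem_closure {M : Type*} [AddCommGroup M] (Γ : Finset M) (q : ℕ → M)
    (hq : ∀ n, q n ∈ AddSubmonoid.closure (Γ : Set M)) :
    ∃ m n, m < n ∧ q n - q m ∈ AddSubmonoid.closure (Γ : Set M) := by
  have hcoef : ∀ n, ∃ a : Γ → ℕ, ∑ i, a i • (i : M) = q n := by
    intro n
    have hn := hq n
    generalize q n = x at hn ⊢
    induction hn using AddSubmonoid.closure_induction with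
    | mem x hx =>
      classical
      refine ⟨Pi.single ⟨x, hx⟩ 1, ?_⟩
      rw [Finset.sum_eq_single ⟨x, hx⟩]
      · simp
      · intro b _ hb
        simp [Pi.single_eq_of_ne hb]
      · simp
    | zero => exact ⟨0, by simp⟩
    | add x y _ _ hx hy =>
      obtain ⟨a, rfl⟩ := hx
      obtain ⟨b, rfl⟩ := hy
      exact ⟨a + b, by simp [add_smul, Finset.sum_add_distrib]⟩
  choose a ha using hcoef
  obtain ⟨m, n, hmn, hle⟩ := wellQuasiOrdered_le a
  refine ⟨m, n, hmn, ?_⟩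
  have h : q n - q m = ∑ i : Γ, (a n i - a m i) • (i : M) := by
    rw [← ha n, ← ha m, ← Finset.sum_sub_distrib]
    refine Finset.sum_congr rfl fun i _ => ?_
    rw [sub_eq_iff_eq_add, ← add_smul, Nat.sub_add_cancel (hle i)]
  rw [h]
  exact sum_mem fun i _ => nsmul_mem (AddSubmonoid.subset_closure i.2) _

lemma wellFounded_of_pointed {M : Type*} [AddCommGroup M] (Γ : Finset M) (hΓ0 : (0 : M) ∉ Γ)
    (hNG : ∀ x ∈ AddSubmonoid.closure (Γ : Set M),
      -x ∈ AddSubmonoid.closure (Γ : Set M) → x = 0)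
    (B : Set M) (hB : ∀ p ∈ B, p ∈ AddSubmonoid.closure (Γ : Set M)) :
    WellFounded fun w p : M => w ∈ B ∧ p ∈ B ∧ p - w ∈ Γ := by
  rw [wellFounded_iff_isEmpty_descending_chain]
  refine ⟨fun ⟨q, hq⟩ => ?_⟩
  obtain ⟨m, n, hmn, hsub⟩ := exists_lt_sub_mem_closure Γ q fun n => hB _ (hq n).2.1
  have hdesc : ∀ n, m + 1 ≤ n → q (m + 1) - q n ∈ AddSubmonoid.closure (Γ : Set M) := by
    intro n hn
    induction n, hn using Nat.le_induction with
    | base => simp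
    | succ k _ ih =>
      have h := add_mem ih (AddSubmonoid.subset_closure (hq k).2.2)
      rwa [sub_add_sub_cancel] at h
  have hneg : -(q m - q (m + 1)) ∈ AddSubmonoid.closure (Γ : Set M) := by
    have h := add_mem (hdesc n hmn) hsub
    rwa [sub_add_sub_cancel, ← neg_sub] at h
  exact hΓ0 (hNG _ (AddSubmonoid.subset_closure (hq m).2.2) hneg ▸ (hq m).2.2)

/-- A well-founded relation has a kernel: the `P`-positions of the corresponding game. -/
lemma exists_kernel {α : Type*} {r : α → α → Prop} (hr : WellFounded r) :
    ∃ K : α → Prop, ∀ x, K x ↔ ∀ y, r y x → ¬ K y :=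
  ⟨hr.fix fun x K => ∀ y, ∀ h : r y x, ¬ K y h, fun x => by rw [hr.fix_eq]⟩


/-- every lattice game (pointed normal affine semigroup
`Q = C ∩ ℤ^d`, rule set `Γ`, finite `Γ`-order ideal `D` of defeated positions,
game board `B = Q ∖ D`) has a unique pair `(W, L)` of winning and losing
positions: `B = W ⊔ L` and `(W + Γ) ∩ B = L`. -/
theorem lattice_game_winning_positions_exist_unique
    (d : ℕ) (C : Set (Fin d → ℝ))
    (hCgen : ∃ (m : ℕ) (g : Fin m → Fin d → ℚ), C = {x | ∃ c : Fin m → ℝ,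
      (∀ i, 0 ≤ c i) ∧ x = ∑ i, c i • fun j => ((g i j : ℝ))})
    (hCpointed : ∀ x ∈ C, -x ∈ C → x = 0)
    (Γ : Finset (Fin d → ℤ)) (hΓ0 : (0 : Fin d → ℤ) ∉ Γ)
    (hNG : ∀ x ∈ AddSubmonoid.closure (Γ : Set (Fin d → ℤ)),
      -x ∈ AddSubmonoid.closure (Γ : Set (Fin d → ℤ)) → x = 0)
    (hpath : ∀ p : Fin d → ℤ, (fun i => (p i : ℝ)) ∈ C →
      ∃ (r : ℕ) (f : ℕ → Fin d → ℤ), f 0 = 0 ∧ f r = p ∧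
        (∀ i ≤ r, (fun j => (f i j : ℝ)) ∈ C) ∧
        ∀ i < r, f (i + 1) - f i ∈ Γ)
    (D : Set (Fin d → ℤ)) (hDfin : D.Finite)
    (hDQ : ∀ q ∈ D, (fun i => (q i : ℝ)) ∈ C)
    (hDideal : ∀ q ∈ D, ∀ p : Fin d → ℤ, (fun i => (p i : ℝ)) ∈ C →
      q - p ∈ AddSubmonoid.closure (Γ : Set (Fin d → ℤ)) → p ∈ D) :
    let B : Set (Fin d → ℤ) := {p | (fun i => (p i : ℝ)) ∈ C} \ D
    ∃! WL : Set (Fin d → ℤ) × Set (Fin d → ℤ),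
      WL.1 ∪ WL.2 = B ∧ Disjoint WL.1 WL.2 ∧
      {x | ∃ w ∈ WL.1, ∃ γ ∈ Γ, x = w + γ} ∩ B = WL.2 := by
  intro B
  have hB : ∀ p ∈ B, p ∈ AddSubmonoid.closure (Γ : Set (Fin d → ℤ)) := by
    intro p hp
    obtain ⟨r, f, hf0, rfl, -, hstep⟩ := hpath p hp.1
    have h : ∀ i ≤ r, f i ∈ AddSubmonoid.closure (Γ : Set (Fin d → ℤ)) := by
      intro i
      induction i with
      | zero => intro _; rw [hf0]; exact zero_mem _
      | succ k ih =>
        intro hk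
        have h := add_mem (AddSubmonoid.subset_closure (hstep k hk)) (ih (by omega))
        rwa [sub_add_cancel] at h
    exact h r le_rfl
  have hwf := wellFounded_of_pointed Γ hΓ0 hNG B hB
  obtain ⟨K, hK⟩ := exists_kernel hwf
  refine ⟨({p | p ∈ B ∧ K p}, {p | p ∈ B ∧ ¬ K p}), ⟨?_, ?_, ?_⟩, ?_⟩
  · ext p
    simp only [Set.mem_union, Set.mem_ofPred_eq]
    tauto
  · rw [Set.disjoint_left]
    exact fun p hp hp' => hp'.2 hp.2
  · ext p
    constructor
    · rintro ⟨⟨w, hw, γ, hγ, rfl⟩, hp⟩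
      exact ⟨hp, fun hKp => (hK _).1 hKp w ⟨hw.1, hp, by simpa using hγ⟩ hw.2⟩
    · rintro ⟨hp, hnK⟩
      rw [hK] at hnK
      push Not at hnK
      obtain ⟨w, ⟨hw, -, hγ⟩, hKw⟩ := hnK
      exact ⟨⟨w, ⟨hw, hKw⟩, p - w, hγ, by simp⟩, hp⟩
  · rintro ⟨W, L⟩ ⟨hU, hdisj, hL⟩
    dsimp only at hU hdisj hL
    have hWB : W ⊆ B := hU ▸ Set.subset_union_left
    have hLB : L ⊆ B := hU ▸ Set.subset_union_right
    have hnot : ∀ p ∈ B, p ∈ L ↔ p ∉ W := fun p hp =>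
      ⟨fun hl hw => Set.disjoint_left.1 hdisj hw hl, fun hw => by
        rw [← hU] at hp
        exact hp.resolve_left hw⟩
    have hWK : ∀ p, p ∈ B → (p ∈ W ↔ K p) := by
      intro p
      induction p using hwf.induction with
      | _ p ih =>
        intro hp
        rw [hK, ← not_iff_not, ← hnot p hp, ← hL]
        push Not
        constructor
        · rintro ⟨⟨w, hw, γ, hγ, rfl⟩, -⟩
          have hr : w ∈ B ∧ w + γ ∈ B ∧ w + γ - w ∈ Γ := ⟨hWB hw, hp, by simpa using hγ⟩
          exact ⟨w, hr, (ih w hr hr.1).1 hw⟩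
        · rintro ⟨w, hr, hKw⟩
          exact ⟨⟨w, (ih w hr hr.1).2 hKw, p - w, hr.2.2, by simp⟩, hp⟩
    refine Prod.ext (Set.ext fun p => ?_) (Set.ext fun p => ?_)
    · exact ⟨fun h => ⟨hWB h, (hWK p (hWB h)).1 h⟩, fun h => (hWK p h.1).2 h.2⟩
    · exact ⟨fun h => ⟨hLB h, fun hk => (hnot p (hLB h)).1 h ((hWK p (hLB h)).2 hk)⟩,
        fun h => (hnot p h.1).2 fun hw => h.2 ((hWK p h.1).1 hw)⟩
end

section
/- Let Q ⊆ ℤ^d be an affine semigroup (a finitely generated submonoid of ℤ^d), M a commutative monoid, and φ : Q → M a monoid homomorphism. Then every fiber of φ admits an affine stratification: for each m ∈ M, the set φ^{-1}(m) can be written as a finite union of translates a_1 + Q_1, …, a_k + Q_k, where each a_i ∈ ℤ^d and each Q_i is a finitely generated submonoid of ℤ^d. -/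
/-!
A finite union of translates of finitely generated submonoids is a semilinear set in the sense of
Mathlib. The fiber of `φ` over `m` is the solution set in `Q` of the equation
`0 + φ x = m + 0`, and over a finitely generated monoid such solution sets are semilinear
(`isSemilinearSet_setOfPred_eq`, with values in an arbitrary commutative monoid). The ground for
this is that a fiber pulled back to `ℕ ^ n` is a slice: if it contains `x`, `x + u` and `x + v`,
then it contains `x + u + v`; and slices in `ℕ ^ n` are semilinear by Dickson's lemma and induction
on the number of free coordinates. The inclusion `Q → ℤ ^ d` maps semilinear sets to semilinear
sets.
-/

/-- every fiber of a monoid homomorphism from an affine semigroup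
`Q ⊆ ℤ^d` to a commutative monoid admits an affine stratification: it is a
finite union of translates of finitely generated submonoids of `ℤ^d`. -/
theorem fiber_of_monoid_hom_affine_stratification
    (d : ℕ) (Q : AddSubmonoid (Fin d → ℤ)) (hQ : Q.FG)
    (M : Type*) [AddCommMonoid M] (φ : Q →+ M) (m : M) :
    ∃ (K : ℕ) (a : Fin K → Fin d → ℤ) (Q' : Fin K → AddSubmonoid (Fin d → ℤ)),
      (∀ i, (Q' i).FG) ∧
      {x : Fin d → ℤ | ∃ hx : x ∈ Q, φ ⟨x, hx⟩ = m} =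
        ⋃ i, {y : Fin d → ℤ | ∃ q ∈ Q' i, y = a i + q} := by
  have : AddMonoid.FG Q := (AddMonoid.fg_iff_addSubmonoid_fg Q).2 hQ
  obtain ⟨S, hS, hlin, hfiber⟩ :=
    (isSemilinearSet_setOfPred_eq 0 m φ (0 : Q →+ M)).image Q.subtype
  have : Finite S := hS
  obtain ⟨K, ⟨e⟩⟩ := Finite.exists_equiv_fin S
  choose a Q' hfg heq using fun i : Fin K =>
    isLinearSet_iff_exists_fg_eq_vadd.1 (hlin (e.symm i) (e.symm i).2)
  refine ⟨K, a, Q', hfg, ?_⟩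
  trans ⋃₀ S
  · rw [← hfiber]
    ext x
    simp
  · rw [Set.sUnion_eq_iUnion, ← e.symm.surjective.iUnion_comp]
    refine Set.iUnion_congr fun i => ?_
    rw [heq]
    ext y
    simp [Set.mem_vadd_set, eq_comm]
end

section
/- Fix a lattice game on a pointed normal affine semigroup Q = C ∩ ℤ^d with rule set Γ, finite Γ-order ideal D of defeated positions, game board B = Q ∖ D, and winning positions W (the unique set with B = W ⊔ L and (W + Γ) ∩ B = L). Let ∼ be the indistinguishability congruence on Q: p ∼ q if and only if p + r ∈ W ⇔ q + r ∈ W for all r ∈ Q. If the misère quotient Q/∼ is a finite monoid, then W admits an affine stratification: W is a finite union of translates a_1 + Q_1, …, a_k + Q_k with a_i ∈ ℤ^d and each Q_i a finitely generated submonoid of ℤ^d. -/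
/-!
The monoid `Q` of lattice points of the cone is finitely generated (Gordan's lemma,
`exists_finset_closure_eq`), say by a finite set `F`. Since there are finitely many
indistinguishability classes, the pigeonhole principle applied to the tuples `(n • f)_{f ∈ F}`
gives `N` and `P > 0` such that `N • f` and `(N + P) • f` are indistinguishable for all `f ∈ F`
simultaneously. Hence a coefficient `≥ N` of a generator can be raised or lowered by `P` without
affecting membership in `W`, as long as it stays `≥ N`. So `W` is the union, over the finitely
many coefficient vectors `a : F → {0, …, N + P - 1}` with `x := ∑ a f • f ∈ W`, of the translates
of the monoid generated by `{P • f | a f ≥ N}` by `x` (`exists_affine_stratification`).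
-/

/-- A rational vector has a positive multiple that is integral. -/
lemma exists_integral_multiple {d : ℕ} (g : Fin d → ℚ) :
    ∃ k : ℕ, 0 < k ∧ ∃ z : Fin d → ℤ, ∀ j, (z j : ℚ) = k * g j := by
  refine ⟨∏ j, (g j).den, Finset.prod_pos fun j _ => (g j).den_pos, ?_⟩
  have h : ∀ j, ∃ z : ℤ, (z : ℚ) = ((∏ j, (g j).den : ℕ) : ℚ) * g j := by
    intro j
    obtain ⟨c, hc⟩ := Finset.dvd_prod_of_mem (fun j => (g j).den) (Finset.mem_univ j)
    refine ⟨(g j).num * c, ?_⟩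
    rw [hc]
    push_cast
    rw [← Rat.mul_den_eq_num (g j)]
    ring
  choose z hz using h
  exact ⟨z, hz⟩

/-- Gordan's lemma: the lattice points of a rational polyhedral cone form a finitely generated
monoid. If the cone is generated by integral vectors `G i`, the lattice points of the bounded set
`∑ i, [0, 1] • G i` generate, as one sees by splitting coefficients into integral and fractional
parts. -/
lemma exists_finset_closure_eq (d : ℕ) (C : Set (Fin d → ℝ))
    (hCgen : ∃ (m : ℕ) (g : Fin m → Fin d → ℚ), C = {x | ∃ c : Fin m → ℝ,
      (∀ i, 0 ≤ c i) ∧ x = ∑ i, c i • fun j => ((g i j : ℝ))}) :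
    ∃ F : Finset (Fin d → ℤ), ∀ p : Fin d → ℤ, (fun i => (p i : ℝ)) ∈ C ↔
      p ∈ AddSubmonoid.closure (F : Set (Fin d → ℤ)) := by
  obtain ⟨m, g, rfl⟩ := hCgen
  choose k hk G hG using fun i => exists_integral_multiple (g i)
  have hG' : ∀ i j, (G i j : ℝ) = k i * g i j := fun i j => by exact_mod_cast hG i j
  have hk' : ∀ i, (0 : ℝ) < k i := fun i => by exact_mod_cast hk i
  have hmem : ∀ p : Fin d → ℤ, (fun i => (p i : ℝ)) ∈ {x | ∃ c : Fin m → ℝ,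
      (∀ i, 0 ≤ c i) ∧ x = ∑ i, c i • fun j => ((g i j : ℝ))} ↔
      ∃ c : Fin m → ℝ, (∀ i, 0 ≤ c i) ∧ ∀ j, (p j : ℝ) = ∑ i, c i * G i j := by
    intro p
    constructor
    · rintro ⟨c, hc, h⟩
      refine ⟨fun i => c i / k i, fun i => div_nonneg (hc i) (hk' i).le, fun j => ?_⟩
      have := congrFun h j
      simp only [Finset.sum_apply, Pi.smul_apply, smul_eq_mul] at this
      rw [this]
      refine Finset.sum_congr rfl fun i _ => ?_
      have := (hk' i).ne'
      rw [hG']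
      field_simp
    · rintro ⟨c, hc, h⟩
      refine ⟨fun i => c i * k i, fun i => mul_nonneg (hc i) (hk' i).le, funext fun j => ?_⟩
      simp only [Finset.sum_apply, Pi.smul_apply, smul_eq_mul]
      rw [h j]
      refine Finset.sum_congr rfl fun i _ => ?_
      rw [hG']
      ring
  set S : Set (Fin d → ℤ) := {p | ∃ c : Fin m → ℝ, (∀ i, 0 ≤ c i ∧ c i ≤ 1) ∧
    ∀ j, (p j : ℝ) = ∑ i, c i * G i j} with hS
  have hSfin : S.Finite := by
    refine (Set.finite_Icc (fun j => -∑ i, |G i j|) (fun j => ∑ i, |G i j|)).subset ?_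
    rintro p ⟨c, hc, h⟩
    have hb : ∀ j, |p j| ≤ ∑ i, |G i j| := by
      intro j
      have : |(p j : ℝ)| ≤ ∑ i, |(G i j : ℝ)| := by
        rw [h j]
        refine (Finset.abs_sum_le_sum_abs _ _).trans (Finset.sum_le_sum fun i _ => ?_)
        rw [abs_mul, abs_of_nonneg (hc i).1]
        exact mul_le_of_le_one_left (abs_nonneg _) (hc i).2
      exact_mod_cast this
    exact ⟨fun j => (abs_le.1 (hb j)).1, fun j => (abs_le.1 (hb j)).2⟩
  have hGS : ∀ i, G i ∈ S := by
    intro i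
    refine ⟨fun l => if l = i then 1 else 0, fun l => ?_, fun j => by simp⟩
    dsimp only
    split_ifs <;> norm_num
  refine ⟨hSfin.toFinset, fun p => ?_⟩
  rw [hmem, Set.Finite.coe_toFinset]
  constructor
  · rintro ⟨c, hc, h⟩
    have hp : p = (∑ i, ⌊c i⌋₊ • G i) + (p - ∑ i, ⌊c i⌋₊ • G i) := by abel
    rw [hp]
    refine add_mem (sum_mem fun i _ => nsmul_mem (AddSubmonoid.subset_closure (hGS i)) _)
      (AddSubmonoid.subset_closure ⟨fun i => c i - ⌊c i⌋₊, fun i => ?_, fun j => ?_⟩)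
    · have h1 := Nat.floor_le (hc i)
      have h2 := Nat.lt_floor_add_one (c i)
      constructor <;> linarith
    · simp only [Pi.sub_apply, Finset.sum_apply, Pi.smul_apply]
      simp only [nsmul_eq_mul]
      push_cast
      rw [h j, ← Finset.sum_sub_distrib]
      exact Finset.sum_congr rfl fun i _ => by ring
  · intro hp
    induction hp using AddSubmonoid.closure_induction with
    | mem x hx =>
      obtain ⟨c, hc, h⟩ := hx
      exact ⟨c, fun i => (hc i).1, h⟩
    | zero => exact ⟨0, fun i => le_rfl, fun j => by simp⟩
    | add x y _ _ hx hy =>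
      obtain ⟨c, hc, h⟩ := hx
      obtain ⟨c', hc', h'⟩ := hy
      refine ⟨c + c', fun i => add_nonneg (hc i) (hc' i), fun j => ?_⟩
      simp only [Pi.add_apply, add_mul, Finset.sum_add_distrib, Int.cast_add, h j, h' j]

/-- A subset `W` of a finitely generated commutative monoid whose syntactic congruence has finite
index is a finite union of translates of finitely generated submonoids. -/
lemma exists_affine_stratification {M : Type*} [AddCommMonoid M] (F : Finset M) (W : Set M)
    (hW : ∀ w ∈ W, w ∈ AddSubmonoid.closure (F : Set M)) (T : Finset M)
    (hT : ∀ p ∈ AddSubmonoid.closure (F : Set M), ∃ q ∈ T,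
      ∀ r ∈ AddSubmonoid.closure (F : Set M), (p + r ∈ W ↔ q + r ∈ W)) :
    ∃ (K : ℕ) (a : Fin K → M) (Q' : Fin K → AddSubmonoid M),
      (∀ i, (Q' i).FG) ∧ W = ⋃ i, {y : M | ∃ q ∈ Q' i, y = a i + q} := by
  classical
  set Q := AddSubmonoid.closure (F : Set M) with hQ
  have hF : ∀ f : F, (f : M) ∈ Q := fun f => AddSubmonoid.subset_closure f.2
  choose rep hrepT hrep using fun (n : ℕ) (f : F) => hT (n • (f : M)) (nsmul_mem (hF f) n)
  obtain ⟨N, P, hP, hper⟩ : ∃ N P : ℕ, 0 < P ∧ ∀ f : F, ∀ r ∈ Q,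
      ((N + P) • (f : M) + r ∈ W ↔ N • (f : M) + r ∈ W) := by
    obtain ⟨n, n', hne, heq⟩ := Finite.exists_ne_map_eq_of_infinite
      (fun (n : ℕ) (f : F) => (⟨rep n f, hrepT n f⟩ : T))
    have key : ∀ f : F, ∀ r ∈ Q, (n • (f : M) + r ∈ W ↔ n' • (f : M) + r ∈ W) := by
      intro f r hr
      have h : rep n f = rep n' f := congrArg Subtype.val (congrFun heq f)
      rw [hrep n f r hr, hrep n' f r hr, h]
    rcases lt_or_gt_of_ne hne with h | h
    · refine ⟨n, n' - n, by omega, fun f r hr => ?_⟩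
      rw [Nat.add_sub_cancel' h.le]
      exact (key f r hr).symm
    · refine ⟨n', n - n', by omega, fun f r hr => ?_⟩
      rw [Nat.add_sub_cancel' h.le]
      exact key f r hr
  let base : (F → Fin (N + P)) → M := fun a => ∑ f, (a f : ℕ) • (f : M)
  let mon : (F → Fin (N + P)) → AddSubmonoid M := fun a =>
    AddSubmonoid.closure ((fun f : F => P • (f : M)) '' {f | N ≤ (a f : ℕ)})
  have hbase : ∀ a, base a ∈ Q := fun a => sum_mem fun f _ => nsmul_mem (hF f) _
  have habs : ∀ a, ∀ q ∈ mon a, q ∈ Q ∧ ∀ r ∈ Q, (base a + q + r ∈ W ↔ base a + r ∈ W) := by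
    intro a q hq
    induction hq using AddSubmonoid.closure_induction with
    | mem x hx =>
      obtain ⟨f, hf, rfl⟩ := hx
      refine ⟨nsmul_mem (hF f) _, fun r hr => ?_⟩
      -- Split off `N • f` from `base a`; the remaining summand lies in `Q`.
      obtain ⟨s, hs, hsum⟩ : ∃ s ∈ Q, base a = N • (f : M) + s := by
        refine ⟨((a f : ℕ) - N) • (f : M) + ∑ f' ∈ Finset.univ.erase f, (a f' : ℕ) • (f' : M),
          add_mem (nsmul_mem (hF f) _) (sum_mem fun f' _ => nsmul_mem (hF f') _), ?_⟩
        rw [← add_assoc, ← add_nsmul, Nat.add_sub_cancel' hf]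
        exact (Finset.add_sum_erase _ (fun f' : F => (a f' : ℕ) • (f' : M))
          (Finset.mem_univ f)).symm
      have h := hper f (s + r) (add_mem hs hr)
      rw [hsum]
      have e1 : N • (f : M) + s + P • (f : M) + r = (N + P) • (f : M) + (s + r) := by
        rw [add_nsmul]; abel
      rw [e1, add_assoc, h]
    | zero => exact ⟨zero_mem _, fun r _ => by rw [add_zero]⟩
    | add x y _ _ hx hy =>
      refine ⟨add_mem hx.1 hy.1, fun r hr => ?_⟩
      rw [← hy.2 r hr, ← add_assoc, add_assoc _ y r, hx.2 _ (add_mem hy.1 hr), ← add_assoc]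
  have habs0 : ∀ a, ∀ q ∈ mon a, (base a + q ∈ W ↔ base a ∈ W) := fun a q hq => by
    simpa using (habs a q hq).2 0 (zero_mem _)
  have hcover : ∀ p ∈ Q, ∃ a, ∃ q ∈ mon a, p = base a + q := by
    intro p hp
    obtain ⟨n, hn⟩ : ∃ n : F → ℕ, p = ∑ f, n f • (f : M) := by
      induction hp using AddSubmonoid.closure_induction with
      | mem x hx =>
        refine ⟨fun f => if f = ⟨x, hx⟩ then 1 else 0, ?_⟩
        simp [ite_smul]
      | zero => exact ⟨0, by simp⟩
      | add x y _ _ hx hy =>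
        obtain ⟨n, rfl⟩ := hx
        obtain ⟨n', rfl⟩ := hy
        exact ⟨n + n', by simp [add_nsmul, Finset.sum_add_distrib]⟩
    have hdec : ∀ f : F, ∃ (b : Fin (N + P)) (t : ℕ), n f = b + t * P ∧ (t = 0 ∨ N ≤ (b : ℕ)) := by
      intro f
      by_cases h : n f < N
      · exact ⟨⟨n f, by omega⟩, 0, by simp, Or.inl rfl⟩
      · have h1 := Nat.mod_lt (n f - N) hP
        have h2 := Nat.mod_add_div' (n f - N) P
        refine ⟨⟨N + (n f - N) % P, by omega⟩, (n f - N) / P, ?_, Or.inr (by simp)⟩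
        dsimp only
        omega
    choose b t hbt ht using hdec
    refine ⟨b, ∑ f, t f • P • (f : M), sum_mem fun f _ => ?_, ?_⟩
    · rcases ht f with h | h
      · rw [h, zero_nsmul]
        exact zero_mem _
      · have hmem : P • (f : M) ∈ mon b := AddSubmonoid.subset_closure ⟨f, h, rfl⟩
        exact nsmul_mem hmem _
    · rw [hn, ← Finset.sum_add_distrib]
      refine Finset.sum_congr rfl fun f _ => ?_
      rw [hbt f, add_nsmul, mul_nsmul']
  obtain ⟨K, ⟨e⟩⟩ := Finite.exists_equiv_fin {a : F → Fin (N + P) // base a ∈ W}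
  refine ⟨K, fun i => base (e.symm i), fun i => mon (e.symm i), fun i => ?_, ?_⟩
  · exact (AddSubmonoid.fg_iff _).2 ⟨_, rfl, (Set.toFinite _).image _⟩
  · ext p
    simp only [Set.mem_iUnion, Set.mem_ofPred_eq]
    constructor
    · intro hp
      obtain ⟨a, q, hq, rfl⟩ := hcover p (hW p hp)
      refine ⟨e ⟨a, (habs0 a q hq).1 hp⟩, q, ?_, ?_⟩ <;> simp [hq]
    · rintro ⟨i, q, hq, rfl⟩
      exact (habs0 _ q hq).2 (e.symm i).2

/-- a lattice game (on a pointed normal affine semigroup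
`Q = C ∩ ℤ^d`) whose misère quotient is finite has an affine stratification of
its set `W` of winning positions: `W` is a finite union of translates of
finitely generated submonoids of `ℤ^d`. -/
theorem finite_misere_quotient_implies_affine_stratification
    (d : ℕ) (C : Set (Fin d → ℝ))
    (hCgen : ∃ (m : ℕ) (g : Fin m → Fin d → ℚ), C = {x | ∃ c : Fin m → ℝ,
      (∀ i, 0 ≤ c i) ∧ x = ∑ i, c i • fun j => ((g i j : ℝ))})
    (hCpointed : ∀ x ∈ C, -x ∈ C → x = 0)
    (Γ : Finset (Fin d → ℤ)) (hΓ0 : (0 : Fin d → ℤ) ∉ Γ)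
    (hNG : ∀ x ∈ AddSubmonoid.closure (Γ : Set (Fin d → ℤ)),
      -x ∈ AddSubmonoid.closure (Γ : Set (Fin d → ℤ)) → x = 0)
    (hpath : ∀ p : Fin d → ℤ, (fun i => (p i : ℝ)) ∈ C →
      ∃ (r : ℕ) (f : ℕ → Fin d → ℤ), f 0 = 0 ∧ f r = p ∧
        (∀ i ≤ r, (fun j => (f i j : ℝ)) ∈ C) ∧
        ∀ i < r, f (i + 1) - f i ∈ Γ)
    (D : Set (Fin d → ℤ)) (hDfin : D.Finite)
    (hDQ : ∀ q ∈ D, (fun i => (q i : ℝ)) ∈ C)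
    (hDideal : ∀ q ∈ D, ∀ p : Fin d → ℤ, (fun i => (p i : ℝ)) ∈ C →
      q - p ∈ AddSubmonoid.closure (Γ : Set (Fin d → ℤ)) → p ∈ D)
    -- W and L are the winning and losing positions on B = Q ∖ D:
    (W L : Set (Fin d → ℤ))
    (hWL : W ∪ L = {p : Fin d → ℤ | (fun i => (p i : ℝ)) ∈ C} \ D)
    (hdisj : Disjoint W L)
    (hmoves : {x | ∃ w ∈ W, ∃ γ ∈ Γ, x = w + γ} ∩
      ({p : Fin d → ℤ | (fun i => (p i : ℝ)) ∈ C} \ D) = L)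
    -- the misère quotient Q/∼ is finite: there is a finite set of positions
    -- containing a representative of every indistinguishability class:
    (hfin : ∃ T : Finset (Fin d → ℤ),
      (∀ q ∈ T, (fun i => (q i : ℝ)) ∈ C) ∧
      ∀ p : Fin d → ℤ, (fun i => (p i : ℝ)) ∈ C →
        ∃ q ∈ T, ∀ r : Fin d → ℤ, (fun i => (r i : ℝ)) ∈ C →
          (p + r ∈ W ↔ q + r ∈ W)) :
    ∃ (K : ℕ) (a : Fin K → Fin d → ℤ) (Q' : Fin K → AddSubmonoid (Fin d → ℤ)),
      (∀ i, (Q' i).FG) ∧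
      W = ⋃ i, {y : Fin d → ℤ | ∃ q ∈ Q' i, y = a i + q} := by
  obtain ⟨F, hF⟩ := exists_finset_closure_eq d C hCgen
  obtain ⟨T, -, hT⟩ := hfin
  refine exists_affine_stratification F W (fun w hw => ?_) T fun p hp => ?_
  · have h : w ∈ W ∪ L := Or.inl hw
    rw [hWL] at h
    exact (hF w).1 h.1
  · obtain ⟨q, hq, h⟩ := hT p ((hF p).2 hp)
    exact ⟨q, hq, fun r hr => h r ((hF r).2 hr)⟩
end
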